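/- Let α ∈ ℝ with α ≠ 0, let φ₄ be a homogeneous polynomial of degree 4 in (x,y), and let f : ℝ² → ℝ be a smooth function whose 5-jet at the origin is j⁵f(0) = y² + x²y + (1/4)x⁴ + αx⁵ + y·φ₄(x,y) (the class Π^p_{c,2}, where the Monge form has an A₄-singularity at the origin). Then the asymptotic BDE of f is topologically equivalent at 0 to the well-folded saddle-node BDE dy² + (−y + x³)dx² = 0, i.e. the BDE with coefficients (a,b,c) = (1, 0, −y + x³). -/

import Mathlib

open Asymptotics Filter Set

noncomputable section

/-- Partial derivative in the first variable (∂/∂x). -/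
def pdx (f : ℝ × ℝ → ℝ) (p : ℝ × ℝ) : ℝ := deriv (fun s => f (s, p.2)) p.1

/-- Partial derivative in the second variable (∂/∂y). -/
def pdy (f : ℝ × ℝ → ℝ) (p : ℝ × ℝ) : ℝ := deriv (fun s => f (p.1, s)) p.2

/-- f_xx -/
def fxx (f : ℝ × ℝ → ℝ) : ℝ × ℝ → ℝ := pdx (pdx f)
/-- f_xy -/
def fxy (f : ℝ × ℝ → ℝ) : ℝ × ℝ → ℝ := pdy (pdx f)
/-- f_yy -/
def fyy (f : ℝ × ℝ → ℝ) : ℝ × ℝ → ℝ := pdy (pdy f)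

/-- The discriminant δ = f_xy² − f_xx·f_yy of the asymptotic BDE of `f`. -/
def bdeDiscr (f : ℝ × ℝ → ℝ) : ℝ × ℝ → ℝ := fun p => (fxy f p) ^ 2 - fxx f p * fyy f p

/-- The BDE `a dy² + 2b dxdy + c dx² = 0`, regarded as the family of quadratic
forms `ω_p(v) = a(p)v₂² + 2b(p)v₁v₂ + c(p)v₁²`. -/
def BDE (a b c : ℝ × ℝ → ℝ) : (ℝ × ℝ) → (ℝ × ℝ) → ℝ :=
  fun p v => a p * v.2 ^ 2 + 2 * b p * v.1 * v.2 + c p * v.1 ^ 2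

/-- The asymptotic BDE `f_yy dy² + 2 f_xy dxdy + f_xx dx² = 0` of the surface `z = f(x,y)`. -/
def asymBDE (f : ℝ × ℝ → ℝ) : (ℝ × ℝ) → (ℝ × ℝ) → ℝ := BDE (fyy f) (fxy f) (fxx f)

/-- `j^k f(0) = P` : the degree-k Taylor polynomial of `f` at the origin is `P`,
i.e. `f − P = o(‖(x,y)‖^k)` as `(x,y) → 0`. -/
def HasJetAt0 (f P : ℝ × ℝ → ℝ) (k : ℕ) : Prop :=
  (fun p => f p - P p) =o[nhds (0 : ℝ × ℝ)] fun p => ‖p‖ ^ k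

/-- `γ` is an integral curve of the BDE `ω` on the open interval `I`:
`γ` is C¹ on `I` with nowhere-vanishing derivative annihilating `ω`. -/
def IsIntegralCurveOnBDE (ω : (ℝ × ℝ) → (ℝ × ℝ) → ℝ) (γ : ℝ → ℝ × ℝ) (I : Set ℝ) : Prop :=
  (∃ a b : ℝ, I = Set.Ioo a b) ∧
  ∃ dγ : ℝ → ℝ × ℝ, ContinuousOn dγ I ∧
    ∀ t ∈ I, HasDerivAt γ (dγ t) t ∧ dγ t ≠ 0 ∧ ω (γ t) (dγ t) = 0

/-- Topological equivalence of two BDEs at the origin: a local homeomorphism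
fixing `0` sending integral curves of one to integral curves of the other. -/
def TopEquivAt0 (ω Ω : (ℝ × ℝ) → (ℝ × ℝ) → ℝ) : Prop :=
  ∃ (U V : Set (ℝ × ℝ)) (h hinv : ℝ × ℝ → ℝ × ℝ),
    IsOpen U ∧ IsOpen V ∧ (0 : ℝ × ℝ) ∈ U ∧ (0 : ℝ × ℝ) ∈ V ∧ h 0 = 0 ∧
    ContinuousOn h U ∧ ContinuousOn hinv V ∧
    Set.BijOn h U V ∧ Set.InvOn hinv h U V ∧
    (∀ γ I, IsIntegralCurveOnBDE ω γ I → Set.MapsTo γ I U →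
      ∃ σ J, IsIntegralCurveOnBDE Ω σ J ∧ h '' (γ '' I) = σ '' J) ∧
    (∀ σ J, IsIntegralCurveOnBDE Ω σ J → Set.MapsTo σ J V →
      ∃ γ I, IsIntegralCurveOnBDE ω γ I ∧ hinv '' (σ '' J) = γ '' I)

/-- Smooth equivalence of two BDEs at the origin: a local C^∞ diffeomorphism `h`
fixing `0` pulling one family of quadratic forms back to a nonvanishing multiple
of the other. -/
def SmoothEquivAt0 (ω Ω : (ℝ × ℝ) → (ℝ × ℝ) → ℝ) : Prop :=
  ∃ (U V : Set (ℝ × ℝ)) (h hinv : ℝ × ℝ → ℝ × ℝ) (ρ : ℝ × ℝ → ℝ),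
    IsOpen U ∧ IsOpen V ∧ (0 : ℝ × ℝ) ∈ U ∧ (0 : ℝ × ℝ) ∈ V ∧ h 0 = 0 ∧
    ContDiffOn ℝ (⊤ : ℕ∞) h U ∧ ContDiffOn ℝ (⊤ : ℕ∞) hinv V ∧
    Set.BijOn h U V ∧ Set.InvOn hinv h U V ∧
    ContDiffOn ℝ (⊤ : ℕ∞) ρ U ∧ (∀ p ∈ U, ρ p ≠ 0) ∧
    (∀ p ∈ U, ∀ v : ℝ × ℝ, Ω (h p) (fderiv ℝ h p v) = ρ p * ω p v)

/-- Fiber topological equivalence at `0` of two 2-parameter families of BDEs: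
a homeomorphism `φ` of parameter spaces (onto its image), fixing `0`, such that
corresponding members of the families are topologically equivalent at `0`. -/
def FiberTopEquivAt0 (ω Ω : (ℝ × ℝ) → (ℝ × ℝ) → (ℝ × ℝ) → ℝ) : Prop :=
  ∃ (W : Set (ℝ × ℝ)) (φ ψ : ℝ × ℝ → ℝ × ℝ),
    W ∈ nhds (0 : ℝ × ℝ) ∧ φ 0 = 0 ∧
    ContinuousOn φ W ∧ ContinuousOn ψ (φ '' W) ∧
    Set.InvOn ψ φ W (φ '' W) ∧
    ∀ q ∈ W, TopEquivAt0 (ω q) (Ω (φ q))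

/-- admissible function of (t,q), bi-Lipschitz increasing in q on q ≥ 0 -/
structure GF (G : ℝ → ℝ → ℝ) (b0 b1 : ℝ) : Prop where
  cont : Continuous (fun p : ℝ × ℝ => G p.1 p.2)
  zero : ∀ x, G x 0 = 0
  lo : ∀ x q q', 0 ≤ q → q ≤ q' → b0 * (q' - q) ≤ G x q' - G x q
  hi : ∀ x q q', 0 ≤ q → q ≤ q' → G x q' - G x q ≤ b1 * (q' - q)
  b0pos : 0 < b0
  b1pos : 0 < b1

namespace GF
variable {G : ℝ → ℝ → ℝ} {b0 b1 : ℝ}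

lemma mono (h : GF G b0 b1) (x : ℝ) {q q' : ℝ} (hq : 0 ≤ q) (hqq : q ≤ q') : G x q ≤ G x q' := by
  have := h.lo x q q' hq hqq
  nlinarith [h.b0pos, mul_nonneg h.b0pos.le (sub_nonneg.2 hqq)]

lemma nonneg (h : GF G b0 b1) (x : ℝ) {q : ℝ} (hq : 0 ≤ q) : 0 ≤ G x q := by
  have := h.mono x le_rfl hq
  rwa [h.zero] at this

lemma ge (h : GF G b0 b1) (x : ℝ) {q : ℝ} (hq : 0 ≤ q) : b0 * q ≤ G x q := by
  have := h.lo x 0 q le_rfl hq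
  rw [h.zero] at this; linarith

lemma le (h : GF G b0 b1) (x : ℝ) {q : ℝ} (hq : 0 ≤ q) : G x q ≤ b1 * q := by
  have := h.hi x 0 q le_rfl hq
  rw [h.zero] at this; linarith

lemma pos (h : GF G b0 b1) (x : ℝ) {q : ℝ} (hq : 0 < q) : 0 < G x q :=
  lt_of_lt_of_le (mul_pos h.b0pos hq) (h.ge x hq.le)

lemma abs_sub_le (h : GF G b0 b1) (x : ℝ) {q q' : ℝ} (hq : 0 ≤ q) (hq' : 0 ≤ q') :
    |G x q - G x q'| ≤ b1 * |q - q'| := by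
  rcases le_total q q' with h1 | h1
  · rw [abs_sub_comm, abs_sub_comm q, abs_of_nonneg (sub_nonneg.2 (h.mono x hq h1)),
      abs_of_nonneg (sub_nonneg.2 h1)]
    exact h.hi x q q' hq h1
  · rw [abs_of_nonneg (sub_nonneg.2 (h.mono x hq' h1)), abs_of_nonneg (sub_nonneg.2 h1)]
    exact h.hi x q' q hq' h1

lemma rev (h : GF G b0 b1) : GF (fun x q => G (-x) q) b0 b1 where
  cont := h.cont.comp (by fun_prop : Continuous (fun p : ℝ × ℝ => (-p.1, p.2)))
  zero := fun x => h.zero _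
  lo := fun x => h.lo _
  hi := fun x => h.hi _
  b0pos := h.b0pos
  b1pos := h.b1pos
end GF

/-- regularised square root -/
def rsq (e w : ℝ) : ℝ := √(max w 0 + e ^ 2)

lemma rsq_nonneg (e w : ℝ) : 0 ≤ rsq e w := Real.sqrt_nonneg _

lemma rsq_zero (w : ℝ) : rsq 0 w = √w := by
  unfold rsq
  rcases le_total w 0 with h | h
  · rw [max_eq_right h, Real.sqrt_eq_zero_of_nonpos h]; simp
  · rw [max_eq_left h]; simp

lemma rsq_ge (e : ℝ) {w : ℝ} : √w ≤ rsq e w := by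
  apply Real.sqrt_le_sqrt
  have := le_max_left w 0
  nlinarith [sq_nonneg e]

lemma rsq_le {e : ℝ} (he : 0 ≤ e) (w : ℝ) : rsq e w ≤ √w + e := by
  unfold rsq
  have h0 : max w 0 = (√w) ^ 2 := by
    rcases le_total w 0 with h | h
    · rw [max_eq_right h, Real.sqrt_eq_zero_of_nonpos h]; simp
    · rw [max_eq_left h, Real.sq_sqrt h]
  rw [h0]
  apply Real.sqrt_le_iff.2
  constructor
  · positivity
  · nlinarith [mul_nonneg (Real.sqrt_nonneg w) he]

lemma rsq_mono (e : ℝ) {w w' : ℝ} (h : w ≤ w') : rsq e w ≤ rsq e w' := by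
  apply Real.sqrt_le_sqrt
  have := max_le_max_right 0 h
  linarith

lemma rsq_lip {e : ℝ} (he : 0 < e) (w w' : ℝ) : |rsq e w - rsq e w'| ≤ (1 / (2 * e)) * |w - w'| := by
  have h1 : e ≤ rsq e w := Real.le_sqrt_of_sq_le (by nlinarith [le_max_right w 0])
  have h2 : e ≤ rsq e w' := Real.le_sqrt_of_sq_le (by nlinarith [le_max_right w' 0])
  have s1 : rsq e w ^ 2 = max w 0 + e ^ 2 :=
    Real.sq_sqrt (by nlinarith [le_max_right w 0, sq_nonneg e])
  have s2 : rsq e w' ^ 2 = max w' 0 + e ^ 2 :=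
    Real.sq_sqrt (by nlinarith [le_max_right w' 0, sq_nonneg e])
  have h3 : (rsq e w - rsq e w') * (rsq e w + rsq e w') = max w 0 - max w' 0 := by
    linear_combination s1 - s2
  have h4 : |max w 0 - max w' 0| ≤ |w - w'| := abs_max_sub_max_le_abs w w' 0
  rw [← h3, abs_mul, abs_of_pos (by linarith : 0 < rsq e w + rsq e w')] at h4
  rw [div_mul_eq_mul_div, one_mul, le_div_iff₀ (by positivity)]
  nlinarith [abs_nonneg (rsq e w - rsq e w')]

/-- solution of w' = - G t √w + M t (regularised by e) on [a,b] -/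
def SolOn (G : ℝ → ℝ → ℝ) (M : ℝ → ℝ) (e : ℝ) (w : ℝ → ℝ) (a b : ℝ) : Prop :=
  ContinuousOn w (Icc a b) ∧ ∀ t ∈ Ioo a b, HasDerivAt w (- G t (rsq e (w t)) + M t) t

lemma SolOn.sub {G M e w a b} (h : SolOn G M e w a b) {a' b' : ℝ} (ha : a ≤ a') (hb : b' ≤ b) :
    SolOn G M e w a' b' :=
  ⟨h.1.mono (Icc_subset_Icc ha hb), fun t ht => h.2 t ⟨ha.trans_lt ht.1, ht.2.trans_le hb⟩⟩

lemma SolOn.cmp {G M b0 b1 e1 e2 w1 w2 a b} (hG : GF G b0 b1) (he1 : 0 ≤ e1) (he2 : 0 ≤ e2)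
    (h1 : SolOn G M e1 w1 a b) (h2 : SolOn G M e2 w2 a b) (hab : a ≤ b) (h0 : w1 a = w2 a) :
    (w1 b - w2 b) ^ 2 ≤ (b1 * (e1 + e2)) ^ 2 * Real.exp (b - a) := by
  set η := b1 * (e1 + e2) with hη
  have hη0 : 0 ≤ η := mul_nonneg hG.b1pos.le (by positivity)
  have key : AntitoneOn (fun t => ((w1 t - w2 t) ^ 2 + η ^ 2) * Real.exp (-t)) (Icc a b) := by
    apply antitoneOn_of_deriv_nonpos (convex_Icc a b)
    · exact ((((h1.1.sub h2.1).pow 2).add continuousOn_const).mul (by fun_prop))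
    · intro t ht
      rw [interior_Icc] at ht
      exact ((((((h1.2 t ht).sub (h2.2 t ht)).pow 2).add_const _).mul
        (hasDerivAt_neg t).exp)).differentiableAt.differentiableWithinAt
    · intro t ht
      rw [interior_Icc] at ht
      have hd := ((((((h1.2 t ht).sub (h2.2 t ht)).pow 2).add_const (η^2)).mul
        (hasDerivAt_neg t).exp))
      erw [hd.deriv]
      simp only [Pi.sub_apply, Pi.pow_apply]
      set d := w1 t - w2 t with hdd
      set g := G t (rsq e1 (w1 t)) - G t (rsq e2 (w2 t)) with hg
      have hdg : - (d * g) ≤ |d| * η := by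
        rcases le_total 0 d with hd0 | hd0
        · have : -g ≤ η := by
            have hle : rsq e2 (w2 t) ≤ rsq e1 (w1 t) + e2 := by
              have := rsq_le he2 (w2 t)
              have h3 : √(w2 t) ≤ √(w1 t) := Real.sqrt_le_sqrt (by linarith)
              have := rsq_ge e1 (w := w1 t)
              linarith
            rcases le_total (rsq e2 (w2 t)) (rsq e1 (w1 t)) with h5 | h5
            · have := hG.mono t (rsq_nonneg _ _) h5
              linarith
            · have := hG.hi t _ _ (rsq_nonneg _ _) h5
              have : b1 * (rsq e2 (w2 t) - rsq e1 (w1 t)) ≤ b1 * (e1 + e2) :=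
                mul_le_mul_of_nonneg_left (by linarith) hG.b1pos.le
              linarith
          rw [abs_of_nonneg hd0]; nlinarith
        · have : g ≤ η := by
            have hle : rsq e1 (w1 t) ≤ rsq e2 (w2 t) + e1 := by
              have := rsq_le he1 (w1 t)
              have h3 : √(w1 t) ≤ √(w2 t) := Real.sqrt_le_sqrt (by linarith)
              have := rsq_ge e2 (w := w2 t)
              linarith
            rcases le_total (rsq e1 (w1 t)) (rsq e2 (w2 t)) with h5 | h5
            · have := hG.mono t (rsq_nonneg _ _) h5
              linarith
            · have := hG.hi t _ _ (rsq_nonneg _ _) h5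
              have : b1 * (rsq e1 (w1 t) - rsq e2 (w2 t)) ≤ b1 * (e1 + e2) :=
                mul_le_mul_of_nonneg_left (by linarith) hG.b1pos.le
              linarith
          rw [abs_of_nonpos hd0]; nlinarith
      have h6 : 2 * (|d| * η) ≤ d ^ 2 + η ^ 2 := by
        have := sq_nonneg (|d| - η); have := sq_abs d; nlinarith
      have hex := Real.exp_pos (-t)
      have : (- G t (rsq e1 (w1 t)) + M t - (- G t (rsq e2 (w2 t)) + M t)) = -g := by
        rw [hg]; ring
      rw [this]
      have h7 : 2 * d * (-g) - (d ^ 2 + η ^ 2) ≤ 0 := by linarith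
      have := mul_nonpos_of_nonpos_of_nonneg h7 hex.le
      simp only [Nat.cast_ofNat, Nat.add_one_sub_one, pow_one]
      nlinarith
  have := key (left_mem_Icc.2 hab) (right_mem_Icc.2 hab) hab
  simp only [h0, sub_self] at this
  have hexp : Real.exp (b - a) = Real.exp (-a) / Real.exp (-b) := by
    rw [← Real.exp_sub]; ring_nf
  rw [hexp, mul_div_assoc', le_div_iff₀ (Real.exp_pos _)]
  have := Real.exp_pos (-b)
  nlinarith [mul_nonneg (sq_nonneg η) this.le]

lemma SolOn.nonexp {G M b0 b1 w1 w2 a b} (hG : GF G b0 b1)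
    (h1 : SolOn G M 0 w1 a b) (h2 : SolOn G M 0 w2 a b) (hab : a ≤ b) :
    |w1 b - w2 b| ≤ |w1 a - w2 a| := by
  have key : AntitoneOn (fun t => ((w1 t - w2 t) ^ 2)) (Icc a b) := by
    apply antitoneOn_of_deriv_nonpos (convex_Icc a b)
    · exact (((h1.1.sub h2.1).pow 2))
    · intro t ht
      rw [interior_Icc] at ht
      exact (((h1.2 t ht).sub (h2.2 t ht)).pow 2).differentiableAt.differentiableWithinAt
    · intro t ht
      rw [interior_Icc] at ht
      have hd := (((h1.2 t ht).sub (h2.2 t ht)).pow 2)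
      erw [hd.deriv]
      simp only [Pi.sub_apply, Nat.cast_ofNat, Nat.add_one_sub_one, pow_one]
      rcases le_total (w1 t) (w2 t) with h | h
      · have := hG.mono t (rsq_nonneg 0 _) (rsq_mono 0 h)
        nlinarith
      · have := hG.mono t (rsq_nonneg 0 _) (rsq_mono 0 h)
        nlinarith
  have := key (left_mem_Icc.2 hab) (right_mem_Icc.2 hab) hab
  exact sq_le_sq.1 this

lemma SolOn.mono {G M b0 b1 w1 w2 a b} (hG : GF G b0 b1)
    (h1 : SolOn G M 0 w1 a b) (h2 : SolOn G M 0 w2 a b) (hab : a ≤ b) (h : w1 a ≤ w2 a) :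
    w1 b ≤ w2 b := by
  by_contra hcon
  push Not at hcon
  have : (0:ℝ) ∈ (fun t => w1 t - w2 t) '' Icc a b :=
    intermediate_value_Icc hab (h1.1.sub h2.1) ⟨by simpa using h, by simpa using hcon.le⟩
  obtain ⟨t, ht, ht0⟩ := this
  have := (h1.sub ht.1 le_rfl).nonexp hG (h2.sub ht.1 le_rfl) ht.2
  simp only at ht0
  rw [ht0, abs_zero] at this
  have := abs_nonpos_iff.1 this
  linarith

lemma exists_reg {G M b0 b1} (hG : GF G b0 b1) (hM : Continuous M) {e : ℝ} (he : 0 < e)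
    {a b : ℝ} (hab : a ≤ b) (w0 : ℝ) : ∃ w, w a = w0 ∧ SolOn G M e w a b := by
  obtain ⟨M0, hM0⟩ := (isCompact_Icc (a := a) (b := b)).exists_bound_of_continuousOn hM.continuousOn
  have hM00 : 0 ≤ M0 := (norm_nonneg _).trans (hM0 a (left_mem_Icc.2 hab))
  set T := b - a with hT
  have hT0 : 0 ≤ T := sub_nonneg.2 hab
  set R := 2 * T * M0 + |w0| + e ^ 2 + (T * b1) ^ 2 with hR
  have hR0 : 0 ≤ R := by positivity
  set L := b1 * √(|w0| + e ^ 2 + R) + M0 with hL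
  have hL0 : 0 ≤ L := add_nonneg (mul_nonneg hG.b1pos.le (Real.sqrt_nonneg _)) hM00
  have hb1 := hG.b1pos
  have hK0 : 0 ≤ b1 * (1 / (2 * e)) := by positivity
  have hpl : IsPicardLindelof (fun t w => - G t (rsq e w) + M t)
      (⟨a, left_mem_Icc.2 hab⟩ : Icc a b) w0 ⟨R, hR0⟩ 0 ⟨L, hL0⟩ ⟨b1 * (1 / (2 * e)), hK0⟩ := by
    constructor
    · intro t ht
      apply LipschitzWith.lipschitzOnWith
      apply LipschitzWith.of_dist_le_mul
      intro x y
      rw [Real.dist_eq, Real.dist_eq]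
      have h1 := hG.abs_sub_le t (rsq_nonneg e y) (rsq_nonneg e x)
      have h2 := rsq_lip he y x
      have : (-G t (rsq e x) + M t - (-G t (rsq e y) + M t)) = G t (rsq e y) - G t (rsq e x) := by
        ring
      rw [this]
      change _ ≤ b1 * (1 / (2 * e)) * |x - y|
      rw [abs_sub_comm x y, mul_assoc]
      exact h1.trans (mul_le_mul_of_nonneg_left h2 hb1.le)
    · intro x hx
      have : Continuous fun t => -G t (rsq e x) + M t :=
        ((hG.cont.comp (by fun_prop : Continuous fun t : ℝ => (t, rsq e x))).neg).add hM
      exact this.continuousOn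
    · intro t ht x hx
      have hx' : |x - w0| ≤ R := by
        have := Metric.mem_closedBall.1 hx; rw [Real.dist_eq] at this; exact this
      change ‖_‖ ≤ L
      have h1 : ‖G t (rsq e x)‖ ≤ b1 * √(|w0| + e ^ 2 + R) := by
        rw [Real.norm_of_nonneg (hG.nonneg t (rsq_nonneg _ _))]
        refine (hG.le t (rsq_nonneg _ _)).trans (mul_le_mul_of_nonneg_left ?_ hb1.le)
        apply Real.sqrt_le_sqrt
        have : max x 0 ≤ |w0| + R := by
          apply max_le _ (by positivity)
          have := le_abs_self (x - w0); have := le_abs_self w0; linarith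
        linarith
      calc ‖-G t (rsq e x) + M t‖ ≤ ‖-G t (rsq e x)‖ + ‖M t‖ := norm_add_le _ _
        _ ≤ _ := by rw [norm_neg]; exact add_le_add h1 (hM0 t ht)
    · change L * max (b - a) (a - a) ≤ R - 0
      rw [sub_self, max_eq_left hT0, sub_zero]
      have hs := Real.sq_sqrt (by positivity : 0 ≤ |w0| + e ^ 2 + R)
      set y := √(|w0| + e ^ 2 + R)
      have := sq_nonneg (T * b1 - y)
      rw [hL]
      nlinarith
  obtain ⟨α, h1, h2⟩ := hpl.exists_eq_forall_mem_Icc_hasDerivWithinAt₀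
  refine ⟨α, h1, fun t ht => (h2 t ht).continuousWithinAt, fun t ht => ?_⟩
  exact (h2 t (Ioo_subset_Icc_self ht)).hasDerivAt (Icc_mem_nhds ht.1 ht.2)

lemma abs_sqrt_sub_le (x y : ℝ) : |√x - √y| ≤ √|x - y| := by
  have key : ∀ x y : ℝ, y ≤ x → √x - √y ≤ √|x - y| := by
    intro x y h
    rw [abs_of_nonneg (sub_nonneg.2 h)]
    rcases le_total y 0 with hy | hy
    · rw [Real.sqrt_eq_zero_of_nonpos hy, sub_zero]
      exact Real.sqrt_le_sqrt (by linarith)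
    · have h2 : √x ≤ √(x - y) + √y := by
        apply Real.sqrt_le_iff.2
        refine ⟨by positivity, ?_⟩
        have := Real.sq_sqrt hy; have := Real.sq_sqrt (sub_nonneg.2 h)
        nlinarith [mul_nonneg (Real.sqrt_nonneg y) (Real.sqrt_nonneg (x - y))]
      linarith
  rcases le_total x y with h | h
  · rw [abs_sub_comm, abs_sub_comm x y, abs_of_nonneg (sub_nonneg.2 (Real.sqrt_le_sqrt h))]
    exact key y x h
  · rw [abs_of_nonneg (sub_nonneg.2 (Real.sqrt_le_sqrt h))]
    exact key x y h

lemma exists_sol {G M b0 b1} (hG : GF G b0 b1) (hM : Continuous M)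
    {a b : ℝ} (hab : a ≤ b) (w0 : ℝ) : ∃ w, w a = w0 ∧ SolOn G M 0 w a b := by
  let e : ℕ → ℝ := fun n => 1 / ((n : ℝ) + 1)
  have he : ∀ n, 0 < e n := fun n => by positivity
  have helim : Tendsto e atTop (nhds 0) := tendsto_one_div_add_atTop_nhds_zero_nat
  choose W hW0 hW using fun n => exists_reg hG hM (he n) hab w0
  set C := b1 * √(Real.exp (b - a)) with hC
  have hb1 := hG.b1pos
  have hC0 : 0 ≤ C := by positivity
  have hdist : ∀ n m, ∀ t ∈ Icc a b, |W n t - W m t| ≤ C * (e n + e m) := by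
    intro n m t ht
    have h1 := ((hW n).sub le_rfl ht.2).cmp hG (he n).le (he m).le ((hW m).sub le_rfl ht.2) ht.1
      (by rw [hW0, hW0])
    have h2 : (b1 * (e n + e m)) ^ 2 * Real.exp (t - a) ≤ (C * (e n + e m)) ^ 2 := by
      rw [hC, mul_pow, mul_pow, mul_pow, Real.sq_sqrt (Real.exp_pos _).le]
      have : Real.exp (t - a) ≤ Real.exp (b - a) := Real.exp_le_exp.2 (by linarith [ht.2])
      have h3 : 0 ≤ b1 ^ 2 * (e n + e m) ^ 2 := by positivity
      nlinarith
    exact abs_le_of_sq_le_sq (h1.trans h2) (mul_nonneg hC0 (by linarith [he n, he m]))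
  have hlim : ∀ t ∈ Icc a b, ∃ l, Tendsto (fun n => W n t) atTop (nhds l) := by
    intro t ht
    apply cauchySeq_tendsto_of_complete
    apply cauchySeq_of_le_tendsto_0 (fun N => C * (2 * e N))
    · intro n m N hn hm
      rw [Real.dist_eq]
      refine (hdist n m t ht).trans (mul_le_mul_of_nonneg_left ?_ hC0)
      have : ∀ k, N ≤ k → e k ≤ e N := fun k hk => Nat.one_div_le_one_div hk
      linarith [this n hn, this m hm]
    · have := (helim.const_mul 2).const_mul C
      simpa using this
  let w : ℝ → ℝ := fun t => if h : t ∈ Icc a b then (hlim t h).choose else 0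
  have hw : ∀ t ∈ Icc a b, Tendsto (fun n => W n t) atTop (nhds (w t)) := by
    intro t ht
    simp only [w, dif_pos ht]
    exact (hlim t ht).choose_spec
  have hbd : ∀ n, ∀ t ∈ Icc a b, |W n t - w t| ≤ C * e n := by
    intro n t ht
    have h1 : Tendsto (fun m => |W n t - W m t|) atTop (nhds |W n t - w t|) :=
      ((tendsto_const_nhds.sub (hw t ht))).abs
    have h2 : Tendsto (fun m => C * (e n + e m)) atTop (nhds (C * (e n + 0))) :=
      (tendsto_const_nhds.add helim).const_mul C
    rw [add_zero] at h2
    exact le_of_tendsto_of_tendsto' h1 h2 (fun m => hdist n m t ht)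
  have hunif : TendstoUniformlyOn W w atTop (Icc a b) := by
    rw [Metric.tendstoUniformlyOn_iff]
    intro ε hε
    have : Tendsto (fun n => C * e n) atTop (nhds 0) := by simpa using helim.const_mul C
    filter_upwards [this.eventually (gt_mem_nhds hε)] with n hn t ht
    rw [dist_comm, Real.dist_eq]
    exact (hbd n t ht).trans_lt hn
  have hcont : ContinuousOn w (Icc a b) :=
    hunif.continuousOn (Frequently.of_forall fun n => (hW n).1)
  refine ⟨w, ?_, hcont, ?_⟩
  · have := hw a (left_mem_Icc.2 hab)
    simp only [hW0] at this
    exact tendsto_nhds_unique this tendsto_const_nhds |>.symm ▸ rfl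
  · intro t ht
    refine hasDerivAt_of_tendstoUniformlyOn (f := W) (l := atTop) (s := Ioo a b)
      (f' := fun n t => - G t (rsq (e n) (W n t)) + M t)
      (g' := fun t => - G t (rsq 0 (w t)) + M t) isOpen_Ioo ?_
      (Eventually.of_forall fun n x hx => (hW n).2 x hx)
      (fun x hx => hw x (Ioo_subset_Icc_self hx)) ht
    rw [Metric.tendstoUniformlyOn_iff]
    intro ε hε
    have h1 : Tendsto (fun n => b1 * (√(C * e n) + e n)) atTop (nhds 0) := by
      have h2 : Tendsto (fun n => C * e n) atTop (nhds 0) := by simpa using helim.const_mul C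
      have h3 := (Real.continuous_sqrt.tendsto 0).comp h2
      rw [Real.sqrt_zero] at h3
      simpa using ((h3.add helim).const_mul b1)
    filter_upwards [h1.eventually (gt_mem_nhds hε)] with n hn x hx
    rw [Real.dist_eq]
    refine lt_of_le_of_lt ?_ hn
    have h4 : (-G x (rsq 0 (w x)) + M x - (-G x (rsq (e n) (W n x)) + M x))
      = G x (rsq (e n) (W n x)) - G x (rsq 0 (w x)) := by ring
    rw [h4]
    refine (hG.abs_sub_le x (rsq_nonneg _ _) (rsq_nonneg _ _)).trans
      (mul_le_mul_of_nonneg_left ?_ hb1.le)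
    rw [rsq_zero]
    have h5 := rsq_ge (e n) (w := W n x)
    have h6 := rsq_le (he n).le (W n x)
    have h7 := abs_sqrt_sub_le (W n x) (w x)
    have h8 : √|W n x - w x| ≤ √(C * e n) := Real.sqrt_le_sqrt (hbd n x (Ioo_subset_Icc_self hx))
    have h9 := abs_le.1 h7
    have := he n
    rw [abs_le]
    constructor <;> linarith

/-- global forward solutions -/
lemma exists_sol_global {G M b0 b1} (hG : GF G b0 b1) (hM : Continuous M)
    (a w0 : ℝ) : ∃ w : ℝ → ℝ, w a = w0 ∧ ∀ b, a ≤ b → SolOn G M 0 w a b := by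
  have hn : ∀ n : ℕ, a ≤ a + n := fun n => by have : (0:ℝ) ≤ n := n.cast_nonneg; linarith
  choose W hW0 hW using fun n : ℕ => exists_sol hG hM (hn n) w0
  have hagree : ∀ n m : ℕ, ∀ t, a ≤ t → t ≤ a + n → t ≤ a + m → W n t = W m t := by
    intro n m t h1 h2 h3
    have := ((hW n).sub le_rfl h2).nonexp hG ((hW m).sub le_rfl h3) h1
    rw [hW0, hW0, sub_self, abs_zero] at this
    exact sub_eq_zero.1 (abs_nonpos_iff.1 this)
  have hceil : ∀ t, t ≤ a + (⌈t - a⌉₊ : ℕ) := fun t => by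
    have := Nat.le_ceil (t - a); linarith
  let w : ℝ → ℝ := fun t => W ⌈t - a⌉₊ t
  have hw : ∀ n : ℕ, ∀ t, a ≤ t → t ≤ a + n → w t = W n t := fun n t h1 h2 =>
    hagree _ n t h1 (hceil t) h2
  refine ⟨w, ?_, fun b hb => ?_⟩
  · rw [hw 0 a le_rfl (by simp), hW0]
  · have hEq : EqOn w (W ⌈b - a⌉₊) (Icc a b) := fun t ht => hw _ t ht.1 (ht.2.trans (hceil b))
    have h1 := (hW ⌈b - a⌉₊).sub le_rfl (hceil b)
    refine ⟨h1.1.congr hEq, fun t ht => ?_⟩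
    have h2 := h1.2 t ht
    rw [hEq (Ioo_subset_Icc_self ht)]
    apply h2.congr_of_eventuallyEq
    filter_upwards [Ioo_mem_nhds ht.1 ht.2] with y hy using hEq (Ioo_subset_Icc_self hy)

/-- normal form of the lifted dynamics -/
structure Sys where
  K : ℝ → ℝ
  κ : ℝ → ℝ
  Gp : ℝ → ℝ → ℝ
  Gm : ℝ → ℝ → ℝ
  b0 : ℝ
  b1 : ℝ
  L : ℝ
  k1 : ℝ
  r0 : ℝ
  Kc : Continuous K
  K0 : K 0 = 0
  Kpos : ∀ x, x ≠ 0 → 0 < K x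
  dκ : ∀ x, HasDerivAt κ (K x) x
  r0pos : 0 < r0
  Kle : ∀ x ∈ Icc 0 r0, K x ≤ k1 * x ^ 2
  Kgrow : ∀ C : ℝ, ∃ R0 > 0, ∀ x ≥ R0, C * x ≤ K x
  hp : GF Gp b0 b1
  hm : GF Gm b0 b1
  h3 : ∀ x q1 q2, 0 ≤ q2 → q2 ≤ q1 → q2 * Gm x q1 - q1 * Gm x q2 ≤ L * q1 * q2 * (q1 - q2)

namespace Sys
variable (Y : Sys)

lemma Knonneg (x : ℝ) : 0 ≤ Y.K x := by
  rcases eq_or_ne x 0 with h | h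
  · rw [h, Y.K0]
  · exact (Y.Kpos x h).le

lemma κc : Continuous Y.κ := continuous_iff_continuousAt.2 fun x => (Y.dκ x).continuousAt

lemma κmono : StrictMono Y.κ := by
  have h1 : ∀ s : Set ℝ, Convex ℝ s → (∀ x ∈ interior s, x ≠ 0) → StrictMonoOn Y.κ s := by
    intro s hs h0
    apply strictMonoOn_of_deriv_pos hs Y.κc.continuousOn
    intro x hx
    rw [(Y.dκ x).deriv]
    exact Y.Kpos x (h0 x hx)
  have hl := h1 (Iic 0) (convex_Iic 0) (fun x hx => by
    rw [interior_Iic] at hx; exact (mem_Iio.1 hx).ne)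
  have hr := h1 (Ici 0) (convex_Ici 0) (fun x hx => by
    rw [interior_Ici] at hx; exact (mem_Ioi.1 hx).ne')
  exact StrictMonoOn.Iic_union_Ici hl hr

/-- upper solution -/
def Up (w : ℝ → ℝ) (a b : ℝ) : Prop :=
  ContinuousOn w (Icc a b) ∧ ∀ x ∈ Ioo a b, HasDerivAt w (Y.Gp x √(w x) - Y.K x) x

/-- lower solution -/
def Lo (w : ℝ → ℝ) (a b : ℝ) : Prop :=
  ContinuousOn w (Icc a b) ∧ ∀ x ∈ Ioo a b, HasDerivAt w (- Y.Gm x √(w x) - Y.K x) x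

variable {Y}

lemma Lo.sol {w a b} (h : Y.Lo w a b) : SolOn Y.Gm (fun x => - Y.K x) 0 w a b := by
  refine ⟨h.1, fun t ht => ?_⟩
  rw [rsq_zero]; exact h.2 t ht

lemma Lo.of_sol {w a b} (h : SolOn Y.Gm (fun x => - Y.K x) 0 w a b) : Y.Lo w a b := by
  refine ⟨h.1, fun t ht => ?_⟩
  have := h.2 t ht
  rw [rsq_zero] at this; exact this

lemma Lo.sub {w a b} (h : Y.Lo w a b) {a' b' : ℝ} (ha : a ≤ a') (hb : b' ≤ b) : Y.Lo w a' b' :=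
  ⟨h.1.mono (Icc_subset_Icc ha hb), fun t ht => h.2 t ⟨ha.trans_lt ht.1, ht.2.trans_le hb⟩⟩

lemma Up.sub {w a b} (h : Y.Up w a b) {a' b' : ℝ} (ha : a ≤ a') (hb : b' ≤ b) : Y.Up w a' b' :=
  ⟨h.1.mono (Icc_subset_Icc ha hb), fun t ht => h.2 t ⟨ha.trans_lt ht.1, ht.2.trans_le hb⟩⟩

lemma Up.sol {w a b} (h : Y.Up w a b) :
    SolOn (fun x q => Y.Gp (-x) q) (fun x => Y.K (-x)) 0 (fun x => w (-x)) (-b) (-a) := by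
  refine ⟨h.1.comp continuous_neg.continuousOn ?_, fun t ht => ?_⟩
  · intro t ht
    exact ⟨by linarith [ht.2], by linarith [ht.1]⟩
  · rw [rsq_zero]
    have h1 := h.2 (-t) ⟨by linarith [ht.2], by linarith [ht.1]⟩
    have h2 := h1.comp t (hasDerivAt_neg t)
    exact h2.congr_deriv (by ring)

lemma Up.of_sol {w a b} (h : SolOn (fun x q => Y.Gp (-x) q) (fun x => Y.K (-x)) 0 w (-b) (-a)) :
    Y.Up (fun x => w (-x)) a b := by
  refine ⟨h.1.comp continuous_neg.continuousOn ?_, fun t ht => ?_⟩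
  · intro t ht
    exact ⟨by linarith [ht.2], by linarith [ht.1]⟩
  · have h1 := h.2 (-t) ⟨by linarith [ht.2], by linarith [ht.1]⟩
    rw [rsq_zero] at h1
    have h2 := h1.comp t (hasDerivAt_neg t)
    refine h2.congr_deriv ?_
    simp only [neg_neg]; ring

lemma Lo.nonexp {w1 w2 a b} (h1 : Y.Lo w1 a b) (h2 : Y.Lo w2 a b) (hab : a ≤ b) :
    |w1 b - w2 b| ≤ |w1 a - w2 a| := h1.sol.nonexp Y.hm h2.sol hab

lemma Lo.mono {w1 w2 a b} (h1 : Y.Lo w1 a b) (h2 : Y.Lo w2 a b) (hab : a ≤ b) (h : w1 a ≤ w2 a) :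
    w1 b ≤ w2 b := h1.sol.mono Y.hm h2.sol hab h

lemma Lo.uniq {w1 w2 a b} (h1 : Y.Lo w1 a b) (h2 : Y.Lo w2 a b) (hab : a ≤ b) (h : w1 a = w2 a) :
    w1 b = w2 b := le_antisymm (h1.mono h2 hab h.le) (h2.mono h1 hab h.ge)

lemma Up.nonexp {w1 w2 a b} (h1 : Y.Up w1 a b) (h2 : Y.Up w2 a b) (hab : a ≤ b) :
    |w1 a - w2 a| ≤ |w1 b - w2 b| := by
  simpa using h1.sol.nonexp Y.hp.rev h2.sol (neg_le_neg hab)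

lemma Up.mono {w1 w2 a b} (h1 : Y.Up w1 a b) (h2 : Y.Up w2 a b) (hab : a ≤ b) (h : w1 b ≤ w2 b) :
    w1 a ≤ w2 a := by
  have := h1.sol.mono Y.hp.rev h2.sol (neg_le_neg hab) (by simpa using h)
  simpa using this

lemma Up.uniq {w1 w2 a b} (h1 : Y.Up w1 a b) (h2 : Y.Up w2 a b) (hab : a ≤ b) (h : w1 b = w2 b) :
    w1 a = w2 a := le_antisymm (h1.mono h2 hab h.le) (h2.mono h1 hab h.ge)

variable (Y)
lemma exists_Up (b w0 : ℝ) : ∃ w : ℝ → ℝ, w b = w0 ∧ ∀ a, a ≤ b → Y.Up w a b := by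
  obtain ⟨w, h1, h2⟩ := exists_sol_global Y.hp.rev (Y.Kc.comp continuous_neg) (-b) w0
  exact ⟨fun x => w (-x), h1, fun a ha => Up.of_sol (h2 (-a) (neg_le_neg ha))⟩

lemma exists_Lo (a w0 : ℝ) : ∃ w : ℝ → ℝ, w a = w0 ∧ ∀ b, a ≤ b → Y.Lo w a b := by
  obtain ⟨w, h1, h2⟩ := exists_sol_global Y.hm (Y.Kc.neg) a w0
  exact ⟨w, h1, fun b hb => Lo.of_sol (h2 b hb)⟩

/-- the upper curve which meets w = 0 for the last time at x = r -/
def u (r x : ℝ) : ℝ := if x < r then (Y.exists_Up r 0).choose x else Y.κ r - Y.κ x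

lemma u_ge {r x : ℝ} (h : r ≤ x) : Y.u r x = Y.κ r - Y.κ x := if_neg (not_lt.2 h)
lemma u_self (r : ℝ) : Y.u r r = 0 := by rw [u_ge Y le_rfl, sub_self]

lemma GpSqrt {w : ℝ → ℝ} {x : ℝ} (h : ContinuousAt w x) :
    ContinuousAt (fun x => Y.Gp x √(w x) - Y.K x) x := by
  have h1 : ContinuousAt (fun x => (x, √(w x))) x := continuousAt_id.prodMk h.sqrt
  have h2 := (Y.hp.cont.continuousAt (x := (x, √(w x)))).comp (f := fun x => (x, √(w x))) h1
  exact h2.sub Y.Kc.continuousAt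

lemma GmSqrt {w : ℝ → ℝ} {x : ℝ} (h : ContinuousAt w x) :
    ContinuousAt (fun x => - Y.Gm x √(w x) - Y.K x) x := by
  have h1 : ContinuousAt (fun x => (x, √(w x))) x := continuousAt_id.prodMk h.sqrt
  have h2 := (Y.hm.cont.continuousAt (x := (x, √(w x)))).comp (f := fun x => (x, √(w x))) h1
  exact h2.neg.sub Y.Kc.continuousAt

lemma u_deriv (r x : ℝ) : HasDerivAt (Y.u r) (Y.Gp x √(Y.u r x) - Y.K x) x := by
  obtain ⟨h0, hs⟩ := (Y.exists_Up r 0).choose_spec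
  set v := (Y.exists_Up r 0).choose with hv
  have hne : ∀ x, x ≠ r → HasDerivAt (Y.u r) (Y.Gp x √(Y.u r x) - Y.K x) x := by
    intro x hx
    rcases lt_or_gt_of_ne hx with h | h
    · have h1 := (hs (x - 1) (by linarith)).2 x ⟨by linarith, h⟩
      have : Y.u r =ᶠ[nhds x] v := by
        filter_upwards [Iio_mem_nhds h] with y hy
        exact if_pos hy
      rw [this.eq_of_nhds]
      exact h1.congr_of_eventuallyEq this
    · have : Y.u r =ᶠ[nhds x] fun y => Y.κ r - Y.κ y := by
        filter_upwards [Ioi_mem_nhds h] with y hy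
        exact u_ge Y (le_of_lt hy)
      rw [this.eq_of_nhds, Real.sqrt_eq_zero_of_nonpos
        (by simpa using Y.κmono.monotone h.le), Y.hp.zero, zero_sub]
      exact ((Y.dκ x).const_sub _).congr_of_eventuallyEq this
  have hc : ContinuousAt (Y.u r) r := by
    have h1 : ContinuousWithinAt (Y.u r) (Iic r) r := by
      have := (hs (r-1) (by linarith)).1 r ⟨by linarith, le_rfl⟩
      have h2 : ContinuousWithinAt v (Iic r) r := by
        apply this.mono_of_mem_nhdsWithin
        exact Icc_mem_nhdsLE (by linarith)
      apply h2.congr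
      · intro y hy
        rcases lt_or_eq_of_le (mem_Iic.1 hy) with h | h
        · exact if_pos h
        · rw [h, u_self, h0]
      · rw [u_self, h0]
    have h2 : ContinuousWithinAt (Y.u r) (Ici r) r := by
      have : ContinuousWithinAt (fun y => Y.κ r - Y.κ y) (Ici r) r :=
        (continuous_const.sub Y.κc).continuousWithinAt
      exact this.congr (fun y hy => u_ge Y hy) (u_ge Y le_rfl)
    exact continuousAt_iff_continuous_left_right.2 ⟨h1, h2⟩
  rcases eq_or_ne x r with rfl | h
  · exact hasDerivAt_of_hasDerivAt_of_ne (fun y hy => hne y hy) hc (Y.GpSqrt hc)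
  · exact hne x h

lemma u_cont (r : ℝ) : Continuous (Y.u r) :=
  continuous_iff_continuousAt.2 fun x => (Y.u_deriv r x).continuousAt

lemma u_up (r a b : ℝ) : Y.Up (Y.u r) a b := ⟨(Y.u_cont r).continuousOn, fun x _ => Y.u_deriv r x⟩

lemma u_lip (r r' x : ℝ) : |Y.u r x - Y.u r' x| ≤ |Y.κ r - Y.κ r'| := by
  wlog h : r ≤ r' generalizing r r' with H
  · rw [abs_sub_comm, abs_sub_comm (Y.κ r)]; exact H r' r (le_of_not_ge h)
  rcases le_total x r' with hx | hx
  · have := (Y.u_up r x r').nonexp (Y.u_up r' x r') hx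
    rw [u_ge Y h, u_self, sub_zero] at this
    exact this
  · rw [u_ge Y hx, u_ge Y (h.trans hx)]; simp

lemma u_mono (x : ℝ) {r r' : ℝ} (h : r ≤ r') : Y.u r x ≤ Y.u r' x := by
  rcases le_total x r' with hx | hx
  · refine (Y.u_up r x r').mono (Y.u_up r' x r') hx ?_
    rw [u_ge Y h, u_self]
    have := Y.κmono.monotone h
    linarith
  · rw [u_ge Y hx, u_ge Y (h.trans hx)]
    have := Y.κmono.monotone h
    linarith

lemma u_nonneg {r x : ℝ} (h : x ≤ r) : 0 ≤ Y.u r x := by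
  rw [← Y.u_self x]; exact Y.u_mono x h

lemma u_eq_zero {r x : ℝ} (h : x < r) (h0 : Y.u r x = 0) : x = 0 := by
  have hmin : IsLocalMin (Y.u r) x := by
    filter_upwards [Iio_mem_nhds h] with y hy
    rw [h0]; exact Y.u_nonneg (le_of_lt hy)
  have := hmin.hasDerivAt_eq_zero (Y.u_deriv r x)
  rw [h0, Real.sqrt_zero, Y.hp.zero, zero_sub, neg_eq_zero] at this
  by_contra hx
  exact (Y.Kpos x hx).ne' this

lemma u_jcont : Continuous (fun p : ℝ × ℝ => Y.u p.1 p.2) := by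
  rw [continuous_iff_continuousAt]
  rintro ⟨r, x⟩
  rw [ContinuousAt, tendsto_iff_dist_tendsto_zero]
  have h1 : Tendsto (fun p : ℝ × ℝ => |Y.κ p.1 - Y.κ r| + |Y.u r p.2 - Y.u r x|)
      (nhds (r, x)) (nhds 0) := by
    have : Continuous (fun p : ℝ × ℝ => |Y.κ p.1 - Y.κ r| + |Y.u r p.2 - Y.u r x|) := by
      have := Y.κc; have := Y.u_cont r; fun_prop
    have h2 := this.tendsto (r, x)
    simpa using h2
  refine squeeze_zero (fun _ => dist_nonneg) (fun p => ?_) h1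
  rw [Real.dist_eq]
  calc |Y.u p.1 p.2 - Y.u r x| ≤ |Y.u p.1 p.2 - Y.u r p.2| + |Y.u r p.2 - Y.u r x| :=
        abs_sub_le _ _ _
    _ ≤ _ := add_le_add_left (Y.u_lip _ _ _) _

lemma sqrt_sub_le {p q : ℝ} (hp : 0 ≤ p) (hpq : p ≤ q) {ε : ℝ} (hε : 0 < ε) (hq : ε ≤ √q) :
    √q - √p ≤ (q - p) / ε := by
  rw [le_div_iff₀ hε]
  have h1 := Real.sq_sqrt hp
  have h2 := Real.sq_sqrt (hp.trans hpq)
  have h3 := Real.sqrt_le_sqrt hpq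
  have h4 := Real.sqrt_nonneg p
  nlinarith [mul_nonneg (sub_nonneg.2 h3) (by linarith : 0 ≤ √q + √p - ε)]

lemma u_strict {r r' x : ℝ} (hr : r < r') (hx : x ≤ r)
    (hn : ¬ (x ≤ 0 ∧ 0 ≤ r ∧ Y.u r' 0 = 0)) : Y.u r x < Y.u r' x := by
  have hpos : ∀ t ∈ Icc x r, 0 < Y.u r' t := by
    intro t ht
    refine lt_of_le_of_ne (Y.u_nonneg (ht.2.trans hr.le)) (fun h => ?_)
    have := Y.u_eq_zero (ht.2.trans_lt hr) h.symm
    subst this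
    exact hn ⟨ht.1, ht.2, h.symm⟩
  obtain ⟨t0, ht0, hmin⟩ := (isCompact_Icc (a := x) (b := r)).exists_isMinOn
    ⟨x, left_mem_Icc.2 hx⟩ (Y.u_cont r').continuousOn
  set ε := √(Y.u r' t0) with hε
  have hεp : 0 < ε := Real.sqrt_pos.2 (hpos t0 ht0)
  set c := Y.b1 / ε with hc
  have key : AntitoneOn (fun t => (Y.u r' t - Y.u r t) * Real.exp (-c * t)) (Icc x r) := by
    have hd : ∀ t, HasDerivAt (fun t => (Y.u r' t - Y.u r t) * Real.exp (-c * t))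
        (((Y.Gp t √(Y.u r' t) - Y.K t) - (Y.Gp t √(Y.u r t) - Y.K t)) * Real.exp (-c * t) +
          (Y.u r' t - Y.u r t) * (Real.exp (-c * t) * (-c))) t := by
      intro t
      have h2 : HasDerivAt (fun t => Real.exp (-c * t)) (Real.exp (-c * t) * (-c)) t := by
        have := ((hasDerivAt_id t).const_mul (-c)).exp
        simpa using this
      exact ((Y.u_deriv r' t).sub (Y.u_deriv r t)).mul h2
    apply antitoneOn_of_hasDerivWithinAt_nonpos (convex_Icc x r)
      (fun t _ => (hd t).continuousAt.continuousWithinAt)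
      (fun t _ => (hd t).hasDerivWithinAt)
    intro t ht
    rw [interior_Icc] at ht
    have ht' := Ioo_subset_Icc_self ht
    have h1 := Y.u_mono t hr.le
    have h0 := Y.u_nonneg (r := r) ht'.2
    have h2 := Y.hp.hi t √(Y.u r t) √(Y.u r' t) (Real.sqrt_nonneg _) (Real.sqrt_le_sqrt h1)
    have h3 := sqrt_sub_le h0 h1 hεp (Real.sqrt_le_sqrt (hmin ht'))
    have h4 : Y.b1 * (√(Y.u r' t) - √(Y.u r t)) ≤ c * (Y.u r' t - Y.u r t) := by
      have := mul_le_mul_of_nonneg_left h3 Y.hp.b1pos.le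
      rw [hc]; calc _ ≤ _ := this
        _ = _ := by ring
    have := Real.exp_pos (-c * t)
    have h5 : (Y.Gp t √(Y.u r' t) - Y.Gp t √(Y.u r t)) - c * (Y.u r' t - Y.u r t) ≤ 0 := by linarith
    nlinarith [mul_nonpos_of_nonpos_of_nonneg h5 this.le]
  have h1 := key (left_mem_Icc.2 hx) (right_mem_Icc.2 hx) hx
  simp only [Y.u_self, sub_zero] at h1
  have h2 := mul_pos (hpos r (right_mem_Icc.2 hx)) (Real.exp_pos (-c * r))
  have h3 : 0 < (Y.u r' x - Y.u r x) * Real.exp (-c * x) := lt_of_lt_of_le h2 h1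
  have := (mul_pos_iff_of_pos_right (Real.exp_pos _)).1 h3
  linarith

lemma u_big (X W : ℝ) : ∃ R, ∀ x ∈ Icc (-X) X, ∀ r ≥ R, W < Y.u r x := by
  wlog hW : 0 ≤ W generalizing W with H
  · obtain ⟨R, hR⟩ := H 0 le_rfl
    exact ⟨R, fun x hx r hr => lt_trans (lt_of_not_ge hW) (hR x hx r hr)⟩
  set A := √(W + 1) with hA
  have hb1 := Y.hp.b1pos
  set C := |Y.b1 * (A + Y.b1 / 2 * X)| + Y.b1 ^ 2 / 2 + 1 with hC
  obtain ⟨R0, hR0, hK⟩ := Y.Kgrow C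
  set R1 := max (max R0 1) X with hR1
  set B := (A + Y.b1 / 2 * (R1 + X)) ^ 2 with hB
  refine ⟨R1 + B + 1, fun x hx r hr => ?_⟩
  by_contra hcon
  push Not at hcon
  have hB0 : 0 ≤ B := sq_nonneg _
  have hxR1 : x ≤ R1 := hx.2.trans (le_max_right _ _)
  have hR1r : R1 ≤ r := by linarith
  have step1 : ∀ t ∈ Icc x r, √(Y.u r t) ≤ A + Y.b1 / 2 * (t - x) := by
    intro t ht
    have hd : ∀ y ∈ Icc x r, HasDerivAt (fun y => √(Y.u r y + 1) - Y.b1 / 2 * y)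
        ((Y.Gp y √(Y.u r y) - Y.K y) / (2 * √(Y.u r y + 1)) - Y.b1 / 2) y := by
      intro y hy
      have h0 := Y.u_nonneg hy.2
      have h1 := ((Y.u_deriv r y).add_const 1).sqrt (by positivity)
      have h2 := (hasDerivAt_id y).const_mul (Y.b1 / 2)
      rw [mul_one] at h2
      exact h1.sub h2
    have key : AntitoneOn (fun y => √(Y.u r y + 1) - Y.b1 / 2 * y) (Icc x r) := by
      apply antitoneOn_of_hasDerivWithinAt_nonpos (convex_Icc x r)
        (fun t ht => (hd t ht).continuousAt.continuousWithinAt)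
        (fun t ht => (hd t (interior_subset ht)).hasDerivWithinAt)
      intro y hy
      have hy' := interior_subset hy
      have h0 := Y.u_nonneg hy'.2
      have h1 : 0 < √(Y.u r y + 1) := Real.sqrt_pos.2 (by linarith)
      have h2 : √(Y.u r y) ≤ √(Y.u r y + 1) := Real.sqrt_le_sqrt (by linarith)
      have h3 := Y.hp.le y (Real.sqrt_nonneg (Y.u r y))
      have h4 := Y.Knonneg y
      rw [sub_nonpos, div_le_iff₀ (by positivity)]
      nlinarith [mul_le_mul_of_nonneg_left h2 hb1.le]
    have h1 := key (left_mem_Icc.2 (ht.1.trans ht.2)) ht ht.1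
    simp only at h1
    have h2 : √(Y.u r x + 1) ≤ A := Real.sqrt_le_sqrt (by linarith)
    have h3 : √(Y.u r t) ≤ √(Y.u r t + 1) := Real.sqrt_le_sqrt (by linarith)
    linarith
  have step2 : AntitoneOn (fun y => Y.u r y + y) (Icc R1 r) := by
    apply antitoneOn_of_hasDerivWithinAt_nonpos (convex_Icc R1 r)
      (fun t ht => ((Y.u_deriv r t).add (hasDerivAt_id t)).continuousAt.continuousWithinAt)
      (fun t ht => ((Y.u_deriv r t).add (hasDerivAt_id t)).hasDerivWithinAt)
    intro y hy
    have hy' := interior_subset hy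
    have hyR0 : R0 ≤ y := ((le_max_left _ _).trans (le_max_left _ _)).trans hy'.1
    have hy1 : 1 ≤ y := ((le_max_right _ _).trans (le_max_left _ _)).trans hy'.1
    have h1 := hK y hyR0
    have h2 := step1 y ⟨hxR1.trans hy'.1, hy'.2⟩
    have h3 := Y.hp.le y (Real.sqrt_nonneg (Y.u r y))
    have h4 : Y.b1 * √(Y.u r y) ≤ Y.b1 * (A + Y.b1 / 2 * (y + X)) := by
      apply mul_le_mul_of_nonneg_left _ hb1.le
      refine h2.trans ?_
      have : Y.b1 / 2 * (y - x) ≤ Y.b1 / 2 * (y + X) :=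
        mul_le_mul_of_nonneg_left (by linarith [hx.1]) (by positivity)
      linarith
    have h5 : Y.b1 * (A + Y.b1 / 2 * X) ≤ |Y.b1 * (A + Y.b1 / 2 * X)| * y := by
      have := le_abs_self (Y.b1 * (A + Y.b1 / 2 * X))
      have := abs_nonneg (Y.b1 * (A + Y.b1 / 2 * X))
      nlinarith
    rw [hC] at h1
    nlinarith
  have h1 := step2 (left_mem_Icc.2 hR1r) (right_mem_Icc.2 hR1r) hR1r
  simp only [Y.u_self] at h1
  have h2 := step1 R1 ⟨hxR1, hR1r⟩
  have h3 : Y.u r R1 ≤ B := by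
    have h5 : √(Y.u r R1) ≤ A + Y.b1 / 2 * (R1 + X) := by
      refine h2.trans ?_
      have : Y.b1 / 2 * (R1 - x) ≤ Y.b1 / 2 * (R1 + X) :=
        mul_le_mul_of_nonneg_left (by linarith [hx.1]) (by positivity)
      linarith
    have h6 := Real.sq_sqrt (Y.u_nonneg hR1r)
    rw [← h6, hB]
    exact pow_le_pow_left₀ (Real.sqrt_nonneg _) h5 2
  linarith

lemma u_surj {x w : ℝ} (hw : 0 ≤ w) : ∃ r, x ≤ r ∧ Y.u r x = w := by
  obtain ⟨R, hR⟩ := Y.u_big |x| w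
  have h1 := hR x ⟨neg_abs_le x, le_abs_self x⟩ (max R x) (le_max_left _ _)
  have hc : Continuous fun r => Y.u r x := Y.u_jcont.comp (by fun_prop : Continuous fun r => (r, x))
  have := intermediate_value_Icc (le_max_right R x) hc.continuousOn
  obtain ⟨r, hr, hr'⟩ := this ⟨by simpa [Y.u_self] using hw, h1.le⟩
  exact ⟨r, hr.1, hr'⟩

lemma exists_small : ∃ r > 0, Y.u r 0 = 0 := by
  have hb0 := Y.hp.b0pos
  have hr0 := Y.r0pos
  set r := min Y.r0 (Y.b0 ^ 2 / (16 * (|Y.k1| + 1))) with hr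
  have hrpos : 0 < r := lt_min hr0 (by positivity)
  have hk : |Y.k1| * r < Y.b0 ^ 2 / 8 := by
    have h1 : r ≤ Y.b0 ^ 2 / (16 * (|Y.k1| + 1)) := min_le_right _ _
    rw [le_div_iff₀ (by positivity)] at h1
    nlinarith [abs_nonneg Y.k1]
  set m := Y.b0 / 4 with hm
  refine ⟨r, hrpos, ?_⟩
  have key : ∀ x ∈ Ioc 0 r, Y.u r x ≤ m ^ 2 * x ^ 2 := by
    intro x hx
    by_contra hcon
    push Not at hcon
    have hv : ∀ y, HasDerivAt (fun y => m ^ 2 * y ^ 2) (m ^ 2 * (2 * y)) y := by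
      intro y
      have := (hasDerivAt_pow 2 y).const_mul (m ^ 2)
      simpa using this
    have := image_le_of_deriv_right_lt_deriv_boundary' (f := fun y => m ^ 2 * y ^ 2)
      (f' := fun y => m ^ 2 * (2 * y)) (a := x) (b := r) (B := Y.u r)
      (B' := fun y => Y.Gp y √(Y.u r y) - Y.K y)
      (by fun_prop) (fun y _ => (hv y).hasDerivWithinAt) hcon.le (Y.u_cont r).continuousOn
      (fun y _ => (Y.u_deriv r y).hasDerivWithinAt) (fun y hy he => ?_) (right_mem_Icc.2 hx.2)
    · rw [Y.u_self] at this
      have : 0 < m ^ 2 * r ^ 2 := by positivity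
      linarith
    · have hy0 : 0 < y := hx.1.trans_le hy.1
      have hs : √(Y.u r y) = m * y := by
        rw [← he, ← mul_pow, Real.sqrt_sq (by positivity)]
      rw [hs]
      have h1 := Y.hp.ge y (by positivity : 0 ≤ m * y)
      have h2 := Y.Kle y ⟨hy0.le, hy.2.le.trans (min_le_left _ _)⟩
      have h3 : Y.k1 * y ^ 2 ≤ Y.b0 ^ 2 / 8 * y := by
        have : Y.k1 * y ≤ |Y.k1| * r :=
          mul_le_mul (le_abs_self _) hy.2.le hy0.le (abs_nonneg _)
        nlinarith
      have h4 : Y.k1 * y ^ 2 < Y.b0 ^ 2 / 8 * y := by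
        have : Y.k1 * y ≤ |Y.k1| * r :=
          mul_le_mul (le_abs_self _) hy.2.le hy0.le (abs_nonneg _)
        nlinarith
      rw [hm] at h1 ⊢
      nlinarith
  apply le_antisymm _ (Y.u_nonneg hrpos.le)
  have h1 : Tendsto (Y.u r) (nhdsWithin 0 (Ioi 0)) (nhds (Y.u r 0)) :=
    ((Y.u_cont r).tendsto 0).mono_left nhdsWithin_le_nhds
  have h2 : Tendsto (fun x : ℝ => m ^ 2 * x ^ 2) (nhdsWithin 0 (Ioi 0)) (nhds 0) := by
    have : Continuous (fun x : ℝ => m ^ 2 * x ^ 2) := by fun_prop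
    have := (this.tendsto 0).mono_left (nhdsWithin_le_nhds (s := Ioi (0:ℝ)))
    simpa using this
  apply le_of_tendsto_of_tendsto h1 h2
  filter_upwards [Ioc_mem_nhdsGT hrpos] with x hx using key x hx

lemma exists_sigma : ∃ σ > 0, ∀ r, 0 ≤ r → (Y.u r 0 = 0 ↔ r ≤ σ) := by
  obtain ⟨r1, hr1, h1⟩ := Y.exists_small
  obtain ⟨R, hR⟩ := Y.u_big 0 0
  set s := {r : ℝ | 0 ≤ r ∧ Y.u r 0 = 0} with hs
  have hne : s.Nonempty := ⟨r1, hr1.le, h1⟩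
  have hbdd : BddAbove s := ⟨R, fun r hr => by
    by_contra hcon
    have := hR 0 (by simp) r (le_of_not_ge hcon)
    rw [hr.2] at this
    exact lt_irrefl _ this⟩
  have hclosed : IsClosed s := by
    have hc : Continuous fun r => Y.u r 0 :=
      Y.u_jcont.comp (by fun_prop : Continuous fun r : ℝ => (r, (0:ℝ)))
    exact isClosed_Ici.inter (isClosed_eq hc continuous_const)
  have hmem := hclosed.csSup_mem hne hbdd
  refine ⟨sSup s, hr1.trans_le (le_csSup hbdd ⟨hr1.le, h1⟩), fun r hr => ⟨fun h => le_csSup hbdd ⟨hr, h⟩,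
    fun h => ?_⟩⟩
  apply le_antisymm _ (Y.u_nonneg hr)
  exact (Y.u_mono 0 h).trans hmem.2.le

def σ : ℝ := Y.exists_sigma.choose
lemma σ_pos : 0 < Y.σ := Y.exists_sigma.choose_spec.1
lemma σ_iff {r : ℝ} (h : 0 ≤ r) : Y.u r 0 = 0 ↔ r ≤ Y.σ := Y.exists_sigma.choose_spec.2 r h

/-- two upper curves meeting at one point -/
lemma u_meet {r r' x : ℝ} (hr : r < r') (hx : x ≤ r) (h : Y.u r x = Y.u r' x) :
    x ≤ 0 ∧ 0 ≤ r ∧ r' ≤ Y.σ := by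
  by_contra hcon
  refine absurd h (Y.u_strict hr hx ?_).ne
  rintro ⟨h1, h2, h3⟩
  exact hcon ⟨h1, h2, (Y.σ_iff (h2.trans hr.le)).1 h3⟩

lemma u_same {r r' x : ℝ} (h1 : 0 ≤ r) (h2 : 0 ≤ r') (h1' : r ≤ Y.σ) (h2' : r' ≤ Y.σ) (hx : x ≤ 0) :
    Y.u r x = Y.u r' x := by
  apply (Y.u_up r x 0).uniq (Y.u_up r' x 0) hx
  rw [(Y.σ_iff h1).2 h1', (Y.σ_iff h2).2 h2']
end Sys
namespace Sys
variable {Y : Sys}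

lemma Lo.anti {w : ℝ → ℝ} {a b : ℝ} (h : Y.Lo w a b) : AntitoneOn (fun x => w x + Y.κ x) (Icc a b) := by
  apply antitoneOn_of_hasDerivWithinAt_nonpos (convex_Icc a b)
    (h.1.add Y.κc.continuousOn)
    (fun t ht => ((h.2 t (by rwa [interior_Icc] at ht)).add (Y.dκ t)).hasDerivWithinAt)
  intro t ht
  have := Y.hm.nonneg t (Real.sqrt_nonneg (w t))
  linarith

lemma Lo.santi {w : ℝ → ℝ} {a b : ℝ} (h : Y.Lo w a b) : StrictAntiOn w (Icc a b) := by
  intro x hx y hy hxy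
  have h1 := h.anti hx hy hxy.le
  have h2 := Y.κmono hxy
  simp only at h1
  linarith

lemma Lo.sqrt_anti {w : ℝ → ℝ} {a b : ℝ} (h : Y.Lo w a b) (hp : ∀ t ∈ Ioo a b, 0 < w t) :
    AntitoneOn (fun x => √(w x) + Y.b0 / 2 * x) (Icc a b) := by
  have hd : ∀ t ∈ interior (Icc a b), HasDerivAt (fun x => √(w x) + Y.b0 / 2 * x)
      ((- Y.Gm t √(w t) - Y.K t) / (2 * √(w t)) + Y.b0 / 2) t := by
    intro t ht
    rw [interior_Icc] at ht
    have h2 := (hasDerivAt_id t).const_mul (Y.b0 / 2)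
    rw [mul_one] at h2
    exact ((h.2 t ht).sqrt (hp t ht).ne').add h2
  apply antitoneOn_of_hasDerivWithinAt_nonpos (convex_Icc a b)
    (h.1.sqrt.add (by fun_prop)) (fun t ht => (hd t ht).hasDerivWithinAt)
  intro t ht
  rw [interior_Icc] at ht
  have h1 : 0 < √(w t) := Real.sqrt_pos.2 (hp t ht)
  have h2 := Y.hm.ge t h1.le
  have h3 := Y.Knonneg t
  have : (- Y.Gm t √(w t) - Y.K t) / (2 * √(w t)) ≤ - (Y.b0 / 2) := by
    rw [div_le_iff₀ (by positivity)]
    linarith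
  linarith

variable (Y)
/-- the lower solution issued from (x0,w0) -/
def lo (x0 w0 : ℝ) : ℝ → ℝ := (Y.exists_Lo x0 w0).choose
lemma lo_init (x0 w0 : ℝ) : Y.lo x0 w0 x0 = w0 := (Y.exists_Lo x0 w0).choose_spec.1
lemma lo_lo (x0 w0 b : ℝ) (h : x0 ≤ b) : Y.Lo (Y.lo x0 w0) x0 b := (Y.exists_Lo x0 w0).choose_spec.2 b h

lemma exists_zero (x0 : ℝ) {w0 : ℝ} (hw : 0 ≤ w0) : ∃ s, x0 ≤ s ∧ Y.lo x0 w0 s = 0 := by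
  have hb0 := Y.hm.b0pos
  set b := x0 + 2 * √w0 / Y.b0 + 1 with hb
  have hs := Real.sqrt_nonneg w0
  have hxb : x0 < b := by
    have : 0 ≤ 2 * √w0 / Y.b0 := by positivity
    linarith
  have hl := Y.lo_lo x0 w0 b hxb.le
  rcases le_or_gt (Y.lo x0 w0 b) 0 with h | h
  · obtain ⟨s, hs, hs'⟩ := intermediate_value_Icc' hxb.le hl.1 ⟨h, by rw [Y.lo_init]; exact hw⟩
    exact ⟨s, hs.1, hs'⟩
  · exfalso
    have h1 := hl.sqrt_anti (fun t ht => h.trans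
      (hl.santi (Ioo_subset_Icc_self ht) (right_mem_Icc.2 hxb.le) ht.2))
      (left_mem_Icc.2 hxb.le) (right_mem_Icc.2 hxb.le) hxb.le
    simp only [Y.lo_init] at h1
    have h2 := Real.sqrt_nonneg (Y.lo x0 w0 b)
    have h3 : Y.b0 / 2 * b = Y.b0 / 2 * x0 + √w0 + Y.b0 / 2 := by
      rw [hb]; field_simp
    linarith

/-- the place where the lower solution meets w = 0 -/
def S (x w : ℝ) : ℝ := (Y.exists_zero x (le_max_right w 0)).choose

lemma S_max (x w : ℝ) : Y.S x (max w 0) = Y.S x w := by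
  unfold S; congr 1; simp

lemma le_S (x w : ℝ) : x ≤ Y.S x w := (Y.exists_zero x (le_max_right w 0)).choose_spec.1

lemma lo_S (x : ℝ) {w : ℝ} (hw : 0 ≤ w) : Y.lo x w (Y.S x w) = 0 := by
  have h1 : Y.lo x (max w 0) (Y.S x w) = 0 := (Y.exists_zero x (le_max_right w 0)).choose_spec.2
  rwa [max_eq_left hw] at h1

lemma S_of_Lo {g : ℝ → ℝ} {a b : ℝ} (h : Y.Lo g a b) (hab : a ≤ b) (ha : 0 ≤ g a) (hb : g b = 0) :
    Y.S a (g a) = b := by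
  set M := max b (Y.S a (g a))
  have h1 := Y.lo_lo a (g a) M (hab.trans (le_max_left _ _))
  have h2 : Y.lo a (g a) b = 0 := by
    rw [← hb]
    exact (Y.lo_lo a (g a) b hab).uniq h hab (Y.lo_init _ _)
  exact h1.santi.injOn ⟨Y.le_S _ _, le_max_right _ _⟩ ⟨hab, le_max_left _ _⟩
    ((Y.lo_S a ha).trans h2.symm)

lemma S_along {g : ℝ → ℝ} {a b : ℝ} (h : Y.Lo g a b) (hab : a ≤ b) (hb : 0 ≤ g b) :
    Y.S a (g a) = Y.S b (g b) := by
  have ha : 0 ≤ g a := hb.trans (h.santi.antitoneOn (left_mem_Icc.2 hab) (right_mem_Icc.2 hab) hab)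
  set s := Y.S b (g b) with hs
  have hbs : b ≤ s := Y.le_S _ _
  have h2 : Y.lo a (g a) b = g b := (Y.lo_lo a (g a) b hab).uniq h hab (Y.lo_init _ _)
  have h3 : Y.lo a (g a) s = 0 := by
    rw [← Y.lo_S b hb]
    exact ((Y.lo_lo a (g a) s (hab.trans hbs)).sub hab le_rfl).uniq (Y.lo_lo b (g b) s hbs) hbs
      (h2.trans (Y.lo_init _ _).symm)
  have := Y.S_of_Lo (Y.lo_lo a (g a) s (hab.trans hbs)) (hab.trans hbs) (by rwa [Y.lo_init]) h3
  rwa [Y.lo_init] at this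

lemma lo_after (x : ℝ) {w b : ℝ} (hw : 0 ≤ w) (hb : Y.S x w ≤ b) :
    Y.lo x w b = Y.κ (Y.S x w) - Y.κ b := by
  set s := Y.S x w
  have hz : Y.Lo (fun y => Y.κ s - Y.κ y) s b := by
    refine ⟨(continuous_const.sub Y.κc).continuousOn, fun y hy => ?_⟩
    rw [Real.sqrt_eq_zero_of_nonpos (by simpa using Y.κmono.monotone hy.1.le), Y.hm.zero]
    simpa using (Y.dκ y).const_sub (Y.κ s)
  exact ((Y.lo_lo x w b ((Y.le_S x w).trans hb)).sub (Y.le_S x w) le_rfl).uniq hz hb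
    (by simp [s, Y.lo_S x hw])

lemma S_lip_w (x : ℝ) {w w' : ℝ} (hw : 0 ≤ w) (hw' : 0 ≤ w') :
    |Y.κ (Y.S x w) - Y.κ (Y.S x w')| ≤ |w - w'| := by
  set b := max (Y.S x w) (Y.S x w')
  have hb : x ≤ b := (Y.le_S x w).trans (le_max_left _ _)
  have h1 := (Y.lo_lo x w b hb).nonexp (Y.lo_lo x w' b hb) hb
  rw [Y.lo_after x hw (le_max_left _ _), Y.lo_after x hw' (le_max_right _ _), Y.lo_init, Y.lo_init] at h1
  simpa using h1

lemma S_lip_x {x x' w M : ℝ} (hw : 0 ≤ w) (hx : x ≤ x') (hM : ∀ t ∈ Icc x x', Y.K t ≤ M) :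
    |Y.κ (Y.S x w) - Y.κ (Y.S x' w)| ≤ (Y.b1 * √w + M) * (x' - x) := by
  set b := max (Y.S x w) (Y.S x' w)
  have hb : x' ≤ b := (Y.le_S x' w).trans (le_max_right _ _)
  have h1 := ((Y.lo_lo x w b (hx.trans hb)).sub hx le_rfl).nonexp (Y.lo_lo x' w b hb) hb
  rw [Y.lo_after x hw (le_max_left _ _), Y.lo_after x' hw (le_max_right _ _), Y.lo_init] at h1
  have h2 : |Y.κ (Y.S x w) - Y.κ (Y.S x' w)| ≤ |Y.lo x w x' - w| := by simpa using h1
  refine h2.trans ?_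
  have hl := Y.lo_lo x w x' hx
  have hle : Y.lo x w x' ≤ w := by
    have := hl.santi.antitoneOn (left_mem_Icc.2 hx) (right_mem_Icc.2 hx) hx
    rwa [Y.lo_init] at this
  rw [abs_of_nonpos (by linarith)]
  have key : MonotoneOn (fun t => Y.lo x w t + (Y.b1 * √w + M) * t) (Icc x x') := by
    apply monotoneOn_of_hasDerivWithinAt_nonneg (convex_Icc _ _)
      (f' := fun t => (- Y.Gm t √(Y.lo x w t) - Y.K t) + (Y.b1 * √w + M))
    · exact hl.1.add (by fun_prop)
    · intro t ht
      rw [interior_Icc] at ht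
      have h3 := (hasDerivAt_id t).const_mul (Y.b1 * √w + M)
      rw [mul_one] at h3
      exact ((hl.2 t ht).add h3).hasDerivWithinAt
    · intro t ht
      rw [interior_Icc] at ht
      have ht' := Ioo_subset_Icc_self ht
      have h3 : Y.lo x w t ≤ w := by
        have := hl.santi.antitoneOn (left_mem_Icc.2 hx) ht' ht'.1
        rwa [Y.lo_init] at this
      have h4 := Y.hm.le t (Real.sqrt_nonneg (Y.lo x w t))
      have h5 := mul_le_mul_of_nonneg_left (Real.sqrt_le_sqrt h3) Y.hm.b1pos.le
      have h6 := hM t ht'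
      linarith
  have := key (left_mem_Icc.2 hx) (right_mem_Icc.2 hx) hx
  simp only [Y.lo_init] at this
  linarith

lemma S_lip {x x' w w' M : ℝ} (hw : 0 ≤ w) (hw' : 0 ≤ w')
    (hM : ∀ t ∈ Icc (x - 1) (x + 1), Y.K t ≤ M) (hx : |x' - x| ≤ 1) :
    |Y.κ (Y.S x' w') - Y.κ (Y.S x w)| ≤ |w' - w| + (Y.b1 * √w + M) * |x' - x| := by
  have h1 := Y.S_lip_w x' hw' hw
  have h2 : |Y.κ (Y.S x' w) - Y.κ (Y.S x w)| ≤ (Y.b1 * √w + M) * |x' - x| := by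
    have h3 := abs_le.1 hx
    rcases le_total x x' with h | h
    · rw [abs_sub_comm, abs_of_nonneg (sub_nonneg.2 h)]
      exact Y.S_lip_x hw h (fun t ht => hM t ⟨by linarith [ht.1], by linarith [ht.2]⟩)
    · rw [abs_sub_comm x', abs_of_nonneg (sub_nonneg.2 h)]
      exact Y.S_lip_x hw h (fun t ht => hM t ⟨by linarith [ht.1], by linarith [ht.2]⟩)
  calc _ ≤ |Y.κ (Y.S x' w') - Y.κ (Y.S x' w)| + |Y.κ (Y.S x' w) - Y.κ (Y.S x w)| := abs_sub_le _ _ _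
    _ ≤ _ := add_le_add h1 h2

lemma κS_cont : Continuous (fun p : ℝ × ℝ => Y.κ (Y.S p.1 p.2)) := by
  rw [continuous_iff_continuousAt]
  rintro ⟨x, w⟩
  obtain ⟨M, hM⟩ := (isCompact_Icc (a := x - 1) (b := x + 1)).exists_bound_of_continuousOn
    Y.Kc.continuousOn
  have hM' : ∀ t ∈ Icc (x - 1) (x + 1), Y.K t ≤ M := fun t ht => (le_abs_self _).trans (hM t ht)
  rw [ContinuousAt, tendsto_iff_dist_tendsto_zero]
  have h1 : Tendsto (fun p : ℝ × ℝ => |max p.2 0 - max w 0| + (Y.b1 * √(max w 0) + M) * |p.1 - x|)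
      (nhds (x, w)) (nhds 0) := by
    have : Continuous (fun p : ℝ × ℝ => |max p.2 0 - max w 0| + (Y.b1 * √(max w 0) + M) * |p.1 - x|) := by
      fun_prop
    have h2 := this.tendsto (x, w)
    simpa using h2
  refine squeeze_zero' (Eventually.of_forall fun _ => dist_nonneg) ?_ h1
  have : ∀ᶠ p : ℝ × ℝ in nhds (x, w), |p.1 - x| ≤ 1 := by
    have : Continuous (fun p : ℝ × ℝ => |p.1 - x|) := by fun_prop
    have := this.tendsto (x, w)
    simp only [sub_self, abs_zero] at this
    filter_upwards [this.eventually (gt_mem_nhds one_pos)] with p hp using hp.le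
  filter_upwards [this] with p hp
  rw [Real.dist_eq, ← Y.S_max p.1, ← Y.S_max x]
  exact Y.S_lip (le_max_right _ _) (le_max_right _ _) hM' hp

lemma S_cont : Continuous (fun p : ℝ × ℝ => Y.S p.1 p.2) := by
  rw [continuous_iff_continuousAt]
  intro p
  have h := Y.κS_cont.tendsto p
  rw [tendsto_order] at h
  rw [ContinuousAt, tendsto_order]
  constructor
  · intro a ha
    filter_upwards [h.1 (Y.κ a) (Y.κmono ha)] with q hq using Y.κmono.lt_iff_lt.1 hq
  · intro a ha
    filter_upwards [h.2 (Y.κ a) (Y.κmono ha)] with q hq using Y.κmono.lt_iff_lt.1 hq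

lemma S_zero (x : ℝ) : Y.S x 0 = x := by
  have := Y.S_of_Lo (Y.lo_lo x 0 x le_rfl) le_rfl (by rw [Y.lo_init]) (Y.lo_init _ _)
  rwa [Y.lo_init] at this

lemma lo_pos {x w t : ℝ} (hw : 0 ≤ w) (ht : x ≤ t) (ht' : t < Y.S x w) : 0 < Y.lo x w t := by
  rw [← Y.lo_S x hw]
  exact (Y.lo_lo x w _ (Y.le_S x w)).santi ⟨ht, ht'.le⟩ (right_mem_Icc.2 (Y.le_S x w)) ht'

lemma lo_neg {x w t : ℝ} (hw : 0 ≤ w) (ht : Y.S x w < t) : Y.lo x w t < 0 := by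
  rw [Y.lo_after x hw ht.le]
  have := Y.κmono ht
  linarith

lemma S_strict (x : ℝ) {w2 w1 : ℝ} (h2 : 0 ≤ w2) (h : w2 < w1) : Y.S x w2 < Y.S x w1 := by
  have h1 : 0 ≤ w1 := h2.trans h.le
  set s := Y.S x w2 with hs
  have hxs : x ≤ s := Y.le_S _ _
  have l1 := Y.lo_lo x w1 s hxs
  have l2 := Y.lo_lo x w2 s hxs
  have hp2 : ∀ t ∈ Ioo x s, 0 < Y.lo x w2 t := fun t ht => Y.lo_pos h2 ht.1.le ht.2
  have hle : ∀ t ∈ Ioo x s, Y.lo x w2 t ≤ Y.lo x w1 t := fun t ht =>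
    (l2.sub le_rfl ht.2.le).mono (l1.sub le_rfl ht.2.le) ht.1.le (by rw [Y.lo_init, Y.lo_init]; exact h.le)
  have hd : ∀ t ∈ interior (Icc x s), HasDerivAt
      (fun t => (√(Y.lo x w1 t) - √(Y.lo x w2 t)) * Real.exp (Y.L / 2 * t))
      (((- Y.Gm t √(Y.lo x w1 t) - Y.K t) / (2 * √(Y.lo x w1 t)) -
        (- Y.Gm t √(Y.lo x w2 t) - Y.K t) / (2 * √(Y.lo x w2 t))) * Real.exp (Y.L / 2 * t) +
        (√(Y.lo x w1 t) - √(Y.lo x w2 t)) * (Real.exp (Y.L / 2 * t) * (Y.L / 2))) t := by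
    intro t ht
    rw [interior_Icc] at ht
    have h5 : HasDerivAt (fun t => Real.exp (Y.L / 2 * t)) (Real.exp (Y.L / 2 * t) * (Y.L / 2)) t := by
      have := ((hasDerivAt_id t).const_mul (Y.L / 2)).exp
      simpa using this
    exact (((l1.2 t ht).sqrt ((hp2 t ht).trans_le (hle t ht)).ne').sub
      ((l2.2 t ht).sqrt (hp2 t ht).ne')).mul h5
  have key : MonotoneOn (fun t => (√(Y.lo x w1 t) - √(Y.lo x w2 t)) * Real.exp (Y.L / 2 * t)) (Icc x s) := by
    apply monotoneOn_of_hasDerivWithinAt_nonneg (convex_Icc _ _)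
      ((l1.1.sqrt.sub l2.1.sqrt).mul (by fun_prop)) (fun t ht => (hd t ht).hasDerivWithinAt)
    intro t ht
    rw [interior_Icc] at ht
    have hq2 : 0 < √(Y.lo x w2 t) := Real.sqrt_pos.2 (hp2 t ht)
    have hqq : √(Y.lo x w2 t) ≤ √(Y.lo x w1 t) := Real.sqrt_le_sqrt (hle t ht)
    set q1 := √(Y.lo x w1 t)
    set q2 := √(Y.lo x w2 t)
    have hq1 : 0 < q1 := hq2.trans_le hqq
    have h3 := Y.h3 t q1 q2 hq2.le hqq
    have hK := Y.Knonneg t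
    have hE := Real.exp_pos (Y.L / 2 * t)
    set E := Real.exp (Y.L / 2 * t)
    have h6 : 0 ≤ ((- Y.Gm t q1 - Y.K t) / (2 * q1) - (- Y.Gm t q2 - Y.K t) / (2 * q2))
        + (q1 - q2) * (Y.L / 2) := by
      have : ((- Y.Gm t q1 - Y.K t) / (2 * q1) - (- Y.Gm t q2 - Y.K t) / (2 * q2))
        + (q1 - q2) * (Y.L / 2) = ((Y.L * q1 * q2 * (q1 - q2) - (q2 * Y.Gm t q1 - q1 * Y.Gm t q2))
          + Y.K t * (q1 - q2)) / (2 * q1 * q2) := by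
        field_simp
        ring
      rw [this]
      apply div_nonneg _ (by positivity)
      have := mul_nonneg hK (sub_nonneg.2 hqq)
      linarith
    nlinarith [mul_nonneg h6 hE.le]
  have h7 := key (left_mem_Icc.2 hxs) (right_mem_Icc.2 hxs) hxs
  simp only [Y.lo_init] at h7
  rw [hs, Y.lo_S x h2, Real.sqrt_zero, sub_zero] at h7
  have h8 : 0 < (√w1 - √w2) * Real.exp (Y.L / 2 * x) :=
    mul_pos (sub_pos.2 (Real.sqrt_lt_sqrt h2 h)) (Real.exp_pos _)
  have h9 := (mul_pos_iff_of_pos_right (Real.exp_pos _)).1 (h8.trans_le h7)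
  have h10 : 0 < Y.lo x w1 (Y.S x w2) := Real.sqrt_pos.1 h9
  by_contra hcon
  push Not at hcon
  rcases lt_or_eq_of_le hcon with h' | h'
  · have := Y.lo_neg h1 h'
    exact absurd h10 (not_lt.2 this.le)
  · rw [← hs, ← h', Y.lo_S x h1] at h10
    exact lt_irrefl _ h10

lemma S_inj {x w1 w2 : ℝ} (h1 : 0 ≤ w1) (h2 : 0 ≤ w2) (h : Y.S x w1 = Y.S x w2) : w1 = w2 := by
  rcases lt_trichotomy w1 w2 with h' | h' | h'
  · exact absurd h (Y.S_strict x h1 h').ne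
  · exact h'
  · exact absurd h (Y.S_strict x h2 h').ne'

/-- the lower solution through a point passes through every point with the same S -/
lemma lo_of_S {x x' w w' : ℝ} (hw : 0 ≤ w) (hw' : 0 ≤ w') (hx : x ≤ x') (h : Y.S x w = Y.S x' w') :
    Y.lo x w x' = w' := by
  have h1 : x' ≤ Y.S x w := h ▸ Y.le_S x' w'
  have h2 : 0 ≤ Y.lo x w x' := by
    rcases lt_or_eq_of_le h1 with h3 | h3
    · exact (Y.lo_pos hw hx h3).le
    · rw [h3, Y.lo_S x hw]
  have h3 := Y.S_along (Y.lo_lo x w x' hx) hx h2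
  rw [Y.lo_init] at h3
  exact Y.S_inj h2 hw' (h3.symm.trans h)

lemma S_u_strict {r x x' : ℝ} (hx : x < x') (hr : x' ≤ r) : Y.S x (Y.u r x) < Y.S x' (Y.u r x') := by
  have hu := Y.u_nonneg (hx.le.trans hr)
  have hu' := Y.u_nonneg hr
  have l := Y.lo_lo x (Y.u r x) x' hx.le
  set g := Y.lo x (Y.u r x) with hg
  have hg0 : g x = Y.u r x := Y.lo_init _ _
  have hd : ∀ t ∈ Ioo x x', HasDerivAt (fun t => g t - Y.u r t)
      ((- Y.Gm t √(g t) - Y.K t) - (Y.Gp t √(Y.u r t) - Y.K t)) t :=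
    fun t ht => (l.2 t ht).sub (Y.u_deriv r t)
  have hcont : ContinuousOn (fun t => g t - Y.u r t) (Icc x x') := l.1.sub (Y.u_cont r).continuousOn
  have key : AntitoneOn (fun t => g t - Y.u r t) (Icc x x') := by
    apply antitoneOn_of_hasDerivWithinAt_nonpos (convex_Icc _ _) hcont
      (fun t ht => (hd t (by rwa [interior_Icc] at ht)).hasDerivWithinAt)
    intro t ht
    have := Y.hm.nonneg t (Real.sqrt_nonneg (g t))
    have := Y.hp.nonneg t (Real.sqrt_nonneg (Y.u r t))
    linarith
  have hlt : g x' < Y.u r x' := by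
    have h0 := key (left_mem_Icc.2 hx.le) (right_mem_Icc.2 hx.le) hx.le
    simp only [hg0, sub_self] at h0
    refine lt_of_le_of_ne (by linarith) (fun heq => ?_)
    have hconst : ∀ t ∈ Icc x x', g t - Y.u r t = 0 := by
      intro t ht
      have h1 := key (left_mem_Icc.2 hx.le) ht ht.1
      have h2 := key ht (right_mem_Icc.2 hx.le) ht.2
      simp only [hg0, sub_self, heq] at h1 h2
      linarith
    have hz : ∀ t ∈ Ioo x x', t = 0 := by
      intro t ht
      have h1 : HasDerivAt (fun t => g t - Y.u r t) 0 t := by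
        apply (hasDerivAt_const t (0:ℝ)).congr_of_eventuallyEq
        filter_upwards [Ioo_mem_nhds ht.1 ht.2] with y hy using hconst y (Ioo_subset_Icc_self hy)
      have h2 := h1.unique (hd t ht)
      have h3 := Y.hm.nonneg t (Real.sqrt_nonneg (g t))
      have h4 := Y.hp.ge t (Real.sqrt_nonneg (Y.u r t))
      have h5 : √(Y.u r t) = 0 := by
        have := Real.sqrt_nonneg (Y.u r t)
        have hb := Y.hp.b0pos
        by_contra hne
        have : 0 < Y.b0 * √(Y.u r t) := mul_pos hb (lt_of_le_of_ne this (Ne.symm hne))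
        linarith
      have h6 := (Real.sqrt_eq_zero (Y.u_nonneg (ht.2.le.trans hr))).1 h5
      exact Y.u_eq_zero (ht.2.trans_le hr) h6
    have h1 := hz ((2 * x + x') / 3) ⟨by linarith, by linarith⟩
    have h2 := hz ((x + 2 * x') / 3) ⟨by linarith, by linarith⟩
    linarith
  rcases lt_or_ge (g x') 0 with hneg | hpos
  · have : Y.S x (Y.u r x) < x' := by
      by_contra hcon
      push Not at hcon
      rcases lt_or_eq_of_le hcon with h | h
      · exact absurd (Y.lo_pos hu hx.le h) (not_lt.2 hneg.le)
      · have := Y.lo_S x hu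
        rw [← h] at this
        exact hneg.ne this
    exact this.trans_le (Y.le_S _ _)
  · have := Y.S_along l hx.le hpos
    rw [hg0] at this
    rw [this]
    exact Y.S_strict x' hpos hlt

lemma S_u_mono {r x x' : ℝ} (hx : x ≤ x') (hr : x' ≤ r) : Y.S x (Y.u r x) ≤ Y.S x' (Y.u r x') := by
  rcases lt_or_eq_of_le hx with h | h
  · exact (Y.S_u_strict h hr).le
  · rw [h]

lemma S_u_le {r x : ℝ} (hr : x ≤ r) : Y.S x (Y.u r x) ≤ r := by
  have := Y.S_u_mono hr le_rfl
  rwa [Y.u_self, Y.S_zero] at this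

lemma S_u_bound {r x : ℝ} (hr : x ≤ r) :
    (Y.b0 / 2 * (Y.S x (Y.u r x) - x)) ^ 2 ≤ Y.u r (Y.S x (Y.u r x)) := by
  have hu := Y.u_nonneg hr
  set s := Y.S x (Y.u r x) with hs
  have hxs : x ≤ s := Y.le_S _ _
  have l := Y.lo_lo x (Y.u r x) s hxs
  have hgs : Y.lo x (Y.u r x) s = 0 := Y.lo_S x hu
  have hpos : ∀ t ∈ Ioo x s, 0 < Y.lo x (Y.u r x) t := fun t ht => Y.lo_pos hu ht.1.le ht.2
  set g := Y.lo x (Y.u r x) with hg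
  have hg0 : g x = Y.u r x := Y.lo_init _ _
  have hsq := l.sqrt_anti hpos
  have key : AntitoneOn (fun t => (g t - Y.u r t) - (Y.b0 / 2 * (s - t)) ^ 2) (Icc x s) := by
    apply antitoneOn_of_hasDerivWithinAt_nonpos (convex_Icc _ _)
      (f' := fun t => ((- Y.Gm t √(g t) - Y.K t) - (Y.Gp t √(Y.u r t) - Y.K t)) + Y.b0 ^ 2 / 2 * (s - t))
    · exact (l.1.sub (Y.u_cont r).continuousOn).sub (by fun_prop)
    · intro t ht
      rw [interior_Icc] at ht
      have h1 := (((hasDerivAt_id t).const_sub s).const_mul (Y.b0 / 2)).pow 2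
      have h2 := ((l.2 t ht).sub (Y.u_deriv r t)).sub h1
      refine (h2.congr_deriv ?_).hasDerivWithinAt
      simp; ring
    · intro t ht
      rw [interior_Icc] at ht
      have h1 := Y.hm.ge t (Real.sqrt_nonneg (g t))
      have h2 := Y.hp.nonneg t (Real.sqrt_nonneg (Y.u r t))
      have h3 := hsq (Ioo_subset_Icc_self ht) (right_mem_Icc.2 hxs) ht.2.le
      simp only [hgs, Real.sqrt_zero] at h3
      have hb := Y.hm.b0pos
      have h4 : Y.b0 * (Y.b0 / 2 * (s - t)) ≤ Y.b0 * √(g t) :=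
        mul_le_mul_of_nonneg_left (by linarith) hb.le
      nlinarith
  have := key (left_mem_Icc.2 hxs) (right_mem_Icc.2 hxs) hxs
  simp only [hg0, hgs, sub_self] at this
  nlinarith

lemma exists_pt {r s : ℝ} (h : s ≤ r) : ∃ x, x ≤ s ∧ Y.S x (Y.u r x) = s := by
  obtain ⟨B, hB⟩ := (isCompact_Icc (a := s) (b := r)).exists_bound_of_continuousOn
    (Y.u_cont r).continuousOn
  have hb := Y.hm.b0pos
  have hB0 : 0 ≤ B := (norm_nonneg _).trans (hB s ⟨le_rfl, h⟩)
  set x0 := s - 2 / Y.b0 * (√B + 1) with hx0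
  have hx0s : x0 < s := by
    have := Real.sqrt_nonneg B
    have : 0 < 2 / Y.b0 * (√B + 1) := by positivity
    linarith
  have hlow : Y.S x0 (Y.u r x0) ≤ s := by
    by_contra hcon
    push Not at hcon
    have h1 := Y.S_u_bound (hx0s.le.trans h)
    have h2 := Y.S_u_le (hx0s.le.trans h)
    have h3 := (le_abs_self _).trans (hB _ ⟨hcon.le, h2⟩)
    have h4 : √B + 1 ≤ Y.b0 / 2 * (Y.S x0 (Y.u r x0) - x0) := by
      have : Y.b0 / 2 * (s - x0) = √B + 1 := by rw [hx0]; field_simp; ring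
      rw [← this]
      exact mul_le_mul_of_nonneg_left (by linarith) (by positivity)
    have h5 := Real.sq_sqrt hB0
    have h6 := Real.sqrt_nonneg B
    nlinarith
  have hc : Continuous fun x => Y.S x (Y.u r x) :=
    Y.S_cont.comp (continuous_id.prodMk (Y.u_cont r))
  obtain ⟨x, hx, hx'⟩ := intermediate_value_Icc hx0s.le hc.continuousOn ⟨hlow, Y.le_S _ _⟩
  exact ⟨x, hx.2, hx'⟩
end Sys
namespace Sys

/-- P lies on the nonnegative part of the upper curve with label r -/
def On (Y : Sys) (r : ℝ) (P : ℝ × ℝ) : Prop := P.1 ≤ r ∧ P.2 = Y.u r P.1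

lemma On.nonneg {Y : Sys} {r P} (h : Y.On r P) : 0 ≤ P.2 := by rw [h.2]; exact Y.u_nonneg h.1

lemma On.S_le {Y : Sys} {r P} (h : Y.On r P) : Y.S P.1 P.2 ≤ r := by rw [h.2]; exact Y.S_u_le h.1

lemma On.inj {Y : Sys} {r P Q} (h : Y.On r P) (h' : Y.On r Q) (hS : Y.S P.1 P.2 = Y.S Q.1 Q.2) :
    P = Q := by
  rw [h.2, h'.2] at hS
  have : P.1 = Q.1 := by
    rcases lt_trichotomy P.1 Q.1 with h1 | h1 | h1
    · exact absurd hS (Y.S_u_strict h1 h'.1).ne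
    · exact h1
    · exact absurd hS (Y.S_u_strict h1 h.1).ne'
  ext
  · exact this
  · rw [h.2, h'.2, this]

lemma exists_On (Y : Sys) {P : ℝ × ℝ} (h : 0 ≤ P.2) : ∃ r, Y.On r P := by
  obtain ⟨r, h1, h2⟩ := Y.u_surj (x := P.1) h
  exact ⟨r, h1, h2.symm⟩

def Rel (Y Z : Sys) (φ : ℝ ≃o ℝ) (P Q : ℝ × ℝ) : Prop :=
  ∃ r, Y.On r P ∧ Z.On (φ r) Q ∧ Z.S Q.1 Q.2 = φ (Y.S P.1 P.2)

/-- compatible relabelling -/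
def Good (Y Z : Sys) (φ : ℝ ≃o ℝ) : Prop := φ 0 = 0 ∧ φ Y.σ = Z.σ

lemma Good.symm {Y Z φ} (h : Good Y Z φ) : Good Z Y φ.symm :=
  ⟨by rw [OrderIso.symm_apply_eq, h.1], by rw [OrderIso.symm_apply_eq, h.2]⟩

lemma Rel.symm {Y Z φ P Q} (h : Rel Y Z φ P Q) : Rel Z Y φ.symm Q P := by
  obtain ⟨r, h1, h2, h3⟩ := h
  exact ⟨φ r, h2, by simpa using h1, by rw [h3]; simp⟩

lemma exists_Rel (Y Z : Sys) (φ : ℝ ≃o ℝ) {P : ℝ × ℝ} (h : 0 ≤ P.2) : ∃ Q, Rel Y Z φ P Q := by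
  obtain ⟨r, hr⟩ := Y.exists_On h
  obtain ⟨x, h1, h2⟩ := Z.exists_pt (φ.monotone hr.S_le)
  exact ⟨(x, Z.u (φ r) x), r, hr, ⟨h1.trans (φ.monotone hr.S_le), rfl⟩, h2⟩

lemma Rel.uniq {Y Z φ P Q Q'} (hg : Good Y Z φ) (h : Rel Y Z φ P Q) (h' : Rel Y Z φ P Q') : Q = Q' := by
  obtain ⟨r, h1, h2, h3⟩ := h
  obtain ⟨r', h1', h2', h3'⟩ := h'
  wlog hr : r ≤ r' generalizing r r' Q Q' with H
  · exact (H r' h1' h2' h3' r h1 h2 h3 (le_of_not_ge hr)).symm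
  rcases lt_or_eq_of_le hr with hlt | heq
  · obtain ⟨m1, m2, m3⟩ := Y.u_meet hlt h1.1 (h1.2.symm.trans h1'.2)
    have hS0 : Y.S P.1 P.2 ≤ 0 := by
      have := Y.S_u_mono m1 m2
      rw [← h1.2, (Y.σ_iff m2).2 (hr.trans m3), Y.S_zero] at this
      exact this
    have hφS : φ (Y.S P.1 P.2) ≤ 0 := by rw [← hg.1]; exact φ.monotone hS0
    have hQ' : Q'.1 ≤ 0 := (Z.le_S _ _).trans (h3'.trans_le hφS)
    have e1 : 0 ≤ φ r := by rw [← hg.1]; exact φ.monotone m2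
    have e2 : φ r' ≤ Z.σ := by rw [← hg.2]; exact φ.monotone m3
    have e3 : φ r ≤ φ r' := φ.monotone hr
    have : Z.On (φ r) Q' := ⟨hQ'.trans e1, by
      rw [h2'.2]; exact Z.u_same (e1.trans e3) e1 e2 (e3.trans e2) hQ'⟩
    exact h2.inj this (h3.trans h3'.symm)
  · subst heq
    exact h2.inj h2' (h3.trans h3'.symm)

lemma On_bdd (Y : Sys) (R s0 : ℝ) : ∃ C, ∀ r Q, Y.On r Q → r ≤ R → s0 ≤ Y.S Q.1 Q.2 → ‖Q‖ ≤ C := by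
  obtain ⟨B, hB⟩ := (isCompact_Icc (a := s0) (b := R)).exists_bound_of_continuousOn
    (Y.u_cont R).continuousOn
  have hb := Y.hm.b0pos
  set x0 := s0 - 2 / Y.b0 * (B + 1) with hx0
  obtain ⟨B', hB'⟩ := (isCompact_Icc (a := x0) (b := R)).exists_bound_of_continuousOn
    (Y.u_cont R).continuousOn
  refine ⟨max (max |x0| |R|) B', fun r Q hQ hr hs => ?_⟩
  have hSr := hQ.S_le
  have h1 := Y.S_u_bound hQ.1
  rw [← hQ.2] at h1
  set s := Y.S Q.1 Q.2
  have h2 : Y.u r s ≤ B := (Y.u_mono s hr).trans ((le_abs_self _).trans (hB s ⟨hs, hSr.trans hr⟩))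
  have h3 : Y.b0 / 2 * (s - Q.1) ≤ B + 1 := by nlinarith [sq_nonneg (Y.b0 / 2 * (s - Q.1) - 1)]
  have hx : x0 ≤ Q.1 := by
    have : 2 / Y.b0 * (Y.b0 / 2 * (s - Q.1)) ≤ 2 / Y.b0 * (B + 1) :=
      mul_le_mul_of_nonneg_left h3 (by positivity)
    have h4 : 2 / Y.b0 * (Y.b0 / 2 * (s - Q.1)) = s - Q.1 := by field_simp
    linarith
  have hxR : Q.1 ≤ R := hQ.1.trans hr
  rw [Prod.norm_def]
  apply max_le
  · refine le_trans ?_ (le_max_left _ _)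
    exact abs_le_max_abs_abs hx hxR
  · refine le_trans ?_ (le_max_right _ _)
    rw [Real.norm_of_nonneg hQ.nonneg, hQ.2]
    exact (Y.u_mono _ hr).trans ((le_abs_self _).trans (hB' _ ⟨hx, hxR⟩))

open Classical in
/-- the homeomorphism on the nonnegative part -/
def H0 (Y Z : Sys) (φ : ℝ ≃o ℝ) (P : ℝ × ℝ) : ℝ × ℝ :=
  if h : ∃ Q, Rel Y Z φ P Q then h.choose else 0

lemma H0_rel (Y Z : Sys) (φ : ℝ ≃o ℝ) {P : ℝ × ℝ} (h : 0 ≤ P.2) : Rel Y Z φ P (H0 Y Z φ P) := by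
  have h' := exists_Rel Y Z φ h
  unfold H0
  rw [dif_pos h']
  exact h'.choose_spec

lemma H0_cont {Y Z φ} (hg : Good Y Z φ) : ContinuousOn (H0 Y Z φ) {P : ℝ × ℝ | 0 ≤ P.2} := by
  intro P hP
  have hex : ∀ P : ℝ × ℝ, ∃ r, 0 ≤ P.2 → Y.On r P ∧ Z.On (φ r) (H0 Y Z φ P) ∧
      Z.S (H0 Y Z φ P).1 (H0 Y Z φ P).2 = φ (Y.S P.1 P.2) := by
    intro P
    by_cases h : 0 ≤ P.2
    · obtain ⟨r, hr⟩ := H0_rel Y Z φ h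
      exact ⟨r, fun _ => hr⟩
    · exact ⟨0, fun h' => absurd h' h⟩
  choose r hr using hex
  set X := |P.1| + 1 with hX
  set W := P.2 + 1 with hW
  obtain ⟨R, hR⟩ := Y.u_big X W
  obtain ⟨C, hC⟩ := Z.On_bdd (φ R) (φ (-X))
  rw [ContinuousWithinAt, tendsto_iff_ultrafilter]
  intro U hU
  have hU0 : {P : ℝ × ℝ | 0 ≤ P.2} ∈ (U : Filter (ℝ × ℝ)) := hU self_mem_nhdsWithin
  have hUP : (U : Filter (ℝ × ℝ)) ≤ nhds P := hU.trans nhdsWithin_le_nhds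
  have hU1 : {P' : ℝ × ℝ | |P'.1| < X ∧ P'.2 < W} ∈ (U : Filter (ℝ × ℝ)) := by
    apply hUP
    apply IsOpen.mem_nhds
    · exact (isOpen_lt continuous_fst.abs continuous_const).inter
        (isOpen_lt continuous_snd continuous_const)
    · exact ⟨by rw [hX]; linarith, by rw [hW]; linarith⟩
  have hcomp : IsCompact (Metric.closedBall (0 : ℝ × ℝ) C ×ˢ Icc (-X) R) :=
    (isCompact_closedBall _ _).prod isCompact_Icc
  have hmem : Metric.closedBall (0 : ℝ × ℝ) C ×ˢ Icc (-X) R ∈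
      (U.map (fun P => (H0 Y Z φ P, r P)) : Filter ((ℝ × ℝ) × ℝ)) := by
    rw [Ultrafilter.coe_map, mem_map]
    filter_upwards [hU0, hU1] with P' h0 h1
    obtain ⟨g1, g2, g3⟩ := hr P' h0
    have hrR : r P' ≤ R := by
      by_contra hcon
      have h5 := hR P'.1 (abs_le.1 h1.1.le) (r P') (le_of_not_ge hcon)
      rw [← g1.2] at h5
      exact absurd h1.2 (not_lt.2 h5.le)
    have hS : -X ≤ Y.S P'.1 P'.2 := (abs_le.1 h1.1.le).1.trans (Y.le_S _ _)
    refine ⟨?_, (hS.trans g1.S_le), hrR⟩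
    rw [mem_closedBall_zero_iff]
    exact hC (φ (r P')) _ g2 (φ.monotone hrR) (by rw [g3]; exact φ.monotone hS)
  obtain ⟨⟨Q, r'⟩, -, hlim⟩ := hcomp.ultrafilter_le_nhds _ (le_principal_iff.2 hmem)
  have hlim' : Tendsto (fun P => (H0 Y Z φ P, r P)) U (nhds (Q, r')) := hlim
  have hQ : Tendsto (fun P => H0 Y Z φ P) U (nhds Q) :=
    (continuous_fst.tendsto (Q, r')).comp hlim'
  have hr' : Tendsto r U (nhds r') := (continuous_snd.tendsto (Q, r')).comp hlim'
  have hid : Tendsto (fun P : ℝ × ℝ => P) U (nhds P) := hUP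
  have hf1 : Tendsto (fun P : ℝ × ℝ => P.1) U (nhds P.1) := (continuous_fst.tendsto P).comp hid
  have hf2 : Tendsto (fun P : ℝ × ℝ => P.2) U (nhds P.2) := (continuous_snd.tendsto P).comp hid
  have hq1 := (continuous_fst.tendsto Q).comp hQ
  have hq2 := (continuous_snd.tendsto Q).comp hQ
  have hφr : Tendsto (fun P => φ (r P)) U (nhds (φ r')) := (φ.continuous.tendsto r').comp hr'
  have hrel : Rel Y Z φ P Q := by
    refine ⟨r', ⟨?_, ?_⟩, ⟨?_, ?_⟩, ?_⟩
    · apply le_of_tendsto_of_tendsto hf1 hr'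
      filter_upwards [hU0] with P' h0 using (hr P' h0).1.1
    · refine tendsto_nhds_unique hf2 (((Y.u_jcont.tendsto (r', P.1)).comp (hr'.prodMk_nhds hf1)).congr' ?_)
      filter_upwards [hU0] with P' h0 using (hr P' h0).1.2.symm
    · apply le_of_tendsto_of_tendsto hq1 hφr
      filter_upwards [hU0] with P' h0 using (hr P' h0).2.1.1
    · refine tendsto_nhds_unique hq2 (((Z.u_jcont.tendsto (φ r', Q.1)).comp (hφr.prodMk_nhds hq1)).congr' ?_)
      filter_upwards [hU0] with P' h0 using (hr P' h0).2.1.2.symm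
    · have t1 := (Z.S_cont.tendsto Q).comp hQ
      have t2 := (φ.continuous.tendsto _).comp ((Y.S_cont.tendsto P).comp hid)
      refine tendsto_nhds_unique t1 (t2.congr' ?_)
      filter_upwards [hU0] with P' h0 using (hr P' h0).2.2.symm
  rw [(H0_rel Y Z φ hP).uniq hg hrel]
  exact hQ

/-- the global homeomorphism -/
def H (Y Z : Sys) (φ : ℝ ≃o ℝ) (P : ℝ × ℝ) : ℝ × ℝ := if 0 ≤ P.2 then H0 Y Z φ P else (φ P.1, P.2)

lemma H_rel (Y Z : Sys) (φ : ℝ ≃o ℝ) {P : ℝ × ℝ} (h : 0 ≤ P.2) : Rel Y Z φ P (H Y Z φ P) := by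
  unfold H; rw [if_pos h]; exact H0_rel Y Z φ h

lemma Rel_zero (Y Z : Sys) (φ : ℝ ≃o ℝ) (x : ℝ) : Rel Y Z φ (x, 0) (φ x, 0) :=
  ⟨x, ⟨le_rfl, (Y.u_self x).symm⟩, ⟨le_rfl, (Z.u_self _).symm⟩, by simp [S_zero]⟩

lemma H_cont {Y Z φ} (hg : Good Y Z φ) : Continuous (H Y Z φ) := by
  unfold H
  refine continuous_if_le continuous_const continuous_snd (H0_cont hg) ?_ ?_
  · have := φ.continuous
    exact Continuous.continuousOn (by fun_prop)
  · rintro ⟨x, w⟩ h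
    simp only at h
    subst h
    exact (H0_rel Y Z φ le_rfl).uniq hg (Rel_zero Y Z φ x)

lemma H_inv {Y Z φ} (hg : Good Y Z φ) (P : ℝ × ℝ) : H Z Y φ.symm (H Y Z φ P) = P := by
  by_cases h : 0 ≤ P.2
  · have h1 := H_rel Y Z φ h
    obtain ⟨r, -, h2, -⟩ := id h1
    exact (H_rel Z Y φ.symm h2.nonneg).uniq hg.symm h1.symm
  · unfold H
    simp [h]

lemma H_zero {Y Z φ} (hg : Good Y Z φ) : H Y Z φ 0 = 0 := by
  have h1 := H_rel Y Z φ (P := 0) le_rfl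
  have h2 := Rel_zero Y Z φ 0
  rw [hg.1] at h2
  exact h1.uniq hg h2

def Hh {Y Z φ} (hg : Good Y Z φ) : (ℝ × ℝ) ≃ₜ (ℝ × ℝ) where
  toFun := H Y Z φ
  invFun := H Z Y φ.symm
  left_inv := H_inv hg
  right_inv := fun P => by
    have := H_inv hg.symm P
    simpa using this
  continuous_toFun := H_cont hg
  continuous_invFun := H_cont hg.symm

lemma exists_Good (Y Z : Sys) : ∃ φ, Good Y Z φ := by
  set c := Z.σ / Y.σ with hc
  have hcp : 0 < c := div_pos Z.σ_pos Y.σ_pos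
  let f : ℝ → ℝ := fun s => min s 0 + c * max s 0
  have hmono : StrictMono f := by
    intro a b hab
    simp only [f]
    rcases le_total a 0 with ha | ha <;> rcases le_total b 0 with hb | hb
    · simp only [min_eq_left ha, min_eq_left hb, max_eq_right ha, max_eq_right hb]; linarith
    · simp only [min_eq_left ha, min_eq_right hb, max_eq_right ha, max_eq_left hb]
      rcases lt_or_eq_of_le ha with h | h
      · have := mul_nonneg hcp.le hb
        linarith
      · have := mul_pos hcp (by linarith : 0 < b)
        linarith
    · linarith
    · simp only [min_eq_right ha, min_eq_right hb, max_eq_left ha, max_eq_left hb]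
      have := mul_lt_mul_of_pos_left hab hcp
      linarith
  have hsurj : Function.Surjective f := by
    intro y
    rcases le_total y 0 with hy | hy
    · exact ⟨y, by simp [f, min_eq_left hy, max_eq_right hy]⟩
    · have : 0 ≤ y / c := by positivity
      refine ⟨y / c, ?_⟩
      simp only [f, min_eq_right this, max_eq_left this]
      field_simp
      simp
  refine ⟨hmono.orderIsoOfSurjective f hsurj, ?_, ?_⟩
  · simp [f]
  · have := Y.σ_pos
    simp only [StrictMono.coe_orderIsoOfSurjective, f, min_eq_right this.le, max_eq_left this.le, hc]
    field_simp
    simp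
end Sys

lemma image_Ioo_eq {f : ℝ → ℝ} {c d : ℝ} (hcd : c < d) (hc : ContinuousOn f (Ioo c d))
    (hi : InjOn f (Ioo c d)) (hb : Bornology.IsBounded (f '' Ioo c d)) :
    ∃ a b, a < b ∧ f '' Ioo c d = Ioo a b := by
  have hconn : IsConnected (f '' Ioo c d) := (isConnected_Ioo hcd).image f hc
  have key : ∀ x ∈ Ioo c d, (∃ y ∈ Ioo c d, f y < f x) ∧ (∃ y ∈ Ioo c d, f x < f y) := by
    intro x hx
    have h1 : (c + x) / 2 ∈ Ioo c d := ⟨by linarith [hx.1], by linarith [hx.1, hx.2]⟩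
    have h2 : (x + d) / 2 ∈ Ioo c d := ⟨by linarith [hx.1, hx.2], by linarith [hx.2]⟩
    have h1' : (c + x) / 2 < x := by linarith [hx.1]
    have h2' : x < (x + d) / 2 := by linarith [hx.2]
    rcases ContinuousOn.strictMonoOn_of_injOn_Ioo hcd hc hi with h | h
    · exact ⟨⟨_, h1, h h1 hx h1'⟩, ⟨_, h2, h hx h2 h2'⟩⟩
    · exact ⟨⟨_, h2, h hx h2 h2'⟩, ⟨_, h1, h h1 hx h1'⟩⟩
  have hsub := IsConnected.Ioo_csInf_csSup_subset hconn hb.bddBelow hb.bddAbove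
  have heq : f '' Ioo c d = Ioo (sInf (f '' Ioo c d)) (sSup (f '' Ioo c d)) := by
    apply Subset.antisymm _ hsub
    rintro _ ⟨x, hx, rfl⟩
    obtain ⟨⟨y, hy, hy'⟩, ⟨z, hz, hz'⟩⟩ := key x hx
    exact ⟨(csInf_le hb.bddBelow (mem_image_of_mem f hy)).trans_lt hy',
      hz'.trans_le (le_csSup hb.bddAbove (mem_image_of_mem f hz))⟩
  refine ⟨_, _, ?_, heq⟩
  obtain ⟨x, hx⟩ := hconn.nonempty
  rw [heq] at hx
  exact hx.1.trans hx.2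

namespace Sys

/-- right-hand side of the upper (true) / lower (false) field -/
def F (Y : Sys) (τ : Bool) (x w : ℝ) : ℝ :=
  if τ then Y.Gp x √w - Y.K x else -Y.Gm x √w - Y.K x

def Arc (Y : Sys) (τ : Bool) (g : ℝ → ℝ) (c d : ℝ) : Prop :=
  ∀ x ∈ Ioo c d, 0 < g x ∧ HasDerivAt g (Y.F τ x (g x)) x

/-- graph over an open interval -/
def Gr (g : ℝ → ℝ) (c d : ℝ) : Set (ℝ × ℝ) := (fun x => (x, g x)) '' Ioo c d

def Curve (Y : Sys) (g : ℝ → ℝ) (c d : ℝ) : Prop :=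
  c < d ∧ ((∃ τ, Y.Arc τ g c d) ∨ (c < 0 ∧ 0 < d ∧ g 0 = 0 ∧ ContinuousAt g 0 ∧
    (∃ τ, Y.Arc τ g c 0) ∧ (∃ τ, Y.Arc τ g 0 d)))

variable {Y Z : Sys} {φ : ℝ ≃o ℝ}

lemma Arc.cont {τ g c d} (h : Y.Arc τ g c d) : ContinuousOn g (Ioo c d) :=
  fun x hx => (h x hx).2.continuousAt.continuousWithinAt

lemma Arc.up {g c d a b} (h : Y.Arc true g c d) (ha : c < a) (hb : b < d) : Y.Up g a b :=
  ⟨h.cont.mono (fun x hx => ⟨ha.trans_le hx.1, hx.2.trans_lt hb⟩),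
   fun x hx => by simpa [F] using (h x ⟨ha.trans hx.1, hx.2.trans hb⟩).2⟩

lemma Arc.lo {g c d a b} (h : Y.Arc false g c d) (ha : c < a) (hb : b < d) : Y.Lo g a b :=
  ⟨h.cont.mono (fun x hx => ⟨ha.trans_le hx.1, hx.2.trans_lt hb⟩),
   fun x hx => by simpa [F] using (h x ⟨ha.trans hx.1, hx.2.trans hb⟩).2⟩

lemma Arc.on {g c d} (h : Y.Arc true g c d) (hcd : c < d) :
    ∃ r, ∀ x ∈ Ioo c d, Y.On r (x, g x) := by
  obtain ⟨x0, hx0⟩ := nonempty_Ioo.2 hcd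
  obtain ⟨r, hr, hru⟩ := Y.u_surj (x := x0) (h x0 hx0).1.le
  refine ⟨r, fun x hx => ?_⟩
  rcases le_total x x0 with hxx | hxx
  · refine ⟨hxx.trans hr, ?_⟩
    exact ((h.up hx.1 hx0.2).uniq (Y.u_up r x x0) hxx hru.symm)
  · obtain ⟨r', hr', hru'⟩ := Y.u_surj (x := x) (h x hx).1.le
    have hall : ∀ t, x0 ≤ t → t ≤ x → g t = Y.u r' t := fun t h1 h2 =>
      (h.up (hx0.1.trans_le h1) hx.2).uniq (Y.u_up r' t x) h2 hru'.symm
    have h0 : Y.u r x0 = Y.u r' x0 := by rw [hru, hall x0 le_rfl hxx]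
    have : r = r' ∨ (x0 ≤ 0 ∧ 0 ≤ r ∧ 0 ≤ r' ∧ r ≤ Y.σ ∧ r' ≤ Y.σ) := by
      rcases lt_trichotomy r r' with hlt | heq | hlt
      · obtain ⟨a, b, c⟩ := Y.u_meet hlt hr h0
        exact Or.inr ⟨a, b, b.trans hlt.le, hlt.le.trans c, c⟩
      · exact Or.inl heq
      · obtain ⟨a, b, c⟩ := Y.u_meet hlt (hxx.trans hr') h0.symm
        exact Or.inr ⟨a, b.trans hlt.le, b, c, hlt.le.trans c⟩
    rcases this with rfl | ⟨a, b, b', e, e'⟩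
    · exact ⟨hr', hru'.symm⟩
    · rcases le_or_gt x 0 with hx0' | hx0'
      · exact ⟨hx0'.trans b, by simpa [hru'] using Y.u_same b' b e' e hx0'⟩
      · exfalso
        have h1 := hall 0 a hx0'.le
        rw [(Y.σ_iff b').2 e'] at h1
        exact absurd (h 0 ⟨hx0.1.trans_le a, hx0'.trans hx.2⟩).1 (by rw [h1]; exact lt_irrefl _)

lemma Arc.S_eq {g c d} (h : Y.Arc false g c d) (hcd : c < d) :
    ∃ s, ∀ x ∈ Ioo c d, Y.S x (g x) = s := by
  obtain ⟨x0, hx0⟩ := nonempty_Ioo.2 hcd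
  refine ⟨Y.S x0 (g x0), fun x hx => ?_⟩
  rcases le_total x x0 with hxx | hxx
  · exact Y.S_along (h.lo hx.1 hx0.2) hxx (h x0 hx0).1.le
  · exact (Y.S_along (h.lo hx0.1 hx.2) hxx (h x hx).1.le).symm

lemma Arc.lim {τ g c d} (h : Y.Arc τ g c d) (hcd : c < d) :
    ∃ l, Tendsto g (nhdsWithin d (Iio d)) (nhds l) := by
  cases τ
  · obtain ⟨x0, hx0⟩ := nonempty_Ioo.2 hcd
    have hlo := Y.lo_lo x0 (g x0) d hx0.2.le
    refine ⟨Y.lo x0 (g x0) d, ?_⟩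
    have h1 : Tendsto (Y.lo x0 (g x0)) (nhdsWithin d (Iio d)) (nhds (Y.lo x0 (g x0) d)) := by
      have := (hlo.1 d (right_mem_Icc.2 hx0.2.le)).mono (Ioo_subset_Icc_self)
      rwa [ContinuousWithinAt, nhdsWithin_Ioo_eq_nhdsLT hx0.2] at this
    refine h1.congr' ?_
    filter_upwards [Ioo_mem_nhdsLT hx0.2] with x hx
    exact (Y.lo_lo x0 (g x0) x hx.1.le).uniq (h.lo hx0.1 hx.2) hx.1.le (Y.lo_init _ _)
  · obtain ⟨r, hr⟩ := h.on hcd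
    refine ⟨Y.u r d, ((Y.u_cont r).tendsto d |>.mono_left nhdsWithin_le_nhds).congr' ?_⟩
    filter_upwards [Ioo_mem_nhdsLT hcd] with x hx
    exact (hr x hx).2.symm

lemma Arc.lim_left {g c d} (h : Y.Arc true g c d) (hcd : c < d) :
    ∃ l, Tendsto g (nhdsWithin c (Ioi c)) (nhds l) := by
  obtain ⟨r, hr⟩ := h.on hcd
  refine ⟨Y.u r c, ((Y.u_cont r).tendsto c |>.mono_left nhdsWithin_le_nhds).congr' ?_⟩
  filter_upwards [Ioo_mem_nhdsGT hcd] with x hx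
  exact (hr x hx).2.symm

lemma H_axis (hg : Good Y Z φ) (x : ℝ) : H Y Z φ (x, 0) = (φ x, 0) :=
  (H_rel Y Z φ (P := (x, 0)) le_rfl).uniq hg (Rel_zero Y Z φ x)

lemma H_pos (hg : Good Y Z φ) {P : ℝ × ℝ} (h : 0 < P.2) : 0 < (H Y Z φ P).2 := by
  obtain ⟨r, _, h2, _⟩ := H_rel Y Z φ h.le
  refine lt_of_le_of_ne h2.nonneg fun h0 => ?_
  have h1 : H Y Z φ P = H Y Z φ (φ.symm (H Y Z φ P).1, 0) := by
    rw [H_axis hg]; ext <;> simp [← h0]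
  have := (Hh hg).injective (a₁ := P) h1
  rw [this] at h
  exact lt_irrefl _ h

lemma H_S {P : ℝ × ℝ} (h : 0 ≤ P.2) : Z.S (H Y Z φ P).1 (H Y Z φ P).2 = φ (Y.S P.1 P.2) := by
  obtain ⟨r, _, _, h3⟩ := H_rel Y Z φ h
  exact h3

lemma H_on (hg : Good Y Z φ) {r : ℝ} {P : ℝ × ℝ} (h : Y.On r P) : Z.On (φ r) (H Y Z φ P) := by
  obtain ⟨x, hx, hx'⟩ := Z.exists_pt (r := φ r) (s := φ (Y.S P.1 P.2)) (φ.monotone h.S_le)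
  have hR : Rel Y Z φ P (x, Z.u (φ r) x) :=
    ⟨r, h, ⟨hx.trans (φ.monotone h.S_le), rfl⟩, hx'⟩
  rw [(H_rel Y Z φ h.nonneg).uniq hg hR]
  exact ⟨hx.trans (φ.monotone h.S_le), rfl⟩

lemma bdd_image {h : ℝ × ℝ → ℝ × ℝ} (hc : Continuous h) {A : Set (ℝ × ℝ)}
    (hA : Bornology.IsBounded A) : Bornology.IsBounded (h '' A) :=
  ((hA.isCompact_closure.image hc).isBounded).subset (image_mono subset_closure)

lemma gr_img (hg : Good Y Z φ) {g g2 : ℝ → ℝ} {c d : ℝ} (hcd : c < d)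
    (hcont : ContinuousOn g (Ioo c d))
    (hb : Bornology.IsBounded (Gr g c d))
    (h2 : ∀ x ∈ Ioo c d, (H Y Z φ (x, g x)).2 = g2 (H Y Z φ (x, g x)).1) :
    ∃ c2 d2, c2 < d2 ∧ (fun x => (H Y Z φ (x, g x)).1) '' Ioo c d = Ioo c2 d2 ∧
      H Y Z φ '' Gr g c d = Gr g2 c2 d2 := by
  have hbb : Bornology.IsBounded ((fun x => (H Y Z φ (x, g x)).1) '' Ioo c d) := by
    have := (bdd_image (H_cont hg) hb).image_fst
    simpa [Gr, image_image] using this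
  have hcc : ContinuousOn (fun x => (H Y Z φ (x, g x)).1) (Ioo c d) :=
    continuous_fst.comp_continuousOn ((H_cont hg).comp_continuousOn (continuousOn_id.prodMk hcont))
  obtain ⟨c2, d2, hlt, heq⟩ := image_Ioo_eq hcd hcc (by
    intro x hx y hy hxy
    have hxy : (H Y Z φ (x, g x)).1 = (H Y Z φ (y, g y)).1 := hxy
    have : H Y Z φ (x, g x) = H Y Z φ (y, g y) := by
      apply Prod.ext hxy
      rw [h2 x hx, h2 y hy, hxy]
    have := (Hh hg).injective (a₁ := (x, g x)) (a₂ := (y, g y)) this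
    exact congrArg Prod.fst this) hbb
  refine ⟨c2, d2, hlt, heq, ?_⟩
  rw [Gr, Gr, ← heq, image_image, image_image]
  refine image_congr fun x hx => ?_
  exact Prod.ext rfl (h2 x hx)

lemma arc_img (hg : Good Y Z φ) {τ : Bool} {g : ℝ → ℝ} {c d : ℝ} (hcd : c < d)
    (h : Y.Arc τ g c d) (hb : Bornology.IsBounded (Gr g c d)) :
    ∃ g2 c2 d2, c2 < d2 ∧ Z.Arc τ g2 c2 d2 ∧ H Y Z φ '' Gr g c d = Gr g2 c2 d2 ∧
      (fun x => (H Y Z φ (x, g x)).1) '' Ioo c d = Ioo c2 d2 := by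
  cases τ
  · obtain ⟨s, hs⟩ := h.S_eq hcd
    classical
    set g2 : ℝ → ℝ := fun y => if h : ∃ w, 0 ≤ w ∧ Z.S y w = φ s then h.choose else 0 with hg2
    have hg2' : ∀ y w, 0 ≤ w → Z.S y w = φ s → g2 y = w := by
      intro y w hw hS
      have hex : ∃ w, 0 ≤ w ∧ Z.S y w = φ s := ⟨w, hw, hS⟩
      have : g2 y = hex.choose := by simp only [hg2]; rw [dif_pos hex]
      rw [this]
      exact Z.S_inj hex.choose_spec.1 hw (hex.choose_spec.2.trans hS.symm)
    have hx2 : ∀ x ∈ Ioo c d, 0 < (H Y Z φ (x, g x)).2 ∧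
        Z.S (H Y Z φ (x, g x)).1 (H Y Z φ (x, g x)).2 = φ s := fun x hx =>
      ⟨H_pos hg (h x hx).1, by rw [H_S (h x hx).1.le]; simp [hs x hx]⟩
    obtain ⟨c2, d2, hlt, heq, himg⟩ := gr_img hg (g2 := g2) hcd h.cont hb (fun x hx =>
      (hg2' _ _ (hx2 x hx).1.le (hx2 x hx).2).symm)
    refine ⟨g2, c2, d2, hlt, ?_, himg, heq⟩
    have hy : ∀ y ∈ Ioo c2 d2, 0 < g2 y ∧ Z.S y (g2 y) = φ s := by
      intro y hy
      rw [← heq] at hy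
      obtain ⟨x, hx, rfl⟩ := hy
      simp only
      rw [hg2' _ _ (hx2 x hx).1.le (hx2 x hx).2]
      exact hx2 x hx
    intro y hyy
    refine ⟨(hy y hyy).1, ?_⟩
    obtain ⟨y1, hy1⟩ := nonempty_Ioo.2 hyy.1
    obtain ⟨y2, hy2⟩ := nonempty_Ioo.2 hyy.2
    have hm1 : y1 ∈ Ioo c2 d2 := ⟨hy1.1, hy1.2.trans hyy.2⟩
    have hloc : ∀ t ∈ Ioo y1 y2, g2 t = Z.lo y1 (g2 y1) t := by
      intro t ht
      have hmt : t ∈ Ioo c2 d2 := ⟨hy1.1.trans ht.1, ht.2.trans hy2.2⟩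
      exact (Z.lo_of_S (hy y1 hm1).1.le (hy t hmt).1.le ht.1.le
        ((hy y1 hm1).2.trans (hy t hmt).2.symm)).symm
    have hd := (Z.lo_lo y1 (g2 y1) y2 (hy1.2.trans hy2.1).le).2 y ⟨hy1.2, hy2.1⟩
    rw [← hloc y ⟨hy1.2, hy2.1⟩] at hd
    simp only [F, Bool.false_eq_true, if_false]
    refine hd.congr_of_eventuallyEq ?_
    filter_upwards [Ioo_mem_nhds hy1.2 hy2.1] with t ht using hloc t ht
  · obtain ⟨r, hr⟩ := h.on hcd
    obtain ⟨c2, d2, hlt, heq, himg⟩ := gr_img hg (g2 := Z.u (φ r)) hcd h.cont hb (fun x hx =>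
      (H_on hg (hr x hx)).2)
    refine ⟨_, c2, d2, hlt, ?_, himg, heq⟩
    intro y hy
    refine ⟨?_, by simpa [F] using Z.u_deriv (φ r) y⟩
    rw [← heq] at hy
    obtain ⟨x, hx, rfl⟩ := hy
    rw [← (H_on hg (hr x hx)).2]
    exact H_pos hg (h x hx).1

lemma Gr_split {g : ℝ → ℝ} {c d : ℝ} (hc : c < 0) (hd : 0 < d) :
    Gr g c d = Gr g c 0 ∪ {(0, g 0)} ∪ Gr g 0 d := by
  rw [Gr, ← Ioc_union_Ioo_eq_Ioo hc.le hd, ← Ioo_union_right hc, image_union, image_union]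
  simp [Gr]

lemma Gr_congr {g g' : ℝ → ℝ} {c d : ℝ} (h : EqOn g g' (Ioo c d)) : Gr g c d = Gr g' c d :=
  image_congr fun x hx => by rw [h hx]

lemma Arc.congr {τ g g' c d} (h : Y.Arc τ g c d) (he : EqOn g' g (Ioo c d)) : Y.Arc τ g' c d := by
  intro x hx
  rw [he hx]
  exact ⟨(h x hx).1, (h x hx).2.congr_of_eventuallyEq
    (by filter_upwards [Ioo_mem_nhds hx.1 hx.2] with t ht using he ht)⟩

lemma curve_img (hg : Good Y Z φ) {g : ℝ → ℝ} {c d : ℝ}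
    (h : Y.Curve g c d) (hb : Bornology.IsBounded (Gr g c d)) :
    ∃ g2 c2 d2, Z.Curve g2 c2 d2 ∧ H Y Z φ '' Gr g c d = Gr g2 c2 d2 := by
  obtain ⟨hcd, ⟨τ, h⟩ | ⟨hc, hd, hg0, hgc, ⟨τ1, h1⟩, ⟨τ2, h2⟩⟩⟩ := h
  · obtain ⟨g2, c2, d2, hlt, ha, hi, _⟩ := arc_img hg hcd h hb
    exact ⟨g2, c2, d2, ⟨hlt, Or.inl ⟨τ, ha⟩⟩, hi⟩
  have hsplit := Gr_split (g := g) hc hd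
  have hHt : Tendsto (fun x => H Y Z φ (x, g x)) (nhds 0) (nhds 0) := by
    have : ContinuousAt (fun x => H Y Z φ (x, g x)) 0 :=
      (H_cont hg).continuousAt.comp (continuousAt_id.prodMk hgc)
    have h0 := this.tendsto
    simp only [hg0] at h0
    rwa [show ((0 : ℝ), (0 : ℝ)) = 0 from rfl, H_zero hg] at h0
  have hSt : Tendsto (fun x => Y.S x (g x)) (nhds 0) (nhds 0) := by
    have : ContinuousAt (fun x => Y.S x (g x)) 0 :=
      ContinuousAt.comp (x := (0 : ℝ)) (f := fun x => (x, g x)) (g := fun p : ℝ × ℝ => Y.S p.1 p.2)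
      (Y.S_cont.continuousAt) (continuousAt_id.prodMk hgc)
    have h0 := this.tendsto
    rwa [hg0, S_zero] at h0
  have hgt : Tendsto g (nhds 0) (nhds 0) := by
    have := hgc.tendsto
    rwa [hg0] at this
  have hleft : ∀ x ∈ Ioo c 0, (H Y Z φ (x, g x)).1 < 0 := by
    have hS : ∀ x ∈ Ioo c 0, Y.S x (g x) ≤ 0 := by
      cases τ1
      · obtain ⟨s, hs⟩ := h1.S_eq hc
        have : s = 0 := by
          refine tendsto_nhds_unique (f := fun x => Y.S x (g x)) (l := nhdsWithin 0 (Iio 0)) ?_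
            (hSt.mono_left nhdsWithin_le_nhds)
          refine tendsto_const_nhds.congr' ?_
          filter_upwards [Ioo_mem_nhdsLT hc] with x hx using (hs x hx).symm
        intro x hx; rw [hs x hx, this]
      · obtain ⟨r, hr⟩ := h1.on hc
        have hr0 : 0 ≤ r := by
          by_contra hneg
          push Not at hneg
          obtain ⟨x, hx⟩ := nonempty_Ioo.2 (max_lt hc hneg)
          have := (hr x ⟨(le_max_left _ _).trans_lt hx.1, hx.2⟩).1
          have := (le_max_right c r).trans_lt hx.1
          simp at *; linarith
        have hu0 : Y.u r 0 = 0 := by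
          refine tendsto_nhds_unique (f := g) (l := nhdsWithin 0 (Iio 0)) ?_
            (hgt.mono_left nhdsWithin_le_nhds)
          refine ((Y.u_cont r).tendsto 0 |>.mono_left nhdsWithin_le_nhds).congr' ?_
          filter_upwards [Ioo_mem_nhdsLT hc] with x hx using (hr x hx).2.symm
        intro x hx
        have := Y.S_u_mono hx.2.le hr0
        rw [hu0, S_zero] at this
        rw [show g x = _ from (hr x hx).2]; exact this
    intro x hx
    have hp := H_pos hg (P := (x, g x)) (h1 x hx).1
    have h3 := Z.S_strict (H Y Z φ (x, g x)).1 le_rfl hp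
    rw [S_zero, H_S (h1 x hx).1.le] at h3
    have h4 := φ.monotone (hS x hx)
    rw [hg.1] at h4
    exact h3.trans_le h4
  have hτ2 : τ2 = true := by
    cases τ2
    · exfalso
      obtain ⟨s, hs⟩ := h2.S_eq hd
      have : s = 0 := by
        refine tendsto_nhds_unique (f := fun x => Y.S x (g x)) (l := nhdsWithin 0 (Ioi 0)) ?_
          (hSt.mono_left nhdsWithin_le_nhds)
        refine tendsto_const_nhds.congr' ?_
        filter_upwards [Ioo_mem_nhdsGT hd] with x hx using (hs x hx).symm
      obtain ⟨x, hx⟩ := nonempty_Ioo.2 hd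
      have := Y.le_S x (g x)
      rw [hs x hx] at this
      linarith [hx.1]
    · rfl
  subst hτ2
  have hright : ∀ x ∈ Ioo 0 d, 0 < (H Y Z φ (x, g x)).1 := by
    obtain ⟨r, hr⟩ := h2.on hd
    have hu0 : Y.u r 0 = 0 := by
      refine tendsto_nhds_unique (f := g) (l := nhdsWithin 0 (Ioi 0)) ?_
        (hgt.mono_left nhdsWithin_le_nhds)
      refine ((Y.u_cont r).tendsto 0 |>.mono_left nhdsWithin_le_nhds).congr' ?_
      filter_upwards [Ioo_mem_nhdsGT hd] with x hx using (hr x hx).2.symm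
    intro x hx
    have hr0 : 0 ≤ r := hx.1.le.trans (hr x hx).1
    have hrσ := (Y.σ_iff hr0).1 hu0
    have hφr : 0 ≤ φ r := by have := φ.monotone hr0; rwa [hg.1] at this
    have hu0' : Z.u (φ r) 0 = 0 := (Z.σ_iff hφr).2 (by rw [← hg.2]; exact φ.monotone hrσ)
    by_contra hneg
    push Not at hneg
    have hon := H_on hg (hr x hx)
    have hS := H_S (Y := Y) (Z := Z) (φ := φ) (P := (x, g x)) (h2 x hx).1.le
    have hm := Z.S_u_mono hneg hφr
    rw [hu0', S_zero, ← hon.2, hS] at hm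
    have h5 : φ 0 < φ (Y.S x (g x)) := φ.strictMono (hx.1.trans_le (Y.le_S _ _))
    rw [hg.1] at h5
    exact absurd hm (not_le.2 h5)
  have hb1 : Bornology.IsBounded (Gr g c 0) := hb.subset (by
    rw [hsplit]; exact subset_union_left.trans subset_union_left)
  have hb2 : Bornology.IsBounded (Gr g 0 d) := hb.subset (by rw [hsplit]; exact subset_union_right)
  obtain ⟨ga, ca, da, hlta, haa, hia, hxa⟩ := arc_img hg hc h1 hb1
  obtain ⟨gb, cb, db, hltb, hab, hib, hxb⟩ := arc_img hg hd h2 hb2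
  have hHa : ∀ x ∈ Ioo c 0, ga (H Y Z φ (x, g x)).1 = (H Y Z φ (x, g x)).2 := by
    intro x hx
    have : H Y Z φ (x, g x) ∈ Gr ga ca da := by rw [← hia]; exact ⟨_, ⟨x, hx, rfl⟩, rfl⟩
    obtain ⟨y, hy, hy'⟩ := this
    rw [← hy']
  have hHb : ∀ x ∈ Ioo 0 d, gb (H Y Z φ (x, g x)).1 = (H Y Z φ (x, g x)).2 := by
    intro x hx
    have : H Y Z φ (x, g x) ∈ Gr gb cb db := by rw [← hib]; exact ⟨_, ⟨x, hx, rfl⟩, rfl⟩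
    obtain ⟨y, hy, hy'⟩ := this
    rw [← hy']
  have hξa : Tendsto (fun x => (H Y Z φ (x, g x)).1) (nhdsWithin 0 (Iio 0)) (nhdsWithin 0 (Iio 0)) := by
    refine tendsto_nhdsWithin_iff.2 ⟨?_, ?_⟩
    · exact (continuous_fst.tendsto (0 : ℝ × ℝ)).comp (hHt.mono_left nhdsWithin_le_nhds)
    · filter_upwards [Ioo_mem_nhdsLT hc] with x hx using hleft x hx
  have hξb : Tendsto (fun x => (H Y Z φ (x, g x)).1) (nhdsWithin 0 (Ioi 0)) (nhdsWithin 0 (Ioi 0)) := by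
    refine tendsto_nhdsWithin_iff.2 ⟨?_, ?_⟩
    · exact (continuous_fst.tendsto (0 : ℝ × ℝ)).comp (hHt.mono_left nhdsWithin_le_nhds)
    · filter_upwards [Ioo_mem_nhdsGT hd] with x hx using hright x hx
  have hηa : Tendsto (fun x => (H Y Z φ (x, g x)).2) (nhdsWithin 0 (Iio 0)) (nhds 0) :=
    (continuous_snd.tendsto (0 : ℝ × ℝ)).comp (hHt.mono_left nhdsWithin_le_nhds)
  have hηb : Tendsto (fun x => (H Y Z φ (x, g x)).2) (nhdsWithin 0 (Ioi 0)) (nhds 0) :=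
    (continuous_snd.tendsto (0 : ℝ × ℝ)).comp (hHt.mono_left nhdsWithin_le_nhds)
  have hda : da = 0 := by
    apply le_antisymm
    · by_contra hcon
      push Not at hcon
      obtain ⟨y, hy⟩ := nonempty_Ioo.2 (max_lt hlta hcon)
      have hy' : y ∈ Ioo ca da := ⟨(le_max_left _ _).trans_lt hy.1, hy.2⟩
      rw [← hxa] at hy'
      obtain ⟨x, hx, hxy⟩ := hy'
      have := hleft x hx
      have h7 := (le_max_right ca 0).trans_lt hy.1
      simp only at hxy
      linarith
    · refine le_of_tendsto (hξa.mono_right nhdsWithin_le_nhds) ?_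
      filter_upwards [Ioo_mem_nhdsLT hc] with x hx
      have : (H Y Z φ (x, g x)).1 ∈ Ioo ca da := by rw [← hxa]; exact ⟨x, hx, rfl⟩
      exact this.2.le
  have hcb : cb = 0 := by
    apply le_antisymm
    · refine ge_of_tendsto (hξb.mono_right nhdsWithin_le_nhds) ?_
      filter_upwards [Ioo_mem_nhdsGT hd] with x hx
      have : (H Y Z φ (x, g x)).1 ∈ Ioo cb db := by rw [← hxb]; exact ⟨x, hx, rfl⟩
      exact this.1.le
    · by_contra hcon
      push Not at hcon
      obtain ⟨y, hy⟩ := nonempty_Ioo.2 (lt_min hltb hcon)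
      have hy' : y ∈ Ioo cb db := ⟨hy.1, hy.2.trans_le (min_le_left _ _)⟩
      rw [← hxb] at hy'
      obtain ⟨x, hx, hxy⟩ := hy'
      have := hright x hx
      have h7 := hy.2.trans_le (min_le_right db 0)
      simp only at hxy
      linarith
  subst hda hcb
  have hla : Tendsto ga (nhdsWithin 0 (Iio 0)) (nhds 0) := by
    obtain ⟨l, hl⟩ := haa.lim hlta
    have : l = 0 := by
      refine tendsto_nhds_unique (hl.comp hξa) (hηa.congr' ?_)
      filter_upwards [Ioo_mem_nhdsLT hc] with x hx using (hHa x hx).symm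
    rwa [this] at hl
  have hlb : Tendsto gb (nhdsWithin 0 (Ioi 0)) (nhds 0) := by
    obtain ⟨l, hl⟩ := hab.lim_left hltb
    have : l = 0 := by
      refine tendsto_nhds_unique (hl.comp hξb) (hηb.congr' ?_)
      filter_upwards [Ioo_mem_nhdsGT hd] with x hx using (hHb x hx).symm
    rwa [this] at hl
  set g2 : ℝ → ℝ := fun y => if y < 0 then ga y else if 0 < y then gb y else 0 with hg2
  have e1 : EqOn g2 ga (Ioo ca 0) := fun y hy => by simp [hg2, hy.2]
  have e2 : EqOn g2 gb (Ioo 0 db) := fun y hy => by simp [hg2, hy.1, not_lt.2 hy.1.le]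
  have e0 : g2 0 = 0 := by simp [hg2]
  refine ⟨g2, ca, db, ⟨hlta.trans hltb, Or.inr ⟨hlta, hltb, e0, ?_, ⟨τ1, haa.congr e1⟩, ⟨true, hab.congr e2⟩⟩⟩, ?_⟩
  · rw [continuousAt_iff_continuous_left'_right']
    constructor
    · rw [ContinuousWithinAt, e0]
      refine hla.congr' ?_
      filter_upwards [Ioo_mem_nhdsLT hlta] with x hx using (e1 hx).symm
    · rw [ContinuousWithinAt, e0]
      refine hlb.congr' ?_
      filter_upwards [Ioo_mem_nhdsGT hltb] with x hx using (e2 hx).symm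
  · rw [hsplit, Gr_split hlta hltb, image_union, image_union, hia, hib, Gr_congr e1, Gr_congr e2,
      image_singleton, hg0, e0, H_axis hg, hg.1]

end Sys

/-- clamp -/
def cl (ρ x : ℝ) : ℝ := max (-ρ) (min x ρ)

lemma cl_mem {ρ : ℝ} (h : 0 < ρ) (x : ℝ) : |cl ρ x| ≤ ρ := by
  rw [abs_le]
  exact ⟨le_max_left _ _, max_le (by linarith) (min_le_right _ _)⟩

lemma cl_eq {ρ x : ℝ} (h : |x| ≤ ρ) : cl ρ x = x := by
  rw [abs_le] at h
  simp [cl, h.1, h.2]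

lemma cl_cont (ρ : ℝ) : Continuous (cl ρ) := by unfold cl; fun_prop

lemma cl_ne {ρ x : ℝ} (h : 0 < ρ) (hx : x ≠ 0) : cl ρ x ≠ 0 := by
  unfold cl
  rcases lt_or_gt_of_ne hx with h' | h'
  · have : min x ρ < 0 := (min_le_left _ _).trans_lt h'
    exact (max_lt (by linarith) this).ne
  · have : 0 < min x ρ := lt_min h' h
    exact (this.trans_le (le_max_right _ _)).ne'

/-- clamp of q^2 -/
def cq (ρ q : ℝ) : ℝ := (min (max q 0) ρ) ^ 2

lemma cq_cont (ρ : ℝ) : Continuous (cq ρ) := by unfold cq; fun_prop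

lemma cq_mem {ρ : ℝ} (h : 0 < ρ) (q : ℝ) : 0 ≤ cq ρ q ∧ cq ρ q ≤ ρ ^ 2 := by
  refine ⟨sq_nonneg _, ?_⟩
  unfold cq
  have : 0 ≤ min (max q 0) ρ := le_min (le_max_right _ _) h.le
  exact pow_le_pow_left₀ this (min_le_right _ _) 2

lemma cq_zero {ρ : ℝ} (h : 0 < ρ) : cq ρ 0 = 0 := by simp [cq, h.le]

lemma cq_eq {ρ w : ℝ} (h : 0 < ρ) (hw : 0 ≤ w) (hw' : w ≤ ρ ^ 2) : cq ρ √w = w := by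
  unfold cq
  rw [max_eq_left (Real.sqrt_nonneg _), min_eq_left, Real.sq_sqrt hw]
  exact Real.sqrt_le_iff.2 ⟨h.le, hw'⟩

lemma cq_diff {ρ q q' : ℝ} (h : 0 < ρ) (hq : 0 ≤ q) (hqq : q ≤ q') :
    |cq ρ q' - cq ρ q| ≤ 2 * ρ * (q' - q) ∧ |cq ρ q' - cq ρ q| ≤ q' ^ 2 - q ^ 2 ∧
    q * |cq ρ q' - cq ρ q| ≤ 2 * ρ ^ 2 * (q' - q) ∧ cq ρ q ≤ q ^ 2 := by
  unfold cq
  rw [max_eq_left hq, max_eq_left (hq.trans hqq)]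
  rcases le_total q' ρ with h1 | h1
  · rw [min_eq_left h1, min_eq_left (hqq.trans h1), abs_of_nonneg (by nlinarith)]
    refine ⟨by nlinarith, le_rfl, ?_, le_rfl⟩
    have : q * (q' + q) ≤ 2 * ρ ^ 2 := by nlinarith
    nlinarith
  · rw [min_eq_right h1]
    rcases le_total q ρ with h2 | h2
    · rw [min_eq_left h2, abs_of_nonneg (by nlinarith)]
      have h3 : ρ ^ 2 - q ^ 2 = (ρ - q) * (ρ + q) := by ring
      have h4 : (ρ - q) * (ρ + q) ≤ (q' - q) * (2 * ρ) := by (gcongr; nlinarith)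
      refine ⟨by nlinarith, by nlinarith, ?_, le_rfl⟩
      have : q * ((ρ - q) * (ρ + q)) ≤ ρ * ((q' - q) * (2 * ρ)) := by
        apply mul_le_mul h2 h4 _ h.le
        nlinarith
      rw [h3]; linarith
    · rw [min_eq_right h2]
      simp only [sub_self, abs_zero, mul_zero]
      refine ⟨by nlinarith [sub_nonneg.2 hqq], by nlinarith, by nlinarith [sub_nonneg.2 hqq, sq_nonneg ρ], by nlinarith⟩

lemma exists_sys {A B : ℝ × ℝ → ℝ} {ℓ r k1 : ℝ} (hr : 0 < r) (hℓ : 0 ≤ ℓ)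
    (hA : ∀ x w w', |x| ≤ r → |w| ≤ r → |w'| ≤ r → |A (x, w) - A (x, w')| ≤ ℓ * |w - w'|)
    (hB : ∀ x w w', |x| ≤ r → |w| ≤ r → |w'| ≤ r → |B (x, w) - B (x, w')| ≤ ℓ * |w - w'|)
    (hAc : ContinuousOn A {p | |p.1| ≤ r ∧ |p.2| ≤ r})
    (hBc : ContinuousOn B {p | |p.1| ≤ r ∧ |p.2| ≤ r})
    {β0 β1 : ℝ} (hβ0 : 0 < β0) (hβ : ∀ x w, |x| ≤ r → |w| ≤ r → β0 ≤ B (x, w) ∧ B (x, w) ≤ β1)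
    (hA0 : A (0, 0) = 0) (hAneg : ∀ x, |x| ≤ r → x ≠ 0 → A (x, 0) < 0)
    (hAk : ∀ x, |x| ≤ r → - A (x, 0) ≤ k1 * x ^ 2) :
    ∃ (Y : Sys) (ρ : ℝ), 0 < ρ ∧ ∀ x w, |x| ≤ ρ → 0 ≤ w → w ≤ ρ ^ 2 →
      Y.F true x w = A (x, w) + √w * B (x, w) ∧ Y.F false x w = A (x, w) - √w * B (x, w) := by
  obtain ⟨ρ, hρ, hρr, hρ1, hρβ⟩ : ∃ ρ : ℝ, 0 < ρ ∧ ρ ≤ r ∧ ρ ≤ 1 ∧ ρ * (4 * ℓ) ≤ β0 / 2 := by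
    refine ⟨min (min r 1) (β0 / 2 / (4 * ℓ + 1)), by positivity, ?_, ?_, ?_⟩
    · exact (min_le_left _ _).trans (min_le_left _ _)
    · exact (min_le_left _ _).trans (min_le_right _ _)
    · calc _ ≤ β0 / 2 / (4 * ℓ + 1) * (4 * ℓ + 1) := by
            gcongr
            · exact min_le_right _ _
            · linarith
        _ = β0 / 2 := by field_simp
  have hρ2 : ρ ^ 2 ≤ r := by nlinarith
  have hβ1 : 0 < β1 := by
    have := hβ 0 0 (by simpa using hr.le) (by simpa using hr.le)
    linarith
  have hcx : ∀ x, |cl ρ x| ≤ r := fun x => (cl_mem hρ x).trans hρr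
  have hcw : ∀ q, |cq ρ q| ≤ r := fun q => by
    rw [abs_of_nonneg (cq_mem hρ q).1]; exact (cq_mem hρ q).2.trans hρ2
  have h00 : |(0 : ℝ)| ≤ r := by simpa using hr.le
  have hAq : ∀ x q q', 0 ≤ q → q ≤ q' → |A (cl ρ x, cq ρ q') - A (cl ρ x, cq ρ q)| ≤ ρ * (2 * ℓ) * (q' - q) := by
    intro x q q' h1 h2
    refine (hA _ _ _ (hcx x) (hcw _) (hcw _)).trans ?_
    have := mul_le_mul_of_nonneg_left (cq_diff hρ h1 h2).1 hℓ
    linarith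
  have hBq : ∀ x q q', 0 ≤ q → q ≤ q' → |q * (B (cl ρ x, cq ρ q') - B (cl ρ x, cq ρ q))| ≤ ρ * (2 * ℓ) * (q' - q) := by
    intro x q q' h1 h2
    rw [abs_mul, abs_of_nonneg h1]
    have h3 := (hB _ _ _ (hcx x) (hcw q') (hcw q))
    have h4 := mul_le_mul_of_nonneg_left h3 h1
    have h5 := mul_le_mul_of_nonneg_left (cq_diff hρ h1 h2).2.2.1 hℓ
    have h6 : ρ ^ 2 * (2 * ℓ * (q' - q)) ≤ ρ * (2 * ℓ * (q' - q)) := by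
      apply mul_le_mul_of_nonneg_right
      · nlinarith
      · have := sub_nonneg.2 h2; positivity
    linarith
  have hcontA : Continuous fun p : ℝ × ℝ => A (cl ρ p.1, cq ρ p.2) := by
    refine hAc.comp_continuous (f := fun p : ℝ × ℝ => (cl ρ p.1, cq ρ p.2)) ?_ (fun p => ⟨hcx _, hcw _⟩)
    exact ((cl_cont ρ).comp continuous_fst).prodMk ((cq_cont ρ).comp continuous_snd)
  have hcontB : Continuous fun p : ℝ × ℝ => B (cl ρ p.1, cq ρ p.2) := by
    refine hBc.comp_continuous (f := fun p : ℝ × ℝ => (cl ρ p.1, cq ρ p.2)) ?_ (fun p => ⟨hcx _, hcw _⟩)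
    exact ((cl_cont ρ).comp continuous_fst).prodMk ((cq_cont ρ).comp continuous_snd)
  have hcontA0 : Continuous fun x : ℝ => A (cl ρ x, 0) := by
    refine hAc.comp_continuous (f := fun x : ℝ => (cl ρ x, (0 : ℝ))) ?_ (fun p => ⟨hcx _, h00⟩)
    exact (cl_cont ρ).prodMk continuous_const
  have hGF : ∀ s : ℝ, (s = 1 ∨ s = -1) →
      GF (fun x q => q * B (cl ρ x, cq ρ q) + s * (A (cl ρ x, cq ρ q) - A (cl ρ x, 0))) (β0 / 2) (β1 + β0 / 2) := by
    intro s hs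
    have hs' : ∀ z : ℝ, |s * z| = |z| := fun z => by rcases hs with rfl | rfl <;> simp
    have key : ∀ x q q', 0 ≤ q → q ≤ q' →
        |(q' * B (cl ρ x, cq ρ q') + s * (A (cl ρ x, cq ρ q') - A (cl ρ x, 0))) -
        (q * B (cl ρ x, cq ρ q) + s * (A (cl ρ x, cq ρ q) - A (cl ρ x, 0))) - (q' - q) * B (cl ρ x, cq ρ q')|
        ≤ β0 / 2 * (q' - q) := by
      intro x q q' h1 h2
      have e : (q' * B (cl ρ x, cq ρ q') + s * (A (cl ρ x, cq ρ q') - A (cl ρ x, 0))) -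
        (q * B (cl ρ x, cq ρ q) + s * (A (cl ρ x, cq ρ q) - A (cl ρ x, 0))) - (q' - q) * B (cl ρ x, cq ρ q')
        = q * (B (cl ρ x, cq ρ q') - B (cl ρ x, cq ρ q)) + s * (A (cl ρ x, cq ρ q') - A (cl ρ x, cq ρ q)) := by ring
      rw [e]
      refine (abs_add_le _ _).trans ?_
      rw [hs']
      have := add_le_add (hBq x q q' h1 h2) (hAq x q q' h1 h2)
      have h3 := mul_le_mul_of_nonneg_right hρβ (sub_nonneg.2 h2)
      linarith
    refine ⟨?_, ?_, ?_, ?_, by linarith, by linarith⟩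
    · have := hcontA0.comp (continuous_fst (X := ℝ) (Y := ℝ))
      exact (continuous_snd.mul hcontB).add (continuous_const.mul (hcontA.sub this))
    · intro x; simp [cq_zero hρ]
    · intro x q q' h1 h2
      have h3 := (abs_le.1 (key x q q' h1 h2)).1
      have h4 := mul_le_mul_of_nonneg_left (hβ _ _ (hcx x) (hcw q')).1 (sub_nonneg.2 h2)
      linarith
    · intro x q q' h1 h2
      have h3 := (abs_le.1 (key x q q' h1 h2)).2
      have h4 := mul_le_mul_of_nonneg_left (hβ _ _ (hcx x) (hcw q')).2 (sub_nonneg.2 h2)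
      linarith
  set K : ℝ → ℝ := fun x => - A (cl ρ x, 0) + (max (|x| - ρ) 0) ^ 2 with hK
  have hKc : Continuous K := by
    have : Continuous fun x : ℝ => (max (|x| - ρ) 0) ^ 2 := by fun_prop
    exact hcontA0.neg.add this
  have hneg : ∀ x, A (cl ρ x, 0) ≤ 0 := by
    intro x
    rcases eq_or_ne (cl ρ x) 0 with h | h
    · rw [h, hA0]
    · exact (hAneg _ (hcx x) h).le
  have hKeq : ∀ x, |x| ≤ ρ → K x = - A (x, 0) := by
    intro x hx
    simp only [hK]
    rw [cl_eq hx, max_eq_right (by linarith)]; ring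
  refine ⟨⟨K, fun x => ∫ t in (0 : ℝ)..x, K t,
    fun x q => q * B (cl ρ x, cq ρ q) + 1 * (A (cl ρ x, cq ρ q) - A (cl ρ x, 0)),
    fun x q => q * B (cl ρ x, cq ρ q) + (-1) * (A (cl ρ x, cq ρ q) - A (cl ρ x, 0)),
    β0 / 2, β1 + β0 / 2, 5 * ℓ, k1, ρ, hKc, ?_, ?_, ?_, hρ, ?_, ?_, hGF 1 (Or.inl rfl), hGF (-1) (Or.inr rfl), ?_⟩, ρ, hρ, ?_⟩
  · rw [hKeq 0 (by simpa using hρ.le), hA0, neg_zero]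
  · intro x hx
    have := hAneg _ (hcx x) (cl_ne hρ hx)
    simp only [hK]
    nlinarith [sq_nonneg (max (|x| - ρ) 0)]
  · intro x
    exact (hKc.integral_hasStrictDerivAt 0 x).hasDerivAt
  · intro x hx
    have : |x| ≤ ρ := by rw [abs_of_nonneg hx.1]; exact hx.2
    rw [hKeq x this]
    exact hAk x (this.trans hρr)
  · intro C
    refine ⟨2 * ρ + 4 * |C|, by positivity, fun x hx => ?_⟩
    have h1 : 0 ≤ |C| := abs_nonneg C
    have h2 : C ≤ |C| := le_abs_self C
    have h3 : 0 ≤ x := by linarith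
    have h4 := hneg x
    simp only [hK]
    rw [abs_of_nonneg h3, max_eq_left (by linarith)]
    have h5 : x / 2 ≤ x - ρ := by linarith
    have h6 : (x / 2) ^ 2 ≤ (x - ρ) ^ 2 := pow_le_pow_left₀ (by linarith) h5 2
    have h7 : C * x ≤ (x / 4) * x := by apply mul_le_mul_of_nonneg_right _ h3; linarith
    nlinarith
  · intro x q1 q2 h2 h21
    have h1 : 0 ≤ q1 := h2.trans h21
    have hd := cq_diff hρ h2 h21
    have hB' := (abs_le.1 (hB _ _ _ (hcx x) (hcw q1) (hcw q2))).2
    have hA' := (abs_le.1 (hA _ _ _ (hcx x) (hcw q1) (hcw q2))).1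
    have hA'' := (abs_le.1 (hA _ _ _ (hcx x) (hcw q2) h00)).2
    rw [sub_zero, abs_of_nonneg (cq_mem hρ q2).1] at hA''
    have e : q2 * (q1 * B (cl ρ x, cq ρ q1) + -1 * (A (cl ρ x, cq ρ q1) - A (cl ρ x, 0))) -
      q1 * (q2 * B (cl ρ x, cq ρ q2) + -1 * (A (cl ρ x, cq ρ q2) - A (cl ρ x, 0)))
      = q1 * q2 * (B (cl ρ x, cq ρ q1) - B (cl ρ x, cq ρ q2)) -
        q2 * (A (cl ρ x, cq ρ q1) - A (cl ρ x, cq ρ q2)) + (q1 - q2) * (A (cl ρ x, cq ρ q2) - A (cl ρ x, 0)) := by ring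
    rw [e]
    have hBB : B (cl ρ x, cq ρ q1) - B (cl ρ x, cq ρ q2) ≤ 2 * ℓ * (q1 - q2) := by
      have h3 := mul_le_mul_of_nonneg_left hd.1 hℓ
      have h4 : ρ * (2 * ℓ * (q1 - q2)) ≤ 1 * (2 * ℓ * (q1 - q2)) :=
        mul_le_mul_of_nonneg_right hρ1 (by have := sub_nonneg.2 h21; positivity)
      linarith
    have t1 : q1 * q2 * (B (cl ρ x, cq ρ q1) - B (cl ρ x, cq ρ q2)) ≤ q1 * q2 * (2 * ℓ * (q1 - q2)) :=
      mul_le_mul_of_nonneg_left hBB (by positivity)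
    have hAA : - (A (cl ρ x, cq ρ q1) - A (cl ρ x, cq ρ q2)) ≤ ℓ * (q1 ^ 2 - q2 ^ 2) := by
      have h3 := mul_le_mul_of_nonneg_left hd.2.1 hℓ
      linarith
    have t2 := mul_le_mul_of_nonneg_left hAA h2
    have hAB : A (cl ρ x, cq ρ q2) - A (cl ρ x, 0) ≤ ℓ * q2 ^ 2 :=
      hA''.trans (mul_le_mul_of_nonneg_left hd.2.2.2 hℓ)
    have t3 := mul_le_mul_of_nonneg_left hAB (sub_nonneg.2 h21)
    have t4 : q2 * (ℓ * (q1 ^ 2 - q2 ^ 2)) + (q1 - q2) * (ℓ * q2 ^ 2) ≤ 3 * ℓ * q1 * q2 * (q1 - q2) := by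
      have : 3 * ℓ * q1 * q2 * (q1 - q2) - (q2 * (ℓ * (q1 ^ 2 - q2 ^ 2)) + (q1 - q2) * (ℓ * q2 ^ 2)) = 2 * (ℓ * q2 * ((q1 - q2) * (q1 - q2))) := by ring
      have h9 : 0 ≤ ℓ * q2 * ((q1 - q2) * (q1 - q2)) := mul_nonneg (mul_nonneg hℓ h2) (mul_self_nonneg _)
      linarith
    linarith
  · intro x w hx hw hw'
    have hxr := hx
    simp only [Sys.F, if_true, Bool.false_eq_true, if_false]
    rw [hKeq x hx, cl_eq hx, cq_eq hρ hw hw']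
    constructor <;> ring
namespace Sys
variable {Y : Sys}

lemma F_zero (Y : Sys) (τ : Bool) (x : ℝ) : Y.F τ x 0 = - Y.K x := by
  cases τ <;> simp [F, Y.hp.zero, Y.hm.zero]

lemma F_cont (Y : Sys) (τ : Bool) : Continuous fun p : ℝ × ℝ => Y.F τ p.1 p.2 := by
  have hK : Continuous fun p : ℝ × ℝ => Y.K p.1 := Y.Kc.comp continuous_fst
  have hq : Continuous fun p : ℝ × ℝ => (p.1, √p.2) := continuous_fst.prodMk (Real.continuous_sqrt.comp continuous_snd)
  cases τ
  · have := (Y.hm.cont.comp hq).neg.sub hK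
    simp only [F, Bool.false_eq_true, if_false]
    exact this
  · have := (Y.hp.cont.comp hq).sub hK
    simp only [F, if_true]
    exact this

lemma F_sign (Y : Sys) (τ : Bool) {x w : ℝ} (hw : 0 < w) :
    (0 < Y.F τ x w + Y.K x ↔ τ = true) ∧ Y.F τ x w + Y.K x ≠ 0 := by
  have hq := Real.sqrt_pos.2 hw
  have h1 := Y.hp.lo x 0 √w le_rfl hq.le
  have h2 := Y.hm.lo x 0 √w le_rfl hq.le
  rw [Y.hp.zero] at h1
  rw [Y.hm.zero] at h2
  have h3 := mul_pos Y.hp.b0pos hq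
  cases τ
  · simp only [F, Bool.false_eq_true, if_false, iff_false]
    constructor
    · linarith
    · intro h; linarith
  · simp only [F, if_true, iff_true]
    constructor
    · linarith
    · intro h; linarith

lemma arc_of {g : ℝ → ℝ} {c d : ℝ}
    (h : ∀ x ∈ Ioo c d, 0 < g x ∧ ∃ τ, HasDerivAt g (Y.F τ x (g x)) x) : ∃ τ, Y.Arc τ g c d := by
  choose! h0 τ hτ using h
  have key := hasDerivWithinAt_forall_lt_or_forall_gt_of_forall_ne (convex_Ioo c d)
    (f := fun x => g x + Y.κ x) (f' := fun x => Y.F (τ x) x (g x) + Y.K x) (m := 0)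
    (fun x hx => ((hτ x hx).add (Y.dκ x)).hasDerivWithinAt) (fun x hx => (Y.F_sign (τ x) (h0 x hx)).2)
  rcases key with hk | hk
  · refine ⟨false, fun x hx => ⟨h0 x hx, ?_⟩⟩
    have : τ x = false := by
      rw [← Bool.not_eq_true, ← (Y.F_sign (τ x) (x := x) (h0 x hx)).1]
      exact not_lt.2 (hk x hx).le
    rw [← this]; exact hτ x hx
  · refine ⟨true, fun x hx => ⟨h0 x hx, ?_⟩⟩
    have : τ x = true := (Y.F_sign (τ x) (x := x) (h0 x hx)).1.1 (hk x hx)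
    rw [← this]; exact hτ x hx

lemma curve_of {g : ℝ → ℝ} {c d : ℝ} (hcd : c < d)
    (h : ∀ x ∈ Ioo c d, 0 ≤ g x ∧ ∃ τ, HasDerivAt g (Y.F τ x (g x)) x) : Y.Curve g c d := by
  have hz : ∀ x ∈ Ioo c d, g x = 0 → x = 0 := by
    intro x hx hgx
    obtain ⟨τ, hτ⟩ := (h x hx).2
    have hmin : IsLocalMin g x := by
      filter_upwards [Ioo_mem_nhds hx.1 hx.2] with y hy
      rw [hgx]; exact (h y hy).1
    have := hmin.hasDerivAt_eq_zero hτ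
    rw [hgx, F_zero] at this
    by_contra hne
    have := Y.Kpos x hne
    linarith
  refine ⟨hcd, ?_⟩
  by_cases h0 : (0 : ℝ) ∈ Ioo c d ∧ g 0 = 0
  · right
    refine ⟨h0.1.1, h0.1.2, h0.2, ?_, arc_of ?_, arc_of ?_⟩
    · obtain ⟨τ, hτ⟩ := (h 0 h0.1).2
      exact hτ.continuousAt
    · intro x hx
      have hx' : x ∈ Ioo c d := ⟨hx.1, hx.2.trans h0.1.2⟩
      exact ⟨lt_of_le_of_ne (h x hx').1 (fun h => hx.2.ne (hz x hx' h.symm)), (h x hx').2⟩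
    · intro x hx
      have hx' : x ∈ Ioo c d := ⟨h0.1.1.trans hx.1, hx.2⟩
      exact ⟨lt_of_le_of_ne (h x hx').1 (fun h => hx.1.ne' (hz x hx' h.symm)), (h x hx').2⟩
  · left
    apply arc_of
    intro x hx
    refine ⟨lt_of_le_of_ne (h x hx).1 (fun h1 => ?_), (h x hx).2⟩
    have := hz x hx h1.symm
    subst this
    exact h0 ⟨hx, h1.symm⟩

lemma Curve.deriv {g : ℝ → ℝ} {c d : ℝ} (h : Y.Curve g c d) :
    ∃ dg : ℝ → ℝ, ContinuousOn dg (Ioo c d) ∧ ∀ x ∈ Ioo c d, 0 ≤ g x ∧ HasDerivAt g (dg x) x ∧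
      ∃ τ, dg x = Y.F τ x (g x) := by
  obtain ⟨hcd, ⟨τ, h⟩ | ⟨hc, hd, hg0, hgc, ⟨τ1, h1⟩, ⟨τ2, h2⟩⟩⟩ := h
  · refine ⟨fun x => Y.F τ x (g x), ?_, fun x hx => ⟨(h x hx).1.le, (h x hx).2, τ, rfl⟩⟩
    exact (Y.F_cont τ).comp_continuousOn (continuousOn_id.prodMk h.cont)
  · set dg : ℝ → ℝ := fun x => if x < 0 then Y.F τ1 x (g x) else Y.F τ2 x (g x) with hdg
    have hF0 : ∀ τ, ContinuousAt (fun x => Y.F τ x (g x)) 0 := fun τ =>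
      ContinuousAt.comp (x := (0 : ℝ)) (f := fun x => (x, g x)) (g := fun p : ℝ × ℝ => Y.F τ p.1 p.2)
        (Y.F_cont τ).continuousAt (continuousAt_id.prodMk hgc)
    have hF00 : ∀ τ, Y.F τ 0 (g 0) = 0 := fun τ => by rw [hg0, F_zero, Y.K0, neg_zero]
    have hdg0 : dg 0 = 0 := by simp [hdg, hF00]
    have hdgc : ContinuousAt dg 0 := by
      rw [ContinuousAt, hdg0]
      have : Tendsto (fun x => |Y.F τ1 x (g x)| + |Y.F τ2 x (g x)|) (nhds 0) (nhds 0) := by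
        have := ((hF0 τ1).abs.add (hF0 τ2).abs).tendsto
        simp only [Pi.add_apply, hF00, abs_zero, add_zero] at this
        exact this
      refine squeeze_zero_norm (fun x => ?_) this
      simp only [hdg, Real.norm_eq_abs]
      split_ifs
      · linarith [abs_nonneg (Y.F τ2 x (g x))]
      · linarith [abs_nonneg (Y.F τ1 x (g x))]
    have d1 : ∀ x ∈ Ioo c 0, HasDerivAt g (dg x) x := fun x hx => by
      simp only [hdg, if_pos hx.2]; exact (h1 x hx).2
    have d2 : ∀ x ∈ Ioo 0 d, HasDerivAt g (dg x) x := fun x hx => by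
      simp only [hdg, if_neg (not_lt.2 hx.1.le)]; exact (h2 x hx).2
    have d0 : HasDerivAt g (dg 0) 0 := by
      have A : HasDerivWithinAt g (dg 0) (Ici 0) 0 := by
        refine hasDerivWithinAt_Ici_of_tendsto_deriv (s := Ioo 0 d)
          (fun x hx => (d2 x hx).differentiableAt.differentiableWithinAt)
          hgc.continuousWithinAt (Ioo_mem_nhdsGT hd) ?_
        refine (hdgc.tendsto.mono_left nhdsWithin_le_nhds).congr' ?_
        filter_upwards [Ioo_mem_nhdsGT hd] with x hx using (d2 x hx).deriv.symm
      have B : HasDerivWithinAt g (dg 0) (Iic 0) 0 := by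
        refine hasDerivWithinAt_Iic_of_tendsto_deriv (s := Ioo c 0)
          (fun x hx => (d1 x hx).differentiableAt.differentiableWithinAt)
          hgc.continuousWithinAt (Ioo_mem_nhdsLT hc) ?_
        refine (hdgc.tendsto.mono_left nhdsWithin_le_nhds).congr' ?_
        filter_upwards [Ioo_mem_nhdsLT hc] with x hx using (d1 x hx).deriv.symm
      have := B.union A
      rwa [Iic_union_Ici, hasDerivWithinAt_univ] at this
    have hcF : ∀ x, ContinuousAt g x → ∀ τ, ContinuousAt (fun x => Y.F τ x (g x)) x := fun x hx τ =>
      ContinuousAt.comp (x := x) (f := fun x => (x, g x)) (g := fun p : ℝ × ℝ => Y.F τ p.1 p.2)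
        (Y.F_cont τ).continuousAt (continuousAt_id.prodMk hx)
    refine ⟨dg, fun x hx => ?_, fun x hx => ?_⟩
    · apply ContinuousAt.continuousWithinAt
      rcases lt_trichotomy x 0 with hx0 | rfl | hx0
      · refine (hcF x (d1 x ⟨hx.1, hx0⟩).continuousAt τ1).congr ?_
        filter_upwards [Iio_mem_nhds hx0] with y hy
        simp only [hdg, if_pos (mem_Iio.1 hy)]
      · exact hdgc
      · refine (hcF x (d2 x ⟨hx0, hx.2⟩).continuousAt τ2).congr ?_
        filter_upwards [Ioi_mem_nhds hx0] with y hy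
        simp only [hdg, if_neg (not_lt.2 (mem_Ioi.1 hy).le)]
    · rcases lt_trichotomy x 0 with hx0 | rfl | hx0
      · exact ⟨(h1 x ⟨hx.1, hx0⟩).1.le, d1 x ⟨hx.1, hx0⟩, τ1, by simp [hdg, hx0]⟩
      · exact ⟨hg0.ge, d0, τ1, by rw [hdg0, hF00]⟩
      · exact ⟨(h2 x ⟨hx0, hx.2⟩).1.le, d2 x ⟨hx0, hx.2⟩, τ2, by simp [hdg, not_lt.2 hx0.le]⟩

end Sys

lemma hasDerivAt_pair {F : ℝ × ℝ → ℝ} {γ : ℝ → ℝ × ℝ} {v : ℝ × ℝ} {t : ℝ}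
    (hF : DifferentiableAt ℝ F (γ t)) (h : HasDerivAt γ v t) :
    HasDerivAt (fun s => F (γ s)) (pdx F (γ t) * v.1 + pdy F (γ t) * v.2) t := by
  have hx : pdx F (γ t) = fderiv ℝ F (γ t) (1, 0) := by
    have h1 : HasDerivAt (fun s : ℝ => (s, (γ t).2)) ((1 : ℝ), (0 : ℝ)) (γ t).1 :=
      (hasDerivAt_id _).prodMk (hasDerivAt_const _ _)
    exact (HasFDerivAt.comp_hasDerivAt (l := F) (γ t).1 (by simpa using hF.hasFDerivAt) h1).deriv
  have hy : pdy F (γ t) = fderiv ℝ F (γ t) (0, 1) := by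
    have h1 : HasDerivAt (fun s : ℝ => ((γ t).1, s)) ((0 : ℝ), (1 : ℝ)) (γ t).2 :=
      (hasDerivAt_const _ _).prodMk (hasDerivAt_id _)
    exact (HasFDerivAt.comp_hasDerivAt (l := F) (γ t).2 (by simpa using hF.hasFDerivAt) h1).deriv
  have := HasFDerivAt.comp_hasDerivAt (l := F) t hF.hasFDerivAt h
  have e : v = v.1 • ((1 : ℝ), (0 : ℝ)) + v.2 • ((0 : ℝ), (1 : ℝ)) := by ext <;> simp
  have e2 : fderiv ℝ F (γ t) v = pdx F (γ t) * v.1 + pdy F (γ t) * v.2 := by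
    rw [hx, hy]
    conv_lhs => rw [e, map_add, map_smul, map_smul]
    simp [mul_comm]
  rw [← e2]
  exact this

lemma pdx_eq {F : ℝ × ℝ → ℝ} (hF : Differentiable ℝ F) : pdx F = fun p => fderiv ℝ F p (1, 0) := by
  funext p
  have h1 : HasDerivAt (fun s : ℝ => (s, p.2)) ((1 : ℝ), (0 : ℝ)) p.1 :=
    (hasDerivAt_id _).prodMk (hasDerivAt_const _ _)
  exact (HasFDerivAt.comp_hasDerivAt (l := F) p.1 (by simpa using (hF p).hasFDerivAt) h1).deriv

lemma pdy_eq {F : ℝ × ℝ → ℝ} (hF : Differentiable ℝ F) : pdy F = fun p => fderiv ℝ F p (0, 1) := by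
  funext p
  have h1 : HasDerivAt (fun s : ℝ => (p.1, s)) ((0 : ℝ), (1 : ℝ)) p.2 :=
    (hasDerivAt_const _ _).prodMk (hasDerivAt_id _)
  exact (HasFDerivAt.comp_hasDerivAt (l := F) p.2 (by simpa using (hF p).hasFDerivAt) h1).deriv

/-- smooth -/
abbrev Sm (F : ℝ × ℝ → ℝ) : Prop := ContDiff ℝ (⊤ : ℕ∞) F

lemma Sm.diff {F} (h : Sm F) : Differentiable ℝ F := ContDiff.differentiable h (by simp)

lemma Sm.pdx {F} (h : Sm F) : Sm (pdx F) := by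
  rw [pdx_eq h.diff]
  exact (ContDiff.fderiv_right (m := (⊤ : ℕ∞)) h (by simp)).clm_apply contDiff_const

lemma Sm.pdy {F} (h : Sm F) : Sm (pdy F) := by
  rw [pdy_eq h.diff]
  exact (ContDiff.fderiv_right (m := (⊤ : ℕ∞)) h (by simp)).clm_apply contDiff_const

structure Red (ω : (ℝ × ℝ) → (ℝ × ℝ) → ℝ) (Y : Sys) (e : OpenPartialHomeomorph (ℝ × ℝ) (ℝ × ℝ))
    (Ω : Set (ℝ × ℝ)) : Prop where
  op : IsOpen Ω
  mem : (0 : ℝ × ℝ) ∈ Ω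
  sub : Ω ⊆ e.source
  zero : e 0 = 0
  bdd : Bornology.IsBounded (e '' Ω)
  r1 : ∀ γ I, IsIntegralCurveOnBDE ω γ I → I.Nonempty → MapsTo γ I Ω →
    ∃ g c d, Y.Curve g c d ∧ e '' (γ '' I) = Sys.Gr g c d
  r2 : ∀ g c d, Y.Curve g c d → Sys.Gr g c d ⊆ e '' Ω →
    ∃ γ I, IsIntegralCurveOnBDE ω γ I ∧ e.symm '' Sys.Gr g c d = γ '' I

/-- the triangular linear equivalence -/
def triL (ε m n : ℝ) (hε : ε * ε = 1) (hn : n ≠ 0) : (ℝ × ℝ) ≃L[ℝ] (ℝ × ℝ) :=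
  LinearEquiv.toContinuousLinearEquiv
  { toFun := fun v => (ε * v.1, m * v.1 + n * v.2)
    invFun := fun w => (ε * w.1, (w.2 - m * (ε * w.1)) / n)
    map_add' := fun v w => by ext <;> simp <;> ring
    map_smul' := fun c v => by ext <;> simp <;> ring
    left_inv := fun v => by
      ext
      · simp only; rw [← mul_assoc, hε, one_mul]
      · simp only; rw [← mul_assoc ε, hε]; field_simp; ring
    right_inv := fun v => by
      ext
      · simp only; rw [← mul_assoc, hε, one_mul]
      · simp only; field_simp; ring }

lemma triL_apply (ε m n : ℝ) (hε : ε * ε = 1) (hn : n ≠ 0) (v : ℝ × ℝ) :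
    triL ε m n hε hn v = (ε * v.1, m * v.1 + n * v.2) := rfl

lemma fderiv_pd {F : ℝ × ℝ → ℝ} (hF : Differentiable ℝ F) (p v : ℝ × ℝ) :
    fderiv ℝ F p v = pdx F p * v.1 + pdy F p * v.2 := by
  rw [pdx_eq hF, pdy_eq hF]
  have e : v = v.1 • ((1 : ℝ), (0 : ℝ)) + v.2 • ((0 : ℝ), (1 : ℝ)) := by ext <;> simp
  conv_lhs => rw [e, map_add, map_smul, map_smul]
  simp [mul_comm]

lemma exists_chart {δ : ℝ × ℝ → ℝ} (hδ : Sm δ) (h0 : δ 0 = 0) (hy : pdy δ 0 ≠ 0) {ε : ℝ} (hε : ε * ε = 1) :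
    ∃ e : OpenPartialHomeomorph (ℝ × ℝ) (ℝ × ℝ), (0 : ℝ × ℝ) ∈ e.source ∧ (∀ p, e p = (ε * p.1, δ p)) ∧
      ContDiffAt ℝ 1 e.symm 0 := by
  set N : ℝ × ℝ → ℝ × ℝ := fun p => (ε * p.1, δ p) with hN
  have hNc : ContDiff ℝ 1 N := by
    have h1 : ContDiff ℝ 1 δ := hδ.of_le (by norm_cast)
    exact (contDiff_const.mul contDiff_fst).prodMk h1
  have hN0 : N 0 = 0 := by simp [hN, h0]
  have hd : HasFDerivAt N ((triL ε (pdx δ 0) (pdy δ 0) hε hy : (ℝ × ℝ) ≃L[ℝ] (ℝ × ℝ)) : (ℝ × ℝ) →L[ℝ] (ℝ × ℝ)) 0 := by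
    have h1 : HasFDerivAt N ((ε • ContinuousLinearMap.fst ℝ ℝ ℝ).prod (fderiv ℝ δ 0)) 0 := by
      apply HasFDerivAt.prodMk
      · exact (hasFDerivAt_fst.const_mul ε)
      · exact (hδ.diff 0).hasFDerivAt
    convert h1 using 1
    apply ContinuousLinearMap.ext
    intro v
    apply Prod.ext
    · rfl
    · exact (fderiv_pd hδ.diff 0 v).symm
  refine ⟨hNc.contDiffAt.toOpenPartialHomeomorph N hd one_ne_zero, ?_, fun p => rfl, ?_⟩
  · exact hNc.contDiffAt.mem_toOpenPartialHomeomorph_source hd one_ne_zero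
  · have := hNc.contDiffAt.to_localInverse hd one_ne_zero
    rw [hN0] at this
    exact this

lemma box_eq (r : ℝ) : {p : ℝ × ℝ | |p.1| ≤ r ∧ |p.2| ≤ r} = Metric.closedBall 0 r := by
  ext p
  simp [Prod.norm_def]

theorem reduce {a b c : ℝ × ℝ → ℝ} (ha : Sm a) (hb : Sm b) (hc : Sm c) (ha0 : 0 < a 0)
    {δ : ℝ × ℝ → ℝ} (hδ : δ = fun p => b p ^ 2 - a p * c p) (hδ0 : δ 0 = 0) (hδy : pdy δ 0 ≠ 0)
    {ε k1 : ℝ} (hε : ε * ε = 1) {A : ℝ × ℝ → ℝ}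
    (hA : A = fun p => ε * (pdx δ p - pdy δ p * b p / a p)) (hA0 : A 0 = 0)
    (hAn : ∀ᶠ p in nhds (0 : ℝ × ℝ), δ p = 0 → (p.1 ≠ 0 → A p < 0) ∧ - A p ≤ k1 * p.1 ^ 2) :
    ∃ Y e Ω, Red (BDE a b c) Y e Ω := by
  have hδs : Sm δ := by rw [hδ]; exact (hb.pow 2).sub (ha.mul hc)
  obtain ⟨e, he0, heq, hes⟩ := exists_chart hδs hδ0 hδy hε
  have hezero : e 0 = 0 := by rw [heq]; simp [hδ0]
  have hes0 : e.symm 0 = 0 := by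
    have := e.left_inv he0
    rwa [hezero] at this
  have htar : (0 : ℝ × ℝ) ∈ e.target := by
    have := e.map_source he0
    rwa [hezero] at this
  obtain ⟨s, hs, hspos⟩ : ∃ s : ℝ, s * s = 1 ∧ 0 < s * pdy δ 0 := by
    rcases lt_or_gt_of_ne hδy with h | h
    · exact ⟨-1, by norm_num, by linarith⟩
    · exact ⟨1, by norm_num, by linarith⟩
  set B : ℝ × ℝ → ℝ := fun p => s * pdy δ p / a p with hB
  have hB0 : 0 < B 0 := div_pos hspos ha0
  have hAd : ContDiffAt ℝ 1 A 0 := by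
    have : ContDiffAt ℝ (⊤ : ℕ∞) A 0 := by
      rw [hA]
      exact contDiffAt_const.mul (hδs.pdx.contDiffAt.sub
        ((hδs.pdy.contDiffAt.mul hb.contDiffAt).div ha.contDiffAt ha0.ne'))
    exact this.of_le (by norm_cast)
  have hBd : ContDiffAt ℝ 1 B 0 := by
    have : ContDiffAt ℝ (⊤ : ℕ∞) B 0 :=
      (contDiffAt_const.mul hδs.pdy.contDiffAt).div ha.contDiffAt ha0.ne'
    exact this.of_le (by norm_cast)
  have hA' : ContDiffAt ℝ 1 (fun q => A (e.symm q)) 0 :=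
    ContDiffAt.comp (g := A) (f := e.symm) (0 : ℝ × ℝ) (by rw [hes0]; exact hAd) hes
  have hB' : ContDiffAt ℝ 1 (fun q => B (e.symm q)) 0 :=
    ContDiffAt.comp (g := B) (f := e.symm) (0 : ℝ × ℝ) (by rw [hes0]; exact hBd) hes
  have hBB0 : B (e.symm 0) = B 0 := by rw [hes0]
  obtain ⟨LA, TA, hTA, hLA⟩ := hA'.exists_lipschitzOnWith
  obtain ⟨LB, TB, hTB, hLB⟩ := hB'.exists_lipschitzOnWith
  have hest : Tendsto e.symm (nhds 0) (nhds 0) := by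
    have := hes.continuousAt.tendsto
    rwa [hes0] at this
  have hev : ∀ᶠ q in nhds (0 : ℝ × ℝ), q ∈ TA ∧ q ∈ TB ∧ q ∈ e.target ∧
      (B 0 / 2 ≤ B (e.symm q) ∧ B (e.symm q) ≤ 2 * B 0) ∧
      (δ (e.symm q) = 0 → ((e.symm q).1 ≠ 0 → A (e.symm q) < 0) ∧ - A (e.symm q) ≤ k1 * (e.symm q).1 ^ 2) := by
    have h1 : ∀ᶠ q in nhds (0 : ℝ × ℝ), B (e.symm q) ∈ Icc (B 0 / 2) (2 * B 0) := by
      refine hB'.continuousAt.eventually (Icc_mem_nhds ?_ ?_)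
      · simp only [hes0]; linarith
      · simp only [hes0]; linarith
    filter_upwards [hTA, hTB, e.open_target.mem_nhds htar, h1, hest.eventually hAn] with q q1 q2 q3 q4 q5
    exact ⟨q1, q2, q3, q4, q5⟩
  obtain ⟨r, hr, hrb⟩ := Metric.nhds_basis_closedBall.eventually_iff.1 hev
  have hbox : ∀ x w, |x| ≤ r → |w| ≤ r → ((x, w) : ℝ × ℝ) ∈ Metric.closedBall (0 : ℝ × ℝ) r := by
    intro x w hx hw
    rw [← box_eq]; exact ⟨hx, hw⟩
  have hdist : ∀ x w w' : ℝ, dist ((x, w) : ℝ × ℝ) (x, w') = |w - w'| := by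
    intro x w w'
    simp [Prod.dist_eq, Real.dist_eq]
  have hsy : ∀ q ∈ e.target, ε * (e.symm q).1 = q.1 ∧ δ (e.symm q) = q.2 := by
    intro q hq
    have := e.right_inv hq
    rw [heq] at this
    exact ⟨congrArg Prod.fst this, congrArg Prod.snd this⟩
  have hsq : ∀ z : ℝ, z ^ 2 = (ε * z) ^ 2 := fun z => by rw [mul_pow, sq ε, hε, one_mul]
  obtain ⟨Y, ρ, hρ, hY⟩ := exists_sys (A := fun q => A (e.symm q)) (B := fun q => B (e.symm q))
    (ℓ := max (LA : ℝ) (LB : ℝ)) (r := r) (k1 := k1) hr (le_max_of_le_left LA.2)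
    (fun x w w' hx hw hw' => by
      have := hLA.dist_le_mul _ (hrb (hbox x w hx hw)).1 _ (hrb (hbox x w' hx hw')).1
      rw [hdist, Real.dist_eq] at this
      exact this.trans (mul_le_mul_of_nonneg_right (le_max_left _ _) (abs_nonneg _)))
    (fun x w w' hx hw hw' => by
      have := hLB.dist_le_mul _ (hrb (hbox x w hx hw)).2.1 _ (hrb (hbox x w' hx hw')).2.1
      rw [hdist, Real.dist_eq] at this
      exact this.trans (mul_le_mul_of_nonneg_right (le_max_right _ _) (abs_nonneg _)))
    (by rw [box_eq]; exact hLA.continuousOn.mono fun q hq => (hrb hq).1)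
    (by rw [box_eq]; exact hLB.continuousOn.mono fun q hq => (hrb hq).2.1)
    (β0 := B 0 / 2) (β1 := 2 * B 0) (by linarith)
    (fun x w hx hw => (hrb (hbox x w hx hw)).2.2.2.1)
    (by show A (e.symm 0) = 0; rw [hes0, hA0])
    (fun x hx hne => by
      have h := hrb (hbox x 0 hx (by simpa using hr.le))
      obtain ⟨h1, h2⟩ := hsy _ h.2.2.1
      refine (h.2.2.2.2 h2).1 ?_
      intro h0
      rw [h0] at h1; simp at h1; exact hne h1.symm)
    (fun x hx => by
      have h := hrb (hbox x 0 hx (by simpa using hr.le))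
      obtain ⟨h1, h2⟩ := hsy _ h.2.2.1
      have := (h.2.2.2.2 h2).2
      rwa [hsq, h1] at this)
  -- the domain
  have het : Tendsto e (nhds 0) (nhds 0) := by
    have := (e.continuousAt he0).tendsto
    rwa [hezero] at this
  have hΩev : ∀ᶠ p in nhds (0 : ℝ × ℝ), p ∈ e.source ∧ 0 < a p ∧ pdy δ p ≠ 0 ∧
      DifferentiableAt ℝ e.symm (e p) ∧ |ε * p.1| ≤ ρ ∧ |δ p| ≤ ρ ^ 2 := by
    have h1 : ∀ᶠ p in nhds (0 : ℝ × ℝ), 0 < a p := ha.continuous.continuousAt.eventually (lt_mem_nhds ha0)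
    have h2 : ∀ᶠ p in nhds (0 : ℝ × ℝ), pdy δ p ≠ 0 :=
      hδs.pdy.continuous.continuousAt.eventually (isOpen_ne.mem_nhds hδy)
    have h3 : ∀ᶠ p in nhds (0 : ℝ × ℝ), DifferentiableAt ℝ e.symm (e p) := by
      refine het.eventually ?_
      filter_upwards [hes.eventually (by simp)] with q hq using hq.differentiableAt one_ne_zero
    have h4 : ∀ᶠ p in nhds (0 : ℝ × ℝ), |ε * p.1| ≤ ρ := by
      have : Continuous fun p : ℝ × ℝ => |ε * p.1| := by fun_prop
      exact this.continuousAt.eventually (ge_mem_nhds (by simpa using hρ))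
    have h5 : ∀ᶠ p in nhds (0 : ℝ × ℝ), |δ p| ≤ ρ ^ 2 := by
      have : Continuous fun p : ℝ × ℝ => |δ p| := hδs.continuous.abs
      exact this.continuousAt.eventually (ge_mem_nhds (by simp only [hδ0, abs_zero]; positivity))
    filter_upwards [e.open_source.mem_nhds he0, h1, h2, h3, h4, h5] with p p1 p2 p3 p4 p5 p6
    exact ⟨p1, p2, p3, p4, p5, p6⟩
  obtain ⟨Ω, hΩ, hΩo, hΩ0⟩ := eventually_nhds_iff.1 hΩev
  have hF : ∀ p ∈ Ω, 0 ≤ δ p → Y.F true (ε * p.1) (δ p) = A p + √(δ p) * B p ∧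
      Y.F false (ε * p.1) (δ p) = A p - √(δ p) * B p := by
    intro p hp hpos
    have h := hY (ε * p.1) (δ p) (hΩ p hp).2.2.2.2.1 hpos ((le_abs_self _).trans (hΩ p hp).2.2.2.2.2)
    have h2 : e.symm (ε * p.1, δ p) = p := by rw [← heq]; exact e.left_inv (hΩ p hp).1
    simp only [h2] at h
    exact h
  have hbq : ∀ p (v : ℝ × ℝ), a p * BDE a b c p v = (a p * v.2 + b p * v.1) ^ 2 - δ p * v.1 ^ 2 := by
    intro p v; rw [hδ]; simp only [BDE]; ring
  refine ⟨Y, e, Ω, hΩo, hΩ0, fun p hp => (hΩ p hp).1, hezero, ?_, ?_, ?_⟩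
  · refine (Metric.isBounded_closedBall (x := (0 : ℝ × ℝ)) (r := max ρ (ρ ^ 2))).subset ?_
    rintro _ ⟨p, hp, rfl⟩
    rw [← box_eq, heq]
    exact ⟨(hΩ p hp).2.2.2.2.1.trans (le_max_left _ _), (hΩ p hp).2.2.2.2.2.trans (le_max_right _ _)⟩
  · rintro γ I ⟨⟨t1, t2, rfl⟩, dγ, hdc, hγ⟩ hne hmaps
    have ht12 : t1 < t2 := nonempty_Ioo.1 hne
    have hq : ∀ t ∈ Ioo t1 t2, (a (γ t) * (dγ t).2 + b (γ t) * (dγ t).1) ^ 2 = δ (γ t) * (dγ t).1 ^ 2 := by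
      intro t ht
      have := hbq (γ t) (dγ t)
      rw [(hγ t ht).2.2, mul_zero] at this
      linarith
    have hv1 : ∀ t ∈ Ioo t1 t2, (dγ t).1 ≠ 0 := by
      intro t ht h0
      have h1 := hq t ht
      rw [h0] at h1
      simp only [mul_zero, add_zero, ne_eq, OfNat.ofNat_ne_zero, not_false_eq_true, zero_pow] at h1
      have h2 := pow_eq_zero_iff (two_ne_zero) |>.1 h1
      have h3 := (mul_eq_zero.1 h2).resolve_left (hΩ _ (hmaps ht)).2.1.ne'
      exact (hγ t ht).2.1 (Prod.ext h0 h3)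
    have hδp : ∀ t ∈ Ioo t1 t2, 0 ≤ δ (γ t) := by
      intro t ht
      have h1 := hq t ht
      have h2 : 0 < (dγ t).1 ^ 2 := by have := hv1 t ht; positivity
      by_contra hneg
      push Not at hneg
      nlinarith [sq_nonneg (a (γ t) * (dγ t).2 + b (γ t) * (dγ t).1), mul_pos_of_neg_of_neg hneg (neg_lt_zero.2 h2)]
    set X : ℝ → ℝ := fun t => ε * (γ t).1 with hX
    have hXd : ∀ t ∈ Ioo t1 t2, HasDerivAt X (ε * (dγ t).1) t := fun t ht =>
      ((hasFDerivAt_fst (𝕜 := ℝ) (E := ℝ) (F := ℝ)).comp_hasDerivAt t (hγ t ht).1).const_mul ε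
    have hε0 : ε ≠ 0 := fun h => by rw [h] at hε; simp at hε
    have hXd0 : ∀ t ∈ Ioo t1 t2, ε * (dγ t).1 ≠ 0 := fun t ht => mul_ne_zero hε0 (hv1 t ht)
    have hXc : ContinuousOn X (Ioo t1 t2) := fun t ht => (hXd t ht).continuousAt.continuousWithinAt
    have hlt : ∀ x ∈ Ioo t1 t2, ∀ y ∈ Ioo t1 t2, x < y → X x ≠ X y := by
      intro x hx y hy hxy h
      have hsub : Icc x y ⊆ Ioo t1 t2 := fun z hz => ⟨hx.1.trans_le hz.1, hz.2.trans_lt hy.2⟩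
      obtain ⟨z, hz, hz0⟩ := exists_hasDerivAt_eq_zero hxy (hXc.mono hsub) h
        (f' := fun t => ε * (dγ t).1) (fun z hz => hXd z (hsub (Ioo_subset_Icc_self hz)))
      exact hXd0 z (hsub (Ioo_subset_Icc_self hz)) hz0
    have hXi : InjOn X (Ioo t1 t2) := by
      intro x hx y hy hxy
      rcases lt_trichotomy x y with h | h | h
      · exact absurd hxy (hlt x hx y hy h)
      · exact h
      · exact absurd hxy.symm (hlt y hy x hx h)
    obtain ⟨c', d', hcd', hXim⟩ := image_Ioo_eq ht12 hXc hXi (by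
      refine (Metric.isBounded_closedBall (x := (0 : ℝ)) (r := ρ)).subset ?_
      rintro _ ⟨t, ht, rfl⟩
      simpa [hX] using (hΩ _ (hmaps ht)).2.2.2.2.1)
    set inv := Function.invFunOn X (Ioo t1 t2) with hinv
    have hinvX : ∀ t ∈ Ioo t1 t2, inv (X t) = t := fun t ht => hXi.leftInvOn_invFunOn ht
    refine ⟨fun x => δ (γ (inv x)), c', d', Sys.curve_of hcd' ?_, ?_⟩
    · intro x hx
      rw [← hXim] at hx
      obtain ⟨t, ht, rfl⟩ := hx
      simp only [hinvX t ht]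
      refine ⟨hδp t ht, ?_⟩
      have hmem : ∀ᶠ y in nhds t, y ∈ Ioo t1 t2 := Ioo_mem_nhds ht.1 ht.2
      have hst : HasStrictDerivAt X (ε * (dγ t).1) t := by
        refine hasStrictDerivAt_of_hasDerivAt_of_continuousAt (f' := fun t => ε * (dγ t).1)
          (hmem.mono hXd) ?_
        have := (hdc.continuousAt hmem)
        exact continuousAt_const.mul (continuous_fst.continuousAt.comp this)
      have hid := (hst.to_local_left_inverse (hXd0 t ht) (hmem.mono hinvX)).hasDerivAt
      have hw := hasDerivAt_pair (hδs.diff (γ t)) (hγ t ht).1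
      have hcomp := HasDerivAt.comp (X t) (h₂ := fun s => δ (γ s)) (h := inv) (by rw [hinvX t ht]; exact hw) hid
      set v1 := (dγ t).1 with hv1def
      set v2 := (dγ t).2 with hv2def
      have hap := (hΩ _ (hmaps ht)).2.1
      set q := (a (γ t) * v2 + b (γ t) * v1) / v1 with hqdef
      have hv1t : v1 ≠ 0 := hv1 t ht
      have hap' := hap.ne'
      have hq2 : q ^ 2 = δ (γ t) := by
        rw [hqdef, div_pow, hq t ht]; exact mul_div_cancel_right₀ _ (pow_ne_zero 2 hv1t)
      have hsqrt : √(δ (γ t)) = |q| := by rw [← hq2, Real.sqrt_sq_eq_abs]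
      have hεs : |ε * s * q| = |q| := by
        have : (ε * s * q) ^ 2 = q ^ 2 := by
          have : (ε * s * q) ^ 2 = (ε * ε) * (s * s) * q ^ 2 := by ring
          rw [this, hε, hs]; ring
        exact (sq_eq_sq_iff_abs_eq_abs _ _).1 this
      have hder : (pdx δ (γ t) * v1 + pdy δ (γ t) * v2) * (ε * v1)⁻¹ = A (γ t) + (ε * s * q) * B (γ t) := by
        have e1 : ε * s * q * B (γ t) = (s * s) * (ε * (q * pdy δ (γ t) / a (γ t))) := by
          simp only [hB]; ring
        have hεi : ε⁻¹ = ε := by field_simp; rw [sq]; exact hε.symm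
        rw [e1, hs, hA, hqdef, mul_inv, hεi]
        field_simp
        ring
      rw [hder] at hcomp
      have hFp := hF (γ t) (hmaps ht) (hδp t ht)
      rw [hsqrt, ← hεs] at hFp
      rcases le_total 0 (ε * s * q) with h0 | h0
      · refine ⟨true, ?_⟩
        rw [abs_of_nonneg h0] at hFp
        rw [show X t = ε * (γ t).1 from rfl, hFp.1]
        exact hcomp
      · refine ⟨false, ?_⟩
        rw [abs_of_nonpos h0] at hFp
        rw [show X t = ε * (γ t).1 from rfl, hFp.2]
        have : A (γ t) - -(ε * s * q) * B (γ t) = A (γ t) + (ε * s * q) * B (γ t) := by ring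
        rw [this]
        exact hcomp
    · rw [Sys.Gr, ← hXim, image_image, image_image]
      refine image_congr fun t ht => ?_
      rw [heq]; simp only [hinvX t ht]; rfl
  · intro g c' d' hcur hsub
    obtain ⟨dg, hdgc, hdg⟩ := hcur.deriv
    set γ : ℝ → ℝ × ℝ := fun t => e.symm (t, g t) with hγdef
    have hp : ∀ t ∈ Ioo c' d', γ t ∈ Ω ∧ e (γ t) = (t, g t) := by
      intro t ht
      obtain ⟨p, hp, hpe⟩ := hsub ⟨t, ht, rfl⟩
      have : γ t = p := by
        simp only [hγdef]
        have hpe : e p = (t, g t) := hpe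
        rw [← hpe]; exact e.left_inv (hΩ p hp).1
      rw [this]; exact ⟨hp, hpe⟩
    have hp1 : ∀ t ∈ Ioo c' d', ε * (γ t).1 = t ∧ δ (γ t) = g t := by
      intro t ht
      have := (hp t ht).2
      rw [heq] at this
      exact ⟨congrArg Prod.fst this, congrArg Prod.snd this⟩
    set dγ : ℝ → ℝ × ℝ := fun t => (ε, (dg t - ε * pdx δ (γ t)) / pdy δ (γ t)) with hdγ
    have hε0 : ε ≠ 0 := fun h => by rw [h] at hε; simp at hε
    have hder : ∀ t ∈ Ioo c' d', HasDerivAt γ (dγ t) t := by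
      intro t ht
      have hd1 : DifferentiableAt ℝ e.symm (t, g t) := by
        rw [← (hp t ht).2]; exact (hΩ _ (hp t ht).1).2.2.2.1
      have hd2 : HasDerivAt (fun t => (t, g t)) (1, dg t) t := (hasDerivAt_id t).prodMk (hdg t ht).2.1
      have hd3 := HasFDerivAt.comp_hasDerivAt (l := e.symm) t hd1.hasFDerivAt hd2
      set v := fderiv ℝ e.symm (t, g t) (1, dg t) with hv
      have hd3 : HasDerivAt γ v t := hd3
      have hmem : ∀ᶠ y in nhds t, y ∈ Ioo c' d' := Ioo_mem_nhds ht.1 ht.2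
      have e1 : ε * v.1 = 1 := by
        have h1 : HasDerivAt (fun s => ε * (γ s).1) (ε * v.1) t :=
          ((hasFDerivAt_fst (𝕜 := ℝ) (E := ℝ) (F := ℝ)).comp_hasDerivAt t hd3).const_mul ε
        refine h1.unique ((hasDerivAt_id t).congr_of_eventuallyEq ?_)
        filter_upwards [hmem] with y hy using (hp1 y hy).1
      have e2 : pdx δ (γ t) * v.1 + pdy δ (γ t) * v.2 = dg t := by
        have h1 := hasDerivAt_pair (hδs.diff (γ t)) hd3
        refine h1.unique ((hdg t ht).2.1.congr_of_eventuallyEq ?_)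
        filter_upwards [hmem] with y hy using (hp1 y hy).2
      have e3 : v.1 = ε := by
        have : v.1 = (ε * ε) * v.1 := by rw [hε, one_mul]
        rw [this, mul_assoc, e1, mul_one]
      have hne := (hΩ _ (hp t ht).1).2.2.1
      have : v = dγ t := by
        apply Prod.ext
        · exact e3
        · simp only [hdγ]; rw [eq_div_iff hne, ← e2, e3]; ring
      rw [← this]; exact hd3
    refine ⟨γ, Ioo c' d', ⟨⟨c', d', rfl⟩, dγ, ?_, fun t ht => ⟨hder t ht, ?_, ?_⟩⟩, ?_⟩
    · have hγc : ContinuousOn γ (Ioo c' d') := fun t ht => (hder t ht).continuousAt.continuousWithinAt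
      refine continuousOn_const.prodMk (ContinuousOn.div (hdgc.sub (continuousOn_const.mul
        (hδs.pdx.continuous.comp_continuousOn hγc))) (hδs.pdy.continuous.comp_continuousOn hγc)
        (fun t ht => (hΩ _ (hp t ht).1).2.2.1))
    · intro h
      exact hε0 (congrArg Prod.fst h)
    · have hap := (hΩ _ (hp t ht).1).2.1
      have hne := (hΩ _ (hp t ht).1).2.2.1
      obtain ⟨hg0, _, τ, hτ⟩ := hdg t ht
      have hδ0' : 0 ≤ δ (γ t) := by rw [(hp1 t ht).2]; exact hg0
      have hFp := hF (γ t) (hp t ht).1 hδ0'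
      rw [(hp1 t ht).1] at hFp
      rw [← (hp1 t ht).2] at hτ
      obtain ⟨m, hm, hdm⟩ : ∃ m : ℝ, m ^ 2 = δ (γ t) ∧ dg t = A (γ t) + m * B (γ t) := by
        cases τ
        · exact ⟨-√(δ (γ t)), by rw [neg_sq, Real.sq_sqrt hδ0'], by rw [hτ, hFp.2]; ring⟩
        · exact ⟨√(δ (γ t)), Real.sq_sqrt hδ0', by rw [hτ, hFp.1]⟩
      have h2 : a (γ t) * (dγ t).2 + b (γ t) * (dγ t).1 = m * s := by
        simp only [hdγ]
        rw [hdm, hA]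
        simp only [hB]
        have hap' := hap.ne'
        field_simp
        ring
      have h3 := hbq (γ t) (dγ t)
      rw [h2, mul_pow, hm, sq s, hs] at h3
      have h4 : (dγ t).1 ^ 2 = 1 := by simp only [hdγ]; rw [sq, hε]
      rw [h4, sub_self] at h3
      exact (mul_eq_zero.1 h3).resolve_left hap.ne'
    · rw [Sys.Gr, image_image]

lemma red_curve {ω ω' : (ℝ × ℝ) → (ℝ × ℝ) → ℝ} {Y Z : Sys} {e1 e2 : OpenPartialHomeomorph (ℝ × ℝ) (ℝ × ℝ)}
    {Ω1 Ω2 : Set (ℝ × ℝ)} (R1 : Red ω Y e1 Ω1) (R2 : Red ω' Z e2 Ω2) {φ} (hg : Sys.Good Y Z φ)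
    (γ : ℝ → ℝ × ℝ) (I : Set ℝ) (hγ : IsIntegralCurveOnBDE ω γ I)
    (hm : MapsTo γ I {p | p ∈ Ω1 ∧ Sys.H Y Z φ (e1 p) ∈ e2 '' Ω2}) :
    ∃ σ J, IsIntegralCurveOnBDE ω' σ J ∧
      (fun p => e2.symm (Sys.H Y Z φ (e1 p))) '' (γ '' I) = σ '' J := by
  rcases I.eq_empty_or_nonempty with rfl | hne
  · refine ⟨fun _ => 0, ∅, ⟨⟨0, 0, by simp⟩, fun _ => 0, by simp, by simp⟩, by simp⟩
  · obtain ⟨g, c, d, hc, he⟩ := R1.r1 γ I hγ hne (fun t ht => (hm ht).1)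
    have hb : Bornology.IsBounded (Sys.Gr g c d) := by
      rw [← he]
      refine R1.bdd.subset (image_mono ?_)
      rintro _ ⟨t, ht, rfl⟩
      exact (hm ht).1
    obtain ⟨g2, c2, d2, hc2, he2⟩ := Sys.curve_img hg hc hb
    obtain ⟨σ, J, hσ, hJ⟩ := R2.r2 g2 c2 d2 hc2 (by
      rw [← he2, ← he]
      rintro _ ⟨_, ⟨_, ⟨t, ht, rfl⟩, rfl⟩, rfl⟩
      exact (hm ht).2)
    refine ⟨σ, J, hσ, ?_⟩
    rw [← hJ, ← he2, ← he, image_image, image_image, image_image, image_image]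

lemma red_open {ω ω' : (ℝ × ℝ) → (ℝ × ℝ) → ℝ} {Y Z : Sys} {e1 e2 : OpenPartialHomeomorph (ℝ × ℝ) (ℝ × ℝ)}
    {Ω1 Ω2 : Set (ℝ × ℝ)} (R1 : Red ω Y e1 Ω1) (R2 : Red ω' Z e2 Ω2) {φ} (hg : Sys.Good Y Z φ) :
    IsOpen {p | p ∈ Ω1 ∧ Sys.H Y Z φ (e1 p) ∈ e2 '' Ω2} ∧
    (0 : ℝ × ℝ) ∈ {p | p ∈ Ω1 ∧ Sys.H Y Z φ (e1 p) ∈ e2 '' Ω2} ∧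
    ContinuousOn (fun p => e2.symm (Sys.H Y Z φ (e1 p))) {p | p ∈ Ω1 ∧ Sys.H Y Z φ (e1 p) ∈ e2 '' Ω2} := by
  have ho : IsOpen (e2 '' Ω2) := e2.isOpen_image_of_subset_source R2.op R2.sub
  have hcH : Continuous (Sys.H Y Z φ) := (Sys.Hh hg).continuous
  have hc : ContinuousOn (fun p => Sys.H Y Z φ (e1 p)) Ω1 :=
    hcH.comp_continuousOn (e1.continuousOn.mono R1.sub)
  refine ⟨hc.isOpen_inter_preimage R1.op ho, ⟨R1.mem, 0, R2.mem, ?_⟩, ?_⟩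
  · rw [R1.zero, R2.zero, Sys.H_zero hg]
  · refine e2.symm.continuousOn.comp (hc.mono fun p hp => hp.1) ?_
    rintro p ⟨_, q, hq, he⟩
    show Sys.H Y Z φ (e1 p) ∈ e2.target
    rw [← he]; exact e2.map_source (R2.sub hq)

lemma red_map {ω ω' : (ℝ × ℝ) → (ℝ × ℝ) → ℝ} {Y Z : Sys} {e1 e2 : OpenPartialHomeomorph (ℝ × ℝ) (ℝ × ℝ)}
    {Ω1 Ω2 : Set (ℝ × ℝ)} (R1 : Red ω Y e1 Ω1) (R2 : Red ω' Z e2 Ω2) {φ} (hg : Sys.Good Y Z φ)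
    {p : ℝ × ℝ} (hp : p ∈ {p | p ∈ Ω1 ∧ Sys.H Y Z φ (e1 p) ∈ e2 '' Ω2}) :
    e2.symm (Sys.H Y Z φ (e1 p)) ∈ {q | q ∈ Ω2 ∧ Sys.H Z Y φ.symm (e2 q) ∈ e1 '' Ω1} ∧
    e1.symm (Sys.H Z Y φ.symm (e2 (e2.symm (Sys.H Y Z φ (e1 p))))) = p := by
  obtain ⟨h1, q, hq, he⟩ := hp
  rw [← he, e2.left_inv (R2.sub hq), he, Sys.H_inv hg]
  refine ⟨⟨hq, ?_⟩, e1.left_inv (R1.sub h1)⟩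
  rw [he, Sys.H_inv hg]; exact ⟨p, h1, rfl⟩

theorem red_equiv {ω ω' : (ℝ × ℝ) → (ℝ × ℝ) → ℝ} {Y Z : Sys} {e1 e2 : OpenPartialHomeomorph (ℝ × ℝ) (ℝ × ℝ)}
    {Ω1 Ω2 : Set (ℝ × ℝ)} (R1 : Red ω Y e1 Ω1) (R2 : Red ω' Z e2 Ω2) : TopEquivAt0 ω ω' := by
  obtain ⟨φ, hg⟩ := Sys.exists_Good Y Z
  have hg' : Sys.Good Z Y φ.symm := hg.symm
  have o1 := red_open R1 R2 hg
  have o2 := red_open R2 R1 hg'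
  have m1 : ∀ p ∈ {p | p ∈ Ω1 ∧ Sys.H Y Z φ (e1 p) ∈ e2 '' Ω2}, _ := fun p hp => red_map R1 R2 hg hp
  have m2 : ∀ p ∈ {p | p ∈ Ω2 ∧ Sys.H Z Y φ.symm (e2 p) ∈ e1 '' Ω1}, _ := fun p hp => red_map R2 R1 hg' hp
  have hinv : InvOn (fun p => e1.symm (Sys.H Z Y φ.symm (e2 p))) (fun p => e2.symm (Sys.H Y Z φ (e1 p)))
    {p | p ∈ Ω1 ∧ Sys.H Y Z φ (e1 p) ∈ e2 '' Ω2} {p | p ∈ Ω2 ∧ Sys.H Z Y φ.symm (e2 p) ∈ e1 '' Ω1} :=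
    ⟨fun p hp => (m1 p hp).2, fun p hp => (m2 p hp).2⟩
  refine ⟨_, _, _, _, o1.1, o2.1, o1.2.1, o2.2.1, ?_, o1.2.2, o2.2.2, ?_, hinv, ?_, ?_⟩
  · show e2.symm (Sys.H Y Z φ (e1 0)) = 0
    rw [R1.zero, Sys.H_zero hg]
    have := e2.left_inv (R2.sub R2.mem)
    rwa [R2.zero] at this
  · exact hinv.bijOn (fun p hp => (m1 p hp).1) (fun p hp => (m2 p hp).1)
  · exact fun γ I h hm => red_curve R1 R2 hg γ I h hm
  · exact fun γ I h hm => red_curve R2 R1 hg' γ I h hm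

lemma model_red : ∃ Y e Ω, Red (BDE (fun _ => 1) (fun _ => 0) (fun p => -p.2 + p.1 ^ 3)) Y e Ω := by
  set δ : ℝ × ℝ → ℝ := fun p => (0 : ℝ) ^ 2 - 1 * (-p.2 + p.1 ^ 3) with hδ
  have hx : ∀ p, pdx δ p = - (3 * p.1 ^ 2) := by
    intro p
    have h : HasDerivAt (fun s => (0 : ℝ) ^ 2 - 1 * (-p.2 + s ^ 3)) (-(1 * (3 * p.1 ^ 2))) p.1 := by
      have := ((((hasDerivAt_pow 3 p.1).const_add (-p.2)).const_mul 1).const_sub ((0 : ℝ) ^ 2))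
      simpa using this
    have := h.deriv
    rw [one_mul] at this
    exact this
  have hy : ∀ p, pdy δ p = 1 := by
    intro p
    have h : HasDerivAt (fun s => (0 : ℝ) ^ 2 - 1 * (-s + p.1 ^ 3)) (-(1 * (-1))) p.2 :=
      ((((hasDerivAt_id p.2).neg).add_const (p.1 ^ 3)).const_mul 1).const_sub ((0 : ℝ) ^ 2)
    have := h.deriv
    norm_num at this
    simpa [pdy, hδ] using this
  refine reduce (δ := δ) (ε := 1) (k1 := 3) (A := fun p => 1 * (pdx δ p - pdy δ p * 0 / 1))
    contDiff_const contDiff_const (contDiff_snd.neg.add (contDiff_fst.pow 3)) one_pos hδ ?_ ?_ (by norm_num) rfl ?_ ?_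
  · simp [hδ]
  · rw [hy]; norm_num
  · rw [hx]; simp
  · filter_upwards with p _
    rw [hx]
    constructor
    · intro h
      have : 0 < p.1 ^ 2 := by positivity
      linarith
    · linarith

lemma const_pow_zero {d : ℝ} {n : ℕ} (h : (fun s : ℝ => d * s ^ n) =o[nhds 0] fun s => s ^ n) : d = 0 := by
  by_contra hd
  have h2 := (isLittleO_const_mul_left_iff hd).1 h
  have h3 : (fun s : ℝ => s ^ n) =o[nhdsWithin 0 {0}ᶜ] fun s => s ^ n := h2.mono nhdsWithin_le_nhds
  refine isLittleO_irrefl ?_ h3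
  refine Eventually.frequently ?_
  filter_upwards [self_mem_nhdsWithin] with s hs
  exact pow_ne_zero n hs

lemma poly_zero (d : ℕ → ℝ) (n : ℕ)
    (h : (fun s : ℝ => ∑ k ∈ Finset.range (n + 1), d k * s ^ k) =o[nhds 0] fun s => s ^ n) :
    ∀ k ≤ n, d k = 0 := by
  induction n with
  | zero =>
    intro k hk
    obtain rfl : k = 0 := by omega
    apply const_pow_zero (n := 0)
    simpa using h
  | succ n ih =>
    have hlt : (fun s : ℝ => s ^ (n + 1)) =o[nhds 0] fun s => s ^ n := isLittleO_pow_pow (Nat.lt_succ_self n)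
    have h1 : (fun s : ℝ => ∑ k ∈ Finset.range (n + 1), d k * s ^ k) =o[nhds 0] fun s => s ^ n := by
      have := (h.trans hlt).sub (hlt.const_mul_left (d (n + 1)))
      refine this.congr_left fun s => ?_
      rw [Finset.sum_range_succ]; ring
    have h2 := ih h1
    intro k hk
    rcases Nat.lt_or_ge k (n + 1) with hk' | hk'
    · exact h2 k (by omega)
    · obtain rfl : k = n + 1 := by omega
      apply const_pow_zero (n := n + 1)
      refine h.congr_left fun s => ?_
      rw [Finset.sum_range_succ, Finset.sum_eq_zero, zero_add]
      intro j hj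
      rw [h2 j (by simpa [Nat.lt_succ_iff] using hj), zero_mul]

lemma jet_coef {g : ℝ → ℝ} (hg : ContDiff ℝ (⊤ : ℕ∞) g) (c : ℕ → ℝ) (n : ℕ)
    (h : (fun s : ℝ => g s - ∑ k ∈ Finset.range (n + 1), c k * s ^ k) =o[nhds 0] fun s => s ^ n) :
    ∀ k ≤ n, iteratedDeriv k g 0 = k.factorial * c k := by
  have ht := taylor_isLittleO_univ (x₀ := 0) (n := n) (f := g) (hg.of_le (by exact_mod_cast le_top))
  simp only [sub_zero] at ht
  have := poly_zero (fun k => (k.factorial : ℝ)⁻¹ * iteratedDeriv k g 0 - c k) n (by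
    refine (h.sub ht).congr_left fun s => ?_
    rw [taylor_within_apply]
    simp only [sub_zero, iteratedDerivWithin_univ, smul_eq_mul, sub_mul, Finset.sum_sub_distrib]
    have : ∀ k : ℕ, (k.factorial : ℝ)⁻¹ * s ^ k * iteratedDeriv k g 0 = (k.factorial : ℝ)⁻¹ * iteratedDeriv k g 0 * s ^ k := 
      fun k => by ring
    simp only [this]
    ring)
  intro k hk
  have h1 := this k hk
  have h2 : (k.factorial : ℝ) ≠ 0 := by positivity
  field_simp at h1
  linarith

lemma pd_comm {F} (h : Sm F) : pdx (pdy F) = pdy (pdx F) := by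
  funext p
  have hs : IsSymmSndFDerivAt ℝ F p :=
    (h.contDiffAt).isSymmSndFDerivAt (by simp only [minSmoothness_of_isRCLikeNormedField]; exact WithTop.coe_le_coe.2 (le_top (a := (2 : ℕ∞))))
  have h2 : Differentiable ℝ (fderiv ℝ F) :=
    (ContDiff.fderiv_right (m := (⊤ : ℕ∞)) h (by simp)).differentiable (by simp)
  have key : ∀ v w : ℝ × ℝ, fderiv ℝ (fun p => fderiv ℝ F p v) p w = fderiv ℝ (fderiv ℝ F) p w v := by
    intro v w
    have := ((h2 p).hasFDerivAt.clm_apply (hasFDerivAt_const v p)).fderiv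
    rw [this]; simp
  rw [pdx_eq h.pdy.diff, pdy_eq h.pdx.diff, pdx_eq h.diff, pdy_eq h.diff]
  simp only
  rw [key, key]
  exact hs _ _

/-- directional derivative -/
def Dm (m : ℝ) (F : ℝ × ℝ → ℝ) : ℝ × ℝ → ℝ := fun p => pdx F p + m * pdy F p

lemma pdx_lin {F G} (m : ℝ) (hF : Sm F) (hG : Sm G) :
    pdx (fun p => F p + m * G p) = fun p => pdx F p + m * pdx G p := by
  have hs : Sm (fun p => F p + m * G p) := hF.add (contDiff_const.mul hG)
  rw [pdx_eq hs.diff, pdx_eq hF.diff, pdx_eq hG.diff]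
  funext p
  have := ((hF.diff p).hasFDerivAt.add ((hG.diff p).hasFDerivAt.const_mul m)).fderiv
  have e : (fun p => F p + m * G p) = F + fun y => m * G y := rfl
  rw [e, this]; simp

lemma pdy_lin {F G} (m : ℝ) (hF : Sm F) (hG : Sm G) :
    pdy (fun p => F p + m * G p) = fun p => pdy F p + m * pdy G p := by
  have hs : Sm (fun p => F p + m * G p) := hF.add (contDiff_const.mul hG)
  rw [pdy_eq hs.diff, pdy_eq hF.diff, pdy_eq hG.diff]
  funext p
  have := ((hF.diff p).hasFDerivAt.add ((hG.diff p).hasFDerivAt.const_mul m)).fderiv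
  have e : (fun p => F p + m * G p) = F + fun y => m * G y := rfl
  rw [e, this]; simp

lemma Sm.Dm {F} (h : Sm F) (m : ℝ) : Sm (Dm m F) := h.pdx.add (contDiff_const.mul h.pdy)

lemma Dm_lin {F G} (m : ℝ) (hF : Sm F) (hG : Sm G) :
    Dm m (fun p => F p + m * G p) = fun p => Dm m F p + m * Dm m G p := by
  funext p
  simp only [Dm]
  rw [pdx_lin m hF hG, pdy_lin m hF hG]; ring

lemma Dm_iter_lin (m : ℝ) (k : ℕ) : ∀ {F G}, Sm F → Sm G →
    (Dm m)^[k] (fun p => F p + m * G p) = fun p => (Dm m)^[k] F p + m * (Dm m)^[k] G p := by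
  induction k with
  | zero => intro F G _ _; rfl
  | succ k ih =>
    intro F G hF hG
    rw [Function.iterate_succ_apply, Dm_lin m hF hG, ih (hF.Dm m) (hG.Dm m)]
    rfl

lemma Dm_succ (m : ℝ) (k : ℕ) {F} (hF : Sm F) (p : ℝ × ℝ) :
    (Dm m)^[k + 1] F p = (Dm m)^[k] (pdx F) p + m * (Dm m)^[k] (pdy F) p := by
  rw [Function.iterate_succ_apply]
  exact congrFun (Dm_iter_lin m k hF.pdx hF.pdy) p

lemma iter_line (m : ℝ) (k : ℕ) : ∀ {F}, Sm F →
    iteratedDeriv k (fun s : ℝ => F (s, m * s)) = fun s => (Dm m)^[k] F (s, m * s) := by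
  induction k with
  | zero => intro F _; simp
  | succ k ih =>
    intro F hF
    rw [iteratedDeriv_succ']
    have : deriv (fun s : ℝ => F (s, m * s)) = fun s => Dm m F (s, m * s) := by
      funext s
      have h1 : HasDerivAt (fun s : ℝ => (s, m * s)) ((1 : ℝ), m * 1) s :=
        (hasDerivAt_id s).prodMk ((hasDerivAt_id s).const_mul m)
      have := (hasDerivAt_pair (γ := fun s : ℝ => (s, m * s)) (hF.diff _) h1).deriv
      rw [this]; simp [Dm, mul_comm]
    rw [this, ih (hF.Dm m)]
    rfl

lemma jet_line {f P : ℝ × ℝ → ℝ} (hf : Sm f) (n : ℕ) (hjet : HasJetAt0 f P n) (m : ℝ) (c : ℕ → ℝ)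
    (hP : ∀ s : ℝ, P (s, m * s) = ∑ k ∈ Finset.range (n + 1), c k * s ^ k) :
    ∀ k ≤ n, (Dm m)^[k] f 0 = k.factorial * c k := by
  have hg : ContDiff ℝ (⊤ : ℕ∞) (fun s : ℝ => f (s, m * s)) :=
    ContDiff.comp (g := f) hf (contDiff_id.prodMk (contDiff_const.mul contDiff_id))
  have ht : Tendsto (fun s : ℝ => (s, m * s)) (nhds 0) (nhds (0 : ℝ × ℝ)) := by
    have : Continuous (fun s : ℝ => (s, m * s)) := by fun_prop
    have := this.tendsto 0
    rwa [mul_zero, Prod.mk_zero_zero] at this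
  have h1 := hjet.comp_tendsto ht
  have h2 : (fun s : ℝ => ‖(s, m * s)‖ ^ n) =O[nhds 0] fun s => s ^ n := by
    refine IsBigO.pow (IsBigO.norm_left ?_) n
    exact (isBigO_refl _ _).prod_left (isBigO_const_mul_self m _ _)
  have h3 := h1.trans_isBigO h2
  intro k hk
  have := jet_coef hg c n (h3.congr_left fun s => by simp only [Function.comp]; rw [hP]) k hk
  rw [iter_line m k hf] at this
  simpa only [mul_zero, Prod.mk_zero_zero] using this

/-- the partial derivatives at 0 -/
theorem partials (α d0 d1 d2 d3 d4 : ℝ) (f : ℝ × ℝ → ℝ) (hf : Sm f)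
    (hjet : HasJetAt0 f
      (fun p => p.2 ^ 2 + p.1 ^ 2 * p.2 + (1 / 4) * p.1 ^ 4 + α * p.1 ^ 5 +
        p.2 * (d0 * p.1 ^ 4 + d1 * p.1 ^ 3 * p.2 + d2 * p.1 ^ 2 * p.2 ^ 2 +
          d3 * p.1 * p.2 ^ 3 + d4 * p.2 ^ 4)) 5) :
    fyy f 0 = 2 ∧ fxy f 0 = 0 ∧ fxx f 0 = 0 ∧ pdy (fxx f) 0 = 2 ∧ pdx (fxx f) 0 = 0 ∧ pdy (fxy f) 0 = 0 ∧
    pdy (pdx (fxx f)) 0 = 0 ∧ pdx (pdx (fxx f)) 0 = 6 ∧ pdx (pdx (pdx (fxx f))) 0 = 120 * α := by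
  have H : ∀ m : ℝ, ∀ k ≤ 5, (Dm m)^[k] f 0 = k.factorial *
      (if k = 2 then m ^ 2 else if k = 3 then m else if k = 4 then 1 / 4 else if k = 5 then
        α + m * (d0 + d1 * m + d2 * m ^ 2 + d3 * m ^ 3 + d4 * m ^ 4) else 0) := by
    intro m
    refine jet_line hf 5 hjet m (fun k => if k = 2 then m ^ 2 else if k = 3 then m else if k = 4 then 1 / 4
      else if k = 5 then α + m * (d0 + d1 * m + d2 * m ^ 2 + d3 * m ^ 3 + d4 * m ^ 4) else 0) ?_
    intro s
    simp [Finset.sum_range_succ]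
    ring
  have H2 := fun m => H m 2 (by norm_num)
  have H3 := fun m => H m 3 (by norm_num)
  have H4 := fun m => H m 4 (by norm_num)
  have H5 := H 0 5 (by norm_num)
  have s1 : ∀ F, Sm F → Sm (pdx F) := fun F h => h.pdx
  have s2 : ∀ F, Sm F → Sm (pdy F) := fun F h => h.pdy
  have cm : ∀ F, Sm F → pdx (pdy F) = pdy (pdx F) := fun F h => pd_comm h
  have D : ∀ (m : ℝ) (k : ℕ) F, Sm F → ∀ p : ℝ × ℝ,
    (Dm m)^[k + 1] F p = (Dm m)^[k] (pdx F) p + m * (Dm m)^[k] (pdy F) p := fun m k F h p => Dm_succ m k h p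
  have D0 : ∀ (m : ℝ) F, (Dm m)^[0] F = F := fun m F => rfl
  have E5 : ∀ m F, Sm F → ∀ p, (Dm m)^[5] F p = _ := fun m F h p => D m 4 F h p
  have E4 : ∀ m F, Sm F → ∀ p, (Dm m)^[4] F p = _ := fun m F h p => D m 3 F h p
  have E3 : ∀ m F, Sm F → ∀ p, (Dm m)^[3] F p = _ := fun m F h p => D m 2 F h p
  have E2 : ∀ m F, Sm F → ∀ p, (Dm m)^[2] F p = _ := fun m F h p => D m 1 F h p
  have E1 : ∀ m F, Sm F → ∀ p, (Dm m)^[1] F p = _ := fun m F h p => D m 0 F h p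
  clear H hjet D
  have q1 := hf.pdx
  have q2 := hf.pdy
  have q3 := q1.pdx
  have q4 := q1.pdy
  have q5 := q2.pdy
  have q6 := q3.pdx
  have q7 := q3.pdy
  have q8 := q4.pdy
  have q9 := q5.pdy
  simp only [E5, E4, E3, E2, E1, D0, s1, s2, hf, cm, q1, q2, q3, q4, q5, q6, q7, q8, q9] at H2 H3 H4 H5
  clear E5 E4 E3 E2 E1 s1 s2 cm D0
  norm_num [Nat.factorial] at H2 H3 H4 H5
  simp only [fxx, fxy, fyy]
  have a1 := H2 0
  have a2 := H2 1
  have a3 := H2 (-1)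
  have b1 := H3 0
  have b2 := H3 1
  have b3 := H3 (-1)
  have b4 := H3 2
  have c1 := H4 0
  have c2 := H4 1
  have c3 := H4 (-1)
  have c4 := H4 2
  have c5 := H4 (-2)
  norm_num at a1 b1 c1
  refine ⟨?_, ?_, ?_, ?_, ?_, ?_, ?_, ?_, ?_⟩ <;> linarith

lemma tay1 {G} (hG : Sm G) :
    (fun p : ℝ × ℝ => G p - (G 0 + pdx G 0 * p.1 + pdy G 0 * p.2)) =o[nhds 0] fun p => ‖p‖ := by
  have h := (hG.diff 0).hasFDerivAt.isLittleO
  simp only [sub_zero] at h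
  refine h.norm_right.congr_left fun p => ?_
  rw [fderiv_pd hG.diff]; ring

lemma mv_o {E : ℝ × ℝ → ℝ} (hE : Sm E) (h0 : E 0 = 0) (k : ℕ)
    (hx : pdx E =o[nhds 0] fun p => ‖p‖ ^ k) (hy : pdy E =o[nhds 0] fun p => ‖p‖ ^ k) :
    E =o[nhds 0] fun p => ‖p‖ ^ (k + 1) := by
  rw [isLittleO_iff]
  intro c hc
  have h1 := isLittleO_iff.1 hx (half_pos hc)
  have h2 := isLittleO_iff.1 hy (half_pos hc)
  obtain ⟨r, hr, hb⟩ := Metric.nhds_basis_ball.eventually_iff.1 (h1.and h2)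
  filter_upwards [Metric.ball_mem_nhds _ hr] with p hp
  have hp' : ‖p‖ < r := by simpa using hp
  have hn : ∀ q ∈ Metric.closedBall (0 : ℝ × ℝ) ‖p‖, ‖fderiv ℝ E q‖ ≤ c * ‖p‖ ^ k := by
    intro q hq
    have hq' : ‖q‖ ≤ ‖p‖ := by simpa using hq
    obtain ⟨e1, e2⟩ := hb (show q ∈ Metric.ball (0 : ℝ × ℝ) r by simpa using hq'.trans_lt hp')
    have e3 : ‖‖q‖ ^ k‖ ≤ ‖p‖ ^ k := by
      rw [Real.norm_of_nonneg (by positivity)]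
      exact pow_le_pow_left₀ (norm_nonneg _) hq' k
    refine ContinuousLinearMap.opNorm_le_bound _ (by positivity) fun v => ?_
    rw [fderiv_pd hE.diff]
    have v1 := norm_fst_le v
    have v2 := norm_snd_le v
    calc ‖pdx E q * v.1 + pdy E q * v.2‖ ≤ ‖pdx E q‖ * ‖v.1‖ + ‖pdy E q‖ * ‖v.2‖ := by
          refine (norm_add_le _ _).trans ?_
          rw [norm_mul, norm_mul]
      _ ≤ (c / 2 * ‖p‖ ^ k) * ‖v‖ + (c / 2 * ‖p‖ ^ k) * ‖v‖ := by
          have f1 : ‖pdx E q‖ ≤ c / 2 * ‖p‖ ^ k := e1.trans (mul_le_mul_of_nonneg_left e3 (by positivity))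
          have f2 : ‖pdy E q‖ ≤ c / 2 * ‖p‖ ^ k := e2.trans (mul_le_mul_of_nonneg_left e3 (by positivity))
          gcongr
      _ = c * ‖p‖ ^ k * ‖v‖ := by ring
  have := Convex.norm_image_sub_le_of_norm_fderiv_le (𝕜 := ℝ) (fun x _ => hE.diff x) hn (convex_closedBall _ _)
    (Metric.mem_closedBall_self (norm_nonneg _)) (show p ∈ Metric.closedBall (0 : ℝ × ℝ) ‖p‖ by simp)
  rw [h0, sub_zero, sub_zero] at this
  refine this.trans (le_of_eq ?_)
  rw [Real.norm_of_nonneg (by positivity)]; ring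

lemma pdx_of {F : ℝ × ℝ → ℝ} {p : ℝ × ℝ} {v : ℝ} (h : HasDerivAt (fun s => F (s, p.2)) v p.1) : pdx F p = v := h.deriv
lemma pdy_of {F : ℝ × ℝ → ℝ} {p : ℝ × ℝ} {v : ℝ} (h : HasDerivAt (fun s => F (p.1, s)) v p.2) : pdy F p = v := h.deriv

lemma has_x {F} (hF : Sm F) (p : ℝ × ℝ) : HasDerivAt (fun s => F (s, p.2)) (pdx F p) p.1 := by
  have h1 : HasDerivAt (fun s : ℝ => (s, p.2)) ((1 : ℝ), (0 : ℝ)) p.1 :=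
    (hasDerivAt_id _).prodMk (hasDerivAt_const _ _)
  simpa using hasDerivAt_pair (γ := fun s : ℝ => (s, p.2)) (hF.diff _) h1

lemma has_y {F} (hF : Sm F) (p : ℝ × ℝ) : HasDerivAt (fun s => F (p.1, s)) (pdy F p) p.2 := by
  have h1 : HasDerivAt (fun s : ℝ => (p.1, s)) ((0 : ℝ), (1 : ℝ)) p.2 :=
    (hasDerivAt_const _ _).prodMk (hasDerivAt_id _)
  simpa using hasDerivAt_pair (γ := fun s : ℝ => (p.1, s)) (hF.diff _) h1

lemma tay2 {G} (hG : Sm G) :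
    (fun p : ℝ × ℝ => G p - (G 0 + pdx G 0 * p.1 + pdy G 0 * p.2 + pdx (pdx G) 0 / 2 * p.1 ^ 2 +
      pdy (pdx G) 0 * p.1 * p.2 + pdy (pdy G) 0 / 2 * p.2 ^ 2)) =o[nhds 0] fun p => ‖p‖ ^ 2 := by
  set E : ℝ × ℝ → ℝ := fun p : ℝ × ℝ => G p - (G 0 + pdx G 0 * p.1 + pdy G 0 * p.2 + pdx (pdx G) 0 / 2 * p.1 ^ 2 +
      pdy (pdx G) 0 * p.1 * p.2 + pdy (pdy G) 0 / 2 * p.2 ^ 2) with hE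
  have hEs : Sm E := by
    have : Sm (fun p : ℝ × ℝ => G 0 + pdx G 0 * p.1 + pdy G 0 * p.2 + pdx (pdx G) 0 / 2 * p.1 ^ 2 +
      pdy (pdx G) 0 * p.1 * p.2 + pdy (pdy G) 0 / 2 * p.2 ^ 2) := by unfold Sm; fun_prop
    exact hG.sub this
  refine mv_o hEs (by simp [hE]) 1 ?_ ?_
  · refine (tay1 hG.pdx).congr (fun p => ?_) (fun p => by simp)
    symm
    apply pdx_of
    have hp : HasDerivAt (fun s => G 0 + pdx G 0 * s + pdy G 0 * p.2 + pdx (pdx G) 0 / 2 * s ^ 2 +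
      pdy (pdx G) 0 * s * p.2 + pdy (pdy G) 0 / 2 * p.2 ^ 2) (pdx G 0 * 1 + pdx (pdx G) 0 / 2 * (2 * p.1 ^ 1) +
      pdy (pdx G) 0 * 1 * p.2) p.1 :=
      (((((((hasDerivAt_id p.1).const_mul _).const_add _).add_const _).add
        ((hasDerivAt_pow 2 p.1).const_mul _)).add (((hasDerivAt_id p.1).const_mul _).mul_const _)).add_const _)
    have h3 := (has_x hG p).sub hp
    refine HasDerivAt.congr_deriv (f := fun s => E (s, p.2)) h3 ?_
    ring
  · refine (tay1 hG.pdy).congr (fun p => ?_) (fun p => by simp)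
    symm
    apply pdy_of
    have hp : HasDerivAt (fun s => G 0 + pdx G 0 * p.1 + pdy G 0 * s + pdx (pdx G) 0 / 2 * p.1 ^ 2 +
      pdy (pdx G) 0 * p.1 * s + pdy (pdy G) 0 / 2 * s ^ 2) (pdy G 0 * 1 + pdy (pdx G) 0 * p.1 * 1 +
        pdy (pdy G) 0 / 2 * (2 * p.2 ^ 1)) p.2 :=
      ((((((hasDerivAt_id p.2).const_mul _).const_add _).add_const _).add
        ((hasDerivAt_id p.2).const_mul _)).add ((hasDerivAt_pow 2 p.2).const_mul _))
    have h3 := (has_y hG p).sub hp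
    refine HasDerivAt.congr_deriv (f := fun s => E (p.1, s)) h3 ?_
    rw [pd_comm hG]
    ring

lemma asym_aux {a b c : ℝ × ℝ → ℝ} (ha : Sm a) (hb : Sm b) (hc : Sm c) {α : ℝ} (hα : α ≠ 0)
    (hbx : pdx b = pdy c) (hax : pdx a = pdy b) (ha0 : a 0 = 2) (hb0 : b 0 = 0) (hc0 : c 0 = 0)
    (hcy : pdy c 0 = 2) (hcx : pdx c 0 = 0) (hby : pdy b 0 = 0) (hcxy : pdy (pdx c) 0 = 0)
    (hcxx : pdx (pdx c) 0 = 6) (hcxxx : pdx (pdx (pdx c)) 0 = 120 * α) :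
    ∃ Y e Ω, Red (BDE a b c) Y e Ω := by
  obtain ⟨ε, hε, hεα⟩ : ∃ ε : ℝ, ε * ε = 1 ∧ 0 < ε * α := by
    rcases lt_or_gt_of_ne hα with h | h
    · exact ⟨-1, by norm_num, by linarith⟩
    · exact ⟨1, by norm_num, by linarith⟩
  set δ : ℝ × ℝ → ℝ := fun p => b p ^ 2 - a p * c p with hδ
  have hδs : Sm δ := (hb.pow 2).sub (ha.mul hc)
  have hδx : ∀ p, pdx δ p = 2 * b p * pdy c p - (pdy b p * c p + a p * pdx c p) := by
    intro p
    apply pdx_of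
    have := ((has_x hb p).pow 2).sub ((has_x ha p).mul (has_x hc p))
    refine HasDerivAt.congr_deriv (f := fun s => δ (s, p.2)) this ?_
    rw [hbx, hax]; simp
  have hδy : ∀ p, pdy δ p = 2 * b p * pdy b p - (pdy a p * c p + a p * pdy c p) := by
    intro p
    apply pdy_of
    have := ((has_y hb p).pow 2).sub ((has_y ha p).mul (has_y hc p))
    refine HasDerivAt.congr_deriv (f := fun s => δ (p.1, s)) this ?_
    simp
  have hδ0 : δ 0 = 0 := by simp [hδ, hb0, hc0]
  have hδx0 : pdx δ 0 = 0 := by rw [hδx, hb0, hc0, hcx]; ring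
  have hδy0 : pdy δ 0 = -4 := by rw [hδy, hb0, hc0, hcy, ha0]; ring
  set l : Filter (ℝ × ℝ) := nhds 0 ⊓ 𝓟 {p | δ p = 0} with hl
  have hle : l ≤ nhds 0 := inf_le_left
  have hlδ : ∀ᶠ p in l, δ p = 0 := mem_inf_of_right (mem_principal_self _)
  -- y = O(x²)
  have hy2 : (fun p : ℝ × ℝ => p.2) =O[l] fun p => p.1 ^ 2 := by
    have h1 := tay2 hδs
    rw [hδ0, hδx0, hδy0] at h1
    have h2 : (fun p : ℝ × ℝ => p.2) =O[l] fun p => ‖p‖ ^ 2 := by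
      have f1 : (fun p : ℝ × ℝ => p.1) =O[nhds 0] fun p => ‖p‖ := isBigO_fst_prod'.norm_right
      have f2 : (fun p : ℝ × ℝ => p.2) =O[nhds 0] fun p => ‖p‖ := isBigO_snd_prod'.norm_right
      have g1 : (fun p : ℝ × ℝ => pdx (pdx δ) 0 / 2 * p.1 ^ 2) =O[nhds 0] fun p => ‖p‖ ^ 2 := (f1.pow 2).const_mul_left _
      have g2 : (fun p : ℝ × ℝ => pdy (pdx δ) 0 * (p.1 * p.2)) =O[nhds 0] fun p => ‖p‖ * ‖p‖ := (f1.mul f2).const_mul_left _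
      have g3 : (fun p : ℝ × ℝ => pdy (pdy δ) 0 / 2 * p.2 ^ 2) =O[nhds 0] fun p => ‖p‖ ^ 2 := (f2.pow 2).const_mul_left _
      have g2 := g2.congr_right (g₂ := fun p => ‖p‖ ^ 2) fun p => (sq _).symm
      have g4 := (((h1.isBigO.add g1).add (g2.add g3)).mono hle).const_mul_left (1 / 4)
      refine g4.congr' ?_ EventuallyEq.rfl
      filter_upwards [hlδ] with p hp
      rw [hp]; ring
    obtain ⟨K, hK, hKb⟩ := h2.exists_pos
    rw [isBigOWith_iff] at hKb
    refine IsBigO.of_bound K ?_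
    have hsmall : ∀ᶠ p : ℝ × ℝ in l, ‖p.2‖ < 1 / K := by
      have : Continuous fun p : ℝ × ℝ => ‖p.2‖ := by fun_prop
      exact hle (this.continuousAt.eventually (gt_mem_nhds (by simpa using hK)))
    filter_upwards [hKb, hsmall] with p hp hs
    rw [Real.norm_of_nonneg (by positivity : (0 : ℝ) ≤ ‖p‖ ^ 2)] at hp
    rw [norm_pow]
    rcases le_total ‖p.2‖ ‖p.1‖ with h | h
    · have : ‖p‖ = ‖p.1‖ := by rw [Prod.norm_def, max_eq_left h]
      rwa [this] at hp
    · have : ‖p‖ = ‖p.2‖ := by rw [Prod.norm_def, max_eq_right h]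
      rw [this] at hp
      rw [lt_div_iff₀ hK] at hs
      have h0 : ‖p.2‖ = 0 := by
        by_contra hne
        have hpos : 0 < ‖p.2‖ := lt_of_le_of_ne (norm_nonneg _) (Ne.symm hne)
        nlinarith
      rw [h0]; positivity
  have hx0 : Tendsto (fun p : ℝ × ℝ => p.1) l (nhds 0) := by
    have := (continuous_fst (X := ℝ) (Y := ℝ)).tendsto 0
    exact this.mono_left hle
  have hxx : (fun p : ℝ × ℝ => p.1 ^ 2) =o[l] fun p => p.1 := by
    have h1 : (fun p : ℝ × ℝ => p.1) =o[l] fun _ => (1 : ℝ) := (isLittleO_one_iff ℝ).2 hx0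
    refine ((isBigO_refl (fun p : ℝ × ℝ => p.1) l).mul_isLittleO h1).congr (fun p => (sq _).symm) (fun p => mul_one _)
  have hyx : (fun p : ℝ × ℝ => p.2) =o[l] fun p => p.1 := hy2.trans_isLittleO hxx
  have hnx : (fun p : ℝ × ℝ => ‖p‖) =O[l] fun p => p.1 :=
    ((isBigO_refl (fun p : ℝ × ℝ => p.1) l).prod_left hyx.isBigO).norm_left
  have T1 : ∀ {G}, Sm G → (fun p : ℝ × ℝ => G p - (G 0 + pdx G 0 * p.1)) =o[l] fun p => p.1 := by
    intro G hG
    have h1 := ((tay1 hG).mono hle).trans_isBigO hnx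
    refine (h1.add (hyx.const_mul_left (pdy G 0))).congr_left fun p => ?_
    ring
  have hyy : (fun p : ℝ × ℝ => p.2 ^ 2) =o[l] fun p => p.1 ^ 2 := hyx.pow two_pos
  have hxy : (fun p : ℝ × ℝ => p.1 * p.2) =o[l] fun p => p.1 ^ 2 :=
    ((isBigO_refl (fun p : ℝ × ℝ => p.1) l).mul_isLittleO hyx).congr_right fun p => (sq _).symm
  have T2 : ∀ {G}, Sm G → pdy G 0 = 0 →
      (fun p : ℝ × ℝ => G p - (G 0 + pdx G 0 * p.1 + pdx (pdx G) 0 / 2 * p.1 ^ 2)) =o[l] fun p => p.1 ^ 2 := by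
    intro G hG hG0
    have h1 := ((tay2 hG).mono hle).trans_isBigO (hnx.pow 2)
    refine ((h1.add (hxy.const_mul_left (pdy (pdx G) 0))).add (hyy.const_mul_left (pdy (pdy G) 0 / 2))).congr_left fun p => ?_
    rw [hG0]; ring
  have u1 : (fun p : ℝ × ℝ => b p - 2 * p.1) =o[l] fun p => p.1 ^ 2 := by
    refine (T2 hb hby).congr_left fun p => ?_
    rw [hb0, hbx, pd_comm hc, hcxy, hcy]; ring
  have u2 : (fun p : ℝ × ℝ => pdy c p - 2) =o[l] fun p => p.1 := by
    refine (T1 hc.pdy).congr_left fun p => ?_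
    rw [hcy, pd_comm hc, hcxy]; ring
  have u3 : (fun p : ℝ × ℝ => a p - 2) =o[l] fun p => p.1 := by
    refine (T1 ha).congr_left fun p => ?_
    rw [ha0, hax, hby]; ring
  have u4 : (fun p : ℝ × ℝ => pdx c p - (6 * p.1 + 60 * α * p.1 ^ 2)) =o[l] fun p => p.1 ^ 2 := by
    refine (T2 hc.pdx hcxy).congr_left fun p => ?_
    rw [hcx, hcxx, hcxxx]; ring
  have oX : (fun p : ℝ × ℝ => p.1) =O[l] fun p => p.1 := isBigO_refl _ _
  have oXX : (fun p : ℝ × ℝ => p.1 ^ 2) =O[l] fun p => p.1 ^ 2 := isBigO_refl _ _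
  have bO : b =O[l] fun p => p.1 := by
    have := (u1.isBigO.trans hxx.isBigO).add (oX.const_mul_left 2)
    exact this.congr_left fun p => by ring
  have O1 : ∀ {G : ℝ × ℝ → ℝ}, ContinuousAt G 0 → G =O[l] fun _ => (1 : ℝ) := fun {G} hG =>
    (hG.tendsto.isBigO_one ℝ).mono hle
  have aiO : (fun p => (a p)⁻¹) =O[l] fun _ => (1 : ℝ) :=
    O1 (ha.continuous.continuousAt.inv₀ (by rw [ha0]; norm_num))
  have hane : ∀ᶠ p in l, a p ≠ 0 :=
    hle (ha.continuous.continuousAt.eventually (isOpen_ne.mem_nhds (by rw [ha0]; norm_num)))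
  have byo : pdy b =o[l] fun _ => (1 : ℝ) := by
    rw [isLittleO_one_iff]
    have := hb.pdy.continuous.tendsto 0
    rw [hby] at this
    exact this.mono_left hle
  have cO : c =O[l] fun p => p.1 ^ 2 := by
    refine ((bO.pow 2).mul aiO).congr' ?_ (by filter_upwards with p; ring)
    filter_upwards [hlδ, hane] with p hp hq
    have : b p ^ 2 = a p * c p := by
      have : b p ^ 2 - a p * c p = 0 := hp
      linarith
    rw [this]; field_simp
  -- main estimate
  have main : (fun p => pdx δ p - pdy δ p * b p / a p + 120 * α * p.1 ^ 2) =o[l] fun p => p.1 ^ 2 := by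
    have m1 : (fun p => (b p - 2 * p.1) * pdy c p) =o[l] fun p => p.1 ^ 2 :=
      (u1.mul_isBigO (O1 hc.pdy.continuous.continuousAt)).congr_right fun p => mul_one _
    have m2 : (fun p => p.1 * (pdy c p - 2)) =o[l] fun p => p.1 ^ 2 :=
      (oX.mul_isLittleO u2).congr_right fun p => (sq _).symm
    have m3 : (fun p => a p * (pdx c p - (6 * p.1 + 60 * α * p.1 ^ 2))) =o[l] fun p => p.1 ^ 2 :=
      ((O1 ha.continuous.continuousAt).mul_isLittleO u4).congr_right fun p => one_mul _
    have m4 : (fun p => p.1 * (a p - 2)) =o[l] fun p => p.1 ^ 2 :=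
      (oX.mul_isLittleO u3).congr_right fun p => (sq _).symm
    have m4' : (fun p => p.1 * (p.1 * (a p - 2))) =o[l] fun p => p.1 ^ 2 :=
      (((isLittleO_one_iff ℝ).2 hx0).isBigO.mul_isLittleO m4).congr_right fun p => one_mul _
    have m5 : (fun p => pdy b p * c p) =o[l] fun p => p.1 ^ 2 :=
      (byo.mul_isBigO cO).congr_right fun p => one_mul _
    have m6 : (fun p => pdy b p * (b p ^ 2 * (a p)⁻¹)) =o[l] fun p => p.1 ^ 2 :=
      (byo.mul_isBigO ((bO.pow 2).mul aiO)).congr_right fun p => by ring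
    have b1 : b =o[l] fun _ => (1 : ℝ) := bO.trans_isLittleO ((isLittleO_one_iff ℝ).2 hx0)
    have m7 : (fun p => b p * (pdy a p * c p * (a p)⁻¹)) =o[l] fun p => p.1 ^ 2 :=
      (b1.mul_isBigO (((O1 ha.pdy.continuous.continuousAt).mul cO).mul aiO)).congr_right fun p => by ring
    have tot := (((((m1.const_mul_left 3).add (m2.const_mul_left 6)).sub m3).sub (m4.const_mul_left 6)).sub
      (m4'.const_mul_left (60 * α))).sub m5
    have tot := (tot.sub (m6.const_mul_left 2)).add m7
    refine tot.congr' ?_ EventuallyEq.rfl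
    filter_upwards [hane] with p hp
    rw [hδx, hδy]
    field_simp
    ring
  refine reduce (δ := δ) (ε := ε) (k1 := 180 * (ε * α)) (A := fun p => ε * (pdx δ p - pdy δ p * b p / a p))
    ha hb hc (by rw [ha0]; norm_num) hδ hδ0 (by rw [hδy0]; norm_num) hε rfl ?_ ?_
  · simp [hδx0, hb0]
  · have h1 := isLittleO_iff.1 main (show (0 : ℝ) < 60 * (ε * α) by positivity)
    have h2 := mem_inf_principal.1 h1
    filter_upwards [h2] with p hp h0
    have h3 := hp h0
    set A1 := pdx δ p - pdy δ p * b p / a p with hA1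
    have hε1 : |ε| = 1 := by
      have : |ε| * |ε| = 1 := by rw [← abs_mul, hε, abs_one]
      nlinarith [abs_nonneg ε]
    rw [Real.norm_of_nonneg (sq_nonneg p.1), Real.norm_eq_abs, ← one_mul |_|, ← hε1, ← abs_mul, abs_le] at h3
    obtain ⟨h4, h5⟩ := h3
    constructor
    · intro hx
      have : 0 < ε * α * p.1 ^ 2 := by positivity
      nlinarith
    · nlinarith

theorem asym_red (α d0 d1 d2 d3 d4 : ℝ) (hα : α ≠ 0) (f : ℝ × ℝ → ℝ) (hf : Sm f)
    (hjet : HasJetAt0 f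
      (fun p => p.2 ^ 2 + p.1 ^ 2 * p.2 + (1 / 4) * p.1 ^ 4 + α * p.1 ^ 5 +
        p.2 * (d0 * p.1 ^ 4 + d1 * p.1 ^ 3 * p.2 + d2 * p.1 ^ 2 * p.2 ^ 2 +
          d3 * p.1 * p.2 ^ 3 + d4 * p.2 ^ 4)) 5) : ∃ Y e Ω, Red (asymBDE f) Y e Ω := by
  obtain ⟨h1, h2, h3, h4, h5, h6, h7, h8, h9⟩ := partials α d0 d1 d2 d3 d4 f hf hjet
  refine asym_aux hf.pdy.pdy hf.pdx.pdy hf.pdx.pdx hα ?_ ?_ h1 h2 h3 h4 h5 h6 h7 h8 h9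
  · exact pd_comm hf.pdx
  · rw [fyy, pd_comm hf.pdy, pd_comm hf]; rfl

/-- class `Π^p_{c,2}`: for smooth `f` with
`j⁵f(0) = y² + x²y + (1/4)x⁴ + αx⁵ + yφ₄(x,y)`, `α ≠ 0`, `φ₄` homogeneous of
degree 4, the asymptotic BDE of `f` is topologically equivalent at `0` to the
well-folded saddle-node BDE `dy² + (−y + x³)dx² = 0`. -/
theorem stmt6 (α d0 d1 d2 d3 d4 : ℝ) (hα : α ≠ 0) (f : ℝ × ℝ → ℝ)
    (hf : ContDiff ℝ (⊤ : ℕ∞) f)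
    (hjet : HasJetAt0 f
      (fun p => p.2 ^ 2 + p.1 ^ 2 * p.2 + (1 / 4) * p.1 ^ 4 + α * p.1 ^ 5 +
        p.2 * (d0 * p.1 ^ 4 + d1 * p.1 ^ 3 * p.2 + d2 * p.1 ^ 2 * p.2 ^ 2 +
          d3 * p.1 * p.2 ^ 3 + d4 * p.2 ^ 4)) 5) :
    TopEquivAt0 (asymBDE f)
      (BDE (fun _ => 1) (fun _ => 0) (fun p => -p.2 + p.1 ^ 3)) := by
  obtain ⟨Y, e1, Ω1, R1⟩ := asym_red α d0 d1 d2 d3 d4 hα f hf hjet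
  obtain ⟨Z, e2, Ω2, R2⟩ := model_red
  exact red_equiv R1 R2
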